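/- Let $C \subset \mathbb{P}^2$ be a smooth complex plane quartic, that is, a smooth non-hyperelliptic complex projective curve of genus $3$ in its canonical embedding, so that $\mathcal{O}_C(1) \cong \omega_C$. Let $T_{\mathbb{P}^2}|_C$ be the restriction to $C$ of the tangent bundle of $\mathbb{P}^2$ and let $T_{\mathbb{P}^2}|_C(-1) = T_{\mathbb{P}^2}|_C \otimes \mathcal{O}_C(1)^{-1}$, a vector bundle of rank two and degree $4$. Then the difference divisor $C - C = \{\mathcal{O}_C(x - y) : (x,y) \in C \times C\} \subset \mathrm{Pic}^0(C)$ coincides with the theta divisor of $T_{\mathbb{P}^2}|_C(-1)$, that is, $$C - C = \{N \in \mathrm{Pic}^0(C) : h^0(T_{\mathbb{P}^2}|_C(-1) \otimes N^{-1}) \geq 1\}.$$ -/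

import Mathlib

open scoped LinearAlgebra.Projectivization Pointwise

noncomputable section

/-- The homogeneous coordinate ring `ℂ[x₀, x₁, x₂]` of `ℙ²`. -/
abbrev CoordRing : Type := MvPolynomial (Fin 3) ℂ

/-- Its grading by degree. -/
abbrev coordGrading : ℕ → Submodule ℂ CoordRing := MvPolynomial.homogeneousSubmodule (Fin 3) ℂ

instance coordGradedAlgebra : GradedAlgebra coordGrading := MvPolynomial.gradedAlgebra

/-- A degree-zero homogeneous localization of `ℂ[x₀, x₁, x₂]` is a `ℂ`-algebra, with the scalar
multiplication that Mathlib already puts on it. -/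
instance homogeneousLocalizationComplexAlgebra (S : Submonoid CoordRing) :
    Algebra ℂ (HomogeneousLocalization coordGrading S) where
  toSMul := inferInstance
  algebraMap := (HomogeneousLocalization.fromZeroRingHom coordGrading S).comp
    (algebraMap ℂ (coordGrading 0))
  commutes' _ _ := mul_comm _ _
  smul_def' c x := by
    apply HomogeneousLocalization.val_injective
    rw [HomogeneousLocalization.val_smul, HomogeneousLocalization.val_mul, Algebra.smul_def,
      IsScalarTower.algebraMap_apply ℂ CoordRing (Localization S)]
    rfl

/-- A smooth (integral) plane quartic curve `C ⊂ ℙ²` over `ℂ`, given by its equation. -/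
structure SmoothPlaneQuartic where
  /-- the equation of the curve -/
  poly : CoordRing
  isHomogeneous : poly.IsHomogeneous 4
  irreducible : Irreducible poly
  /-- Jacobian criterion: `C` is nonsingular at each of its points -/
  smooth : ∀ v : Fin 3 → ℂ, v ≠ 0 → MvPolynomial.eval v poly = 0 →
    ∃ i, MvPolynomial.eval v (MvPolynomial.pderiv i poly) ≠ 0

namespace SmoothPlaneQuartic

variable (C : SmoothPlaneQuartic)

/-! ### Points, local rings and the function field -/

/-- The (closed) points of the curve `C`. -/
def Point : Type := {p : ℙ ℂ (Fin 3 → ℂ) // MvPolynomial.eval p.rep C.poly = 0}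

instance isPrime_span_poly : (Ideal.span {C.poly}).IsPrime :=
  (Ideal.span_singleton_prime C.irreducible.ne_zero).2 C.irreducible.prime

instance isPrime_ker_eval (v : Fin 3 → ℂ) :
    (RingHom.ker (MvPolynomial.eval v : CoordRing →+* ℂ)).IsPrime :=
  RingHom.ker_isPrime _

/-- The local ring `𝒪_{ℙ²,C}` of `ℙ²` at the generic point of `C`: fractions `a / b` of forms of
the same degree with `b` not divisible by the equation of `C`. -/
abbrev PlaneGenericRing : Type :=
  HomogeneousLocalization.AtPrime coordGrading (Ideal.span {C.poly})

/-- The local ring `𝒪_{ℙ²,p}` of `ℙ²` at a point `p` of `C`: fractions `a / b` of forms of the same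
degree with `b(p) ≠ 0`. -/
abbrev PlaneLocalRing (p : C.Point) : Type :=
  HomogeneousLocalization.AtPrime coordGrading
    (RingHom.ker (MvPolynomial.eval p.1.rep : CoordRing →+* ℂ))

/-- The localization map `𝒪_{ℙ²,p} → 𝒪_{ℙ²,C}`. -/
def planeGeneralize (p : C.Point) : C.PlaneLocalRing p →+* C.PlaneGenericRing :=
  HomogeneousLocalization.mapId coordGrading <| by
    intro b hb hbF
    exact hb ((Ideal.span_singleton_le_iff_mem _).2 (RingHom.mem_ker.2 p.2) hbF)

/-- The field `K = ℂ(C)` of rational functions of `C`, the residue field of `𝒪_{ℙ²,C}`. -/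
abbrev FunctionField : Type := IsLocalRing.ResidueField C.PlaneGenericRing

/-- The restriction to `C` of the germs of functions of `ℙ²` at `p`, with values in `K`. -/
def restrictGerm (p : C.Point) : C.PlaneLocalRing p →+* C.FunctionField :=
  (IsLocalRing.residue C.PlaneGenericRing).comp (C.planeGeneralize p)

/-- The local ring `𝒪_{C,p} ⊆ K` of `C` at `p`, the image of `𝒪_{ℙ²,p}`. -/
def localRing (p : C.Point) : Subalgebra ℂ C.FunctionField where
  toSubsemiring := (C.restrictGerm p).rangeS
  algebraMap_mem' c := ⟨algebraMap ℂ (C.PlaneLocalRing p) c, by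
    change IsLocalRing.residue _ (C.planeGeneralize p _) =
      IsLocalRing.residue _ (algebraMap ℂ C.PlaneGenericRing c)
    congr 1⟩

/-- The maximal ideal `𝔪_p ⊂ 𝒪_{C,p}`, as an `𝒪_{C,p}`-submodule of `K`. -/
def maxIdeal (p : C.Point) : Submodule (C.localRing p) C.FunctionField :=
  Submodule.span (C.localRing p)
    (C.restrictGerm p '' (IsLocalRing.maximalIdeal (C.PlaneLocalRing p) : Set _))

/-- The power `𝔪_pⁿ ⊂ K` for an integer `n`; for negative `n` it is `{f ∈ K | f 𝔪_p⁻ⁿ ⊆ 𝒪_{C,p}}`. -/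
def maxIdealPow (p : C.Point) : ℤ → Submodule (C.localRing p) C.FunctionField
  | Int.ofNat n => C.maxIdeal p ^ n
  | Int.negSucc n => 1 / C.maxIdeal p ^ (n + 1)

/-! ### Sheaves

A torsion-free sheaf `E` on the integral curve `C` with generic stalk `V` (a `K`-vector space) is
the subsheaf of the constant sheaf `V` with stalks `E_p ⊆ V`; it is described by these stalks. -/

section Sheaves

variable (V : Type) [AddCommGroup V] [Module C.FunctionField V]

/-- A subsheaf of the constant sheaf `V`, described by its stalks `E_p ⊆ V`. -/
abbrev SubSheaf : Type := ∀ p : C.Point, Submodule (C.localRing p) V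

variable {C V}

/-- The tensor product `E ⊗ L` of `E` by an invertible subsheaf `L` of the constant sheaf `K`:
its stalk at `p` is `L_p E_p`. -/
def SubSheaf.twist (E : C.SubSheaf V) (L : C.SubSheaf C.FunctionField) : C.SubSheaf V :=
  fun p => L p • E p

/-- The inverse `L⁻¹ = Hom(L, 𝒪_C)` of an invertible subsheaf of the constant sheaf `K`. -/
def SubSheaf.dual (L : C.SubSheaf C.FunctionField) : C.SubSheaf C.FunctionField :=
  fun p => 1 / L p

variable [Module ℂ V] [IsScalarTower ℂ C.FunctionField V]

/-- The space of global sections `H⁰(C, E) = ⋂ E_p`. -/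
def SubSheaf.globalSections (E : C.SubSheaf V) : Submodule ℂ V :=
  ⨅ p : C.Point, (E p).restrictScalars ℂ

/-- `h⁰(E) = dim H⁰(C, E)`. -/
def SubSheaf.h0 (E : C.SubSheaf V) : Cardinal := Module.rank ℂ E.globalSections

end Sheaves

/-! ### Line bundles -/

/-- Divisors on `C`. -/
abbrev Divisor : Type := C.Point →₀ ℤ

/-- The line bundle `𝒪_C(D)`, with stalk `𝔪_p ^ (-D(p))` at `p`. -/
def lineBundle (D : C.Divisor) : C.SubSheaf C.FunctionField :=
  fun p => C.maxIdealPow p (-D p)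

/-- `𝒪_C(D) ≅ 𝒪_C(D')`: the isomorphisms are the multiplications by those `f ∈ K^×` that map
`𝒪_C(D)` onto `𝒪_C(D')`. This is linear equivalence of `D` and `D'`. -/
def divisorSetoid : Setoid C.Divisor where
  r D D' := ∃ f : C.FunctionField, f ≠ 0 ∧ ∀ p, C.lineBundle D' p = f • C.lineBundle D p
  iseqv :=
    { refl := fun D => ⟨1, one_ne_zero, fun p => (one_smul _ _).symm⟩
      symm := by
        rintro D D' ⟨f, hf, h⟩
        exact ⟨f⁻¹, inv_ne_zero hf, fun p => by rw [h p, smul_smul, inv_mul_cancel₀ hf, one_smul]⟩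
      trans := by
        rintro D D' D'' ⟨f, hf, h⟩ ⟨g, hg, h'⟩
        exact ⟨g * f, mul_ne_zero hg hf, fun p => by rw [h' p, h p, smul_smul]⟩ }

/-- `Pic(C)`, the set of isomorphism classes of line bundles on `C`; each line bundle on the smooth
curve `C` is isomorphic to some `𝒪_C(D)`. -/
def Pic : Type := Quotient C.divisorSetoid

/-- The class of `𝒪_C(D)` in `Pic(C)`. -/
def picClass (D : C.Divisor) : C.Pic := Quotient.mk C.divisorSetoid D

/-- `Pic⁰(C)`, the classes of degree zero. -/
def picZero : Set C.Pic := {N | ∃ D : C.Divisor, (D.sum fun _ n => n) = 0 ∧ C.picClass D = N}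

theorem coord_notMem (i : Fin 3) : (MvPolynomial.X i : CoordRing) ∉ Ideal.span {C.poly} := by
  rw [Ideal.mem_span_singleton]
  intro h
  have h1 := MvPolynomial.totalDegree_le_of_dvd_of_isDomain h (MvPolynomial.X_ne_zero i)
  rw [C.isHomogeneous.totalDegree C.irreducible.ne_zero, MvPolynomial.totalDegree_X] at h1
  omega

/-- The rational function `x_j / x_0` on `C`. -/
def coordQuotient (j : Fin 3) : C.FunctionField :=
  IsLocalRing.residue C.PlaneGenericRing <| HomogeneousLocalization.mk
    { deg := 1
      num := ⟨MvPolynomial.X j, MvPolynomial.isHomogeneous_X ℂ j⟩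
      den := ⟨MvPolynomial.X 0, MvPolynomial.isHomogeneous_X ℂ 0⟩
      den_mem := C.coord_notMem 0 }

/-- The line bundle `𝒪_C(1)`, restriction of `𝒪_{ℙ²}(1)`: its stalks are generated by the linear
forms `x_0, x_1, x_2`, and it is embedded into the constant sheaf `K` by `s ↦ s / x_0`. -/
def hyperplaneBundle : C.SubSheaf C.FunctionField :=
  fun p => Submodule.span (C.localRing p) (Set.range C.coordQuotient)

/-! ### The restricted tangent bundle of the plane -/

/-- The generic stalk of `T_{ℙ²}|_C`: the `ℂ`-derivations `𝒪_{ℙ²,C} → K`. -/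
abbrev GenericTangent : Type := Derivation ℂ C.PlaneGenericRing C.FunctionField

/-- The vector bundle `T_{ℙ²}|_C = Hom(Ω_{ℙ²}, 𝒪_C)`. Its stalk at `p` is
`Der_ℂ(𝒪_{ℙ²,p}, 𝒪_{C,p})`, the derivations that map `𝒪_{ℙ²,p}` into `𝒪_{C,p}`. -/
def planeTangent : C.SubSheaf C.GenericTangent := fun p =>
  { carrier := {δ | ∀ g : C.PlaneLocalRing p, δ (C.planeGeneralize p g) ∈ C.localRing p}
    add_mem' := fun ha hb g => add_mem (ha g) (hb g)
    zero_mem' := fun _ => zero_mem _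
    smul_mem' := fun c _ hd g => mul_mem c.2 (hd g) }

/-- The bundle `T_{ℙ²}|_C(-1) = T_{ℙ²}|_C ⊗ 𝒪_C(1)⁻¹`. -/
def planeTangentTwist : C.SubSheaf C.GenericTangent :=
  C.planeTangent.twist C.hyperplaneBundle.dual

/-! ### The two divisors -/

/-- The difference divisor `C - C`, the set of the classes of the `𝒪_C(x - y)`. -/
def differenceDivisor : Set C.Pic :=
  {N | ∃ x y : C.Point, N = C.picClass (Finsupp.single x 1 - Finsupp.single y 1)}

section Theta

variable {C}
variable {V : Type} [AddCommGroup V] [Module C.FunctionField V]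

theorem mem_smul_submodule_iff {p : C.Point} (f : C.FunctionField) (hf : f ≠ 0)
    (S : Submodule (C.localRing p) V) (v : V) : v ∈ f • S ↔ f⁻¹ • v ∈ S := by
  rw [Submodule.mem_smul_pointwise_iff_exists]
  exact ⟨fun ⟨w, hw, h⟩ => by rwa [← h, inv_smul_smul₀ hf],
    fun h => ⟨_, h, smul_inv_smul₀ hf v⟩⟩

theorem smul_submodule_smul {p : C.Point} (f : C.FunctionField)
    (L : Submodule (C.localRing p) C.FunctionField) (S : Submodule (C.localRing p) V) :
    (f • L) • S = f • (L • S) := by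
  apply le_antisymm
  · refine Submodule.smul_le.2 fun r hr n hn => ?_
    obtain ⟨w, hw, rfl⟩ := (Submodule.mem_smul_pointwise_iff_exists _ _ _).1 hr
    rw [smul_eq_mul, mul_smul]
    exact Submodule.smul_mem_pointwise_smul _ _ _ (Submodule.smul_mem_smul hw hn)
  · intro v hv
    obtain ⟨w, hw, rfl⟩ := (Submodule.mem_smul_pointwise_iff_exists _ _ _).1 hv
    refine Submodule.smul_induction_on hw (fun r hr n hn => ?_) fun x y hx hy => ?_
    · rw [smul_smul]
      exact Submodule.smul_mem_smul (Submodule.smul_mem_pointwise_smul r f _ hr) hn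
    · rw [smul_add]
      exact add_mem hx hy

variable [Module ℂ V] [IsScalarTower ℂ C.FunctionField V]

theorem h0_smul (E E' : C.SubSheaf V) (f : C.FunctionField) (hf : f ≠ 0)
    (h : ∀ p, E' p = f • E p) : E'.h0 = E.h0 := by
  let e : V ≃ₗ[ℂ] V :=
    { toFun := fun v => f • v
      invFun := fun v => f⁻¹ • v
      map_add' := smul_add f
      map_smul' := fun c v => smul_comm f c v
      left_inv := fun v => inv_smul_smul₀ hf v
      right_inv := fun v => smul_inv_smul₀ hf v }
  have he : E'.globalSections = E.globalSections.map (e : V →ₗ[ℂ] V) := by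
    ext v
    rw [Submodule.mem_map_equiv]
    simp only [SubSheaf.globalSections, Submodule.mem_iInf, Submodule.restrictScalars_mem, h]
    exact forall_congr' fun p => mem_smul_submodule_iff f hf (E p) v
  unfold SubSheaf.h0
  rw [he]
  exact (e.submoduleMap _).rank_eq.symm

/-- `h⁰(E ⊗ N⁻¹)` for `N ∈ Pic(C)`. -/
def h0Twist (E : C.SubSheaf V) (N : C.Pic) : Cardinal :=
  Quotient.lift (fun D : C.Divisor => (E.twist (C.lineBundle D).dual).h0) (by
    rintro D D' ⟨f, hf, h⟩
    refine (h0_smul _ _ f⁻¹ (inv_ne_zero hf) fun p => ?_).symm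
    have h1 : (1 : Submodule (C.localRing p) C.FunctionField) / C.lineBundle D' p =
        f⁻¹ • (1 / C.lineBundle D p) := by
      ext x
      rw [mem_smul_submodule_iff _ (inv_ne_zero hf), inv_inv, h p,
        Submodule.mem_div_iff_forall_mul_mem, Submodule.mem_div_iff_forall_mul_mem]
      constructor
      · intro H y hy
        have := H _ (Submodule.smul_mem_pointwise_smul y f _ hy)
        rwa [smul_eq_mul, mul_left_comm, ← mul_assoc] at this
      · intro H y hy
        obtain ⟨w, hw, rfl⟩ := (Submodule.mem_smul_pointwise_iff_exists _ _ _).1 hy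
        have := H w hw
        rwa [smul_eq_mul, mul_assoc, mul_left_comm] at this
    change (1 / C.lineBundle D' p) • E p = f⁻¹ • ((1 / C.lineBundle D p) • E p)
    rw [h1]
    exact smul_submodule_smul _ _ _) N

/-- The theta divisor `{N ∈ Pic⁰(C) | h⁰(E ⊗ N⁻¹) ≥ 1}` of `E`. -/
def thetaDivisor (E : C.SubSheaf V) : Set C.Pic := {N | N ∈ C.picZero ∧ 1 ≤ h0Twist E N}

end Theta

end SmoothPlaneQuartic

end

/-!
By the Euler sequence, `T_{ℙ²}(-1)` embeds into `⋀² ℂ³ ⊗ 𝒪(1)`: a derivation `δ` goes to the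
coordinates of `y ∧ δ y`, where `y` is the generic point of `C`. A section of
`T_{ℙ²}|_C(-1) ⊗ 𝒪(-D)` therefore amounts to three functions `m_k ∈ L(H - D)` such that
`∑ y_k m_k = 0`. A constant vector `v` gives the functions `y ∧ v`, which vanish simultaneously
exactly at the point `v`, and there simply. For `v = x ∈ C` this is a section for `D = x - y`.

Conversely, let `deg D = 0`. The key point is that `m_1, m_2, m_3` are linearly dependent over `ℂ`.
Suppose not, and let `l = 0` be a transverse line, with points `p, q, p', q'`. Some nonzero
combination `f` of the `m_k` vanishes at `p` and `q`, so `H - D ∼ p + q + R` with `R` effective of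
degree two, and a line `l'` through `R` gives `H ∼ R + E` with `E` effective of degree two.
Multiplication by `l l' / f` sends the `m_k` to conics `a_k` through `p', q'` and `E`, with
`∑ x_k a_k = 0` on `C`, hence identically. If all `a_k` are divisible by `l`, then `a_k = l b_k`
with linear forms `b_k` such that `∑ x_k b_k = 0`; their matrix is skew-symmetric of odd size, hence
singular. Otherwise `E` is disjoint from `p + q`, two independent combinations of the `a_k` vanish
at `p`, hence on `l`, and so are products of `l` with linear forms vanishing on `E`, which are
proportional: a contradiction.

The relation `∑ v_k m_k = 0` says that `δ` is a multiple `f` of the derivation given by `v`, so that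
`D ≤ div f` outside `v` and `D ≤ div f + v`; comparing degrees, `D ∼ x - y`.
-/

open scoped LinearAlgebra.Projectivization Pointwise

noncomputable section

namespace SmoothPlaneQuartic

open MvPolynomial

/-! ### Homogeneous polynomials and linear forms -/

section Forms

variable {R A σ : Type*} [CommSemiring R] [CommSemiring A] [Algebra R A]

theorem aeval_mul_of_isHomogeneous {n : ℕ} {a : MvPolynomial σ R} (ha : a.IsHomogeneous n) (c : A)
    (z : σ → A) : aeval (fun j => c * z j) a = c ^ n * aeval z a := by
  rw [aeval_def, aeval_def, eval₂_eq, eval₂_eq, Finset.mul_sum]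
  refine Finset.sum_congr rfl fun d hd => ?_
  have hdeg : ∑ i ∈ d.support, d i = n := by
    simpa [Finsupp.weight_apply, Finsupp.sum] using ha (mem_support_iff.1 hd)
  rw [Finset.prod_congr rfl fun i _ => mul_pow c (z i) (d i), Finset.prod_mul_distrib,
    Finset.prod_pow_eq_pow_sum, hdeg, mul_left_comm]

theorem eval_smul_of_isHomogeneous {n : ℕ} {a : MvPolynomial σ R} (ha : a.IsHomogeneous n) (c : R)
    (v : σ → R) : eval (c • v) a = c ^ n * eval v a :=
  aeval_mul_of_isHomogeneous ha c v

variable [Fintype σ]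

/-- The linear form with given coefficients. -/
def linForm (u : σ → R) : MvPolynomial σ R := ∑ j, u j • X j

theorem isHomogeneous_linForm (u : σ → R) : (linForm u).IsHomogeneous 1 :=
  IsHomogeneous.sum _ _ _ fun j _ =>
    (homogeneousSubmodule σ R 1).smul_mem (u j) (isHomogeneous_X R j)

theorem eval_linForm (u v : σ → R) : eval v (linForm u) = u ⬝ᵥ v := by
  simp [linForm, dotProduct, smul_eval]

theorem linForm_add (u w : σ → R) : linForm (u + w) = linForm u + linForm w := by
  simp [linForm, add_smul, Finset.sum_add_distrib]

theorem linForm_smul (c : R) (u : σ → R) : linForm (c • u) = c • linForm u := by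
  simp [linForm, mul_smul, Finset.smul_sum]

theorem linForm_single [DecidableEq σ] (j : σ) : linForm (Pi.single j (1 : R)) = X j := by
  simp [linForm, Pi.single_apply, ite_smul]

theorem pderiv_linForm (u : σ → R) (j : σ) : pderiv j (linForm u) = MvPolynomial.C (u j) := by
  classical
  simp [linForm, pderiv_X, Pi.single_apply, smul_eq_C_mul]

theorem linForm_eq_zero_iff {u : σ → R} : linForm u = 0 ↔ u = 0 := by
  refine ⟨fun h => funext fun j => ?_, fun h => by simp [h, linForm]⟩
  simpa [h] using (pderiv_linForm u j).symm

end Forms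

section PlaneMinor

variable {R K σ : Type*} [CommRing R] [Field K] [DecidableEq σ]

/-- The covector of the linear form `v_j x_i - v_i x_j`, a `2 × 2` minor of `(v, x)`. -/
def planeMinor (v : σ → R) (i j : σ) : σ → R := v j • Pi.single i 1 - v i • Pi.single j 1

theorem planeMinor_smul (c : R) (v : σ → R) (i j : σ) :
    planeMinor (c • v) i j = c • planeMinor v i j := by
  simp only [planeMinor, Pi.smul_apply, smul_eq_mul, smul_sub, mul_smul]

variable [Fintype σ]

theorem planeMinor_dotProduct (v w : σ → R) (i j : σ) :
    planeMinor v i j ⬝ᵥ w = v j * w i - v i * w j := by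
  simp [planeMinor, sub_dotProduct]

theorem planeMinor_dotProduct_self (v : σ → R) (i j : σ) : planeMinor v i j ⬝ᵥ v = 0 := by
  rw [planeMinor_dotProduct, mul_comm, sub_self]

theorem eq_smul_of_forall_planeMinor_dotProduct {v w : σ → K} {i : σ} (hi : v i ≠ 0)
    (h : ∀ j, planeMinor v j i ⬝ᵥ w = 0) : w = (w i / v i) • v := by
  funext j
  have hj := h j
  rw [planeMinor_dotProduct, sub_eq_zero] at hj
  rw [Pi.smul_apply, smul_eq_mul, div_mul_eq_mul_div, eq_div_iff hi, mul_comm, hj, mul_comm]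

theorem linForm_planeMinor (v : σ → R) (i j : σ) :
    linForm (planeMinor v i j) = v j • X i - v i • X j := by
  rw [planeMinor, sub_eq_add_neg, ← neg_smul, linForm_add, linForm_smul, linForm_smul,
    linForm_single, linForm_single, neg_smul, ← sub_eq_add_neg]

/-- Modulo the forms `v_i x_j - v_j x_i`, the coordinates become proportional to `v`. -/
theorem mem_span_linForm_planeMinor {n : ℕ} {a : MvPolynomial σ K} (ha : a.IsHomogeneous n)
    {v : σ → K} {i : σ} (hi : v i ≠ 0) (h : eval v a = 0) :
    a ∈ Ideal.span (Set.range fun j => linForm (planeMinor v j i)) := by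
  set J := Ideal.span (Set.range fun j => linForm (planeMinor v j i))
  have hX : ∀ j, Ideal.Quotient.mkₐ K J (X j) =
      ((v i)⁻¹ • Ideal.Quotient.mkₐ K J (X i)) * algebraMap K _ (v j) := by
    intro j
    have hj : Ideal.Quotient.mkₐ K J (linForm (planeMinor v j i)) = 0 :=
      Ideal.Quotient.eq_zero_iff_mem.2 (Ideal.subset_span ⟨j, rfl⟩)
    rw [linForm_planeMinor, map_sub, map_smul, map_smul, sub_eq_zero] at hj
    rw [mul_comm, ← Algebra.smul_def, smul_comm, ← hj, inv_smul_smul₀ hi]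
  have ha' : Ideal.Quotient.mkₐ K J a = aeval (fun j => Ideal.Quotient.mkₐ K J (X j)) a := by
    rw [← comp_aeval_apply, aeval_X_left_apply]
  have hv : aeval (fun j => algebraMap K (MvPolynomial σ K ⧸ J) (v j)) a = 0 := by
    have hmap := aeval_algebraMap_apply (MvPolynomial σ K ⧸ J) v a
    rw [aeval_eq_eval, h, map_zero] at hmap
    exact hmap
  rw [← Ideal.Quotient.eq_zero_iff_mem, ← Ideal.Quotient.mkₐ_eq_mk K, ha', funext hX,
    aeval_mul_of_isHomogeneous ha, hv, mul_zero]

theorem exists_eq_add_of_dotProduct_eq_zero {u u' v w : Fin 3 → K} (hv : v ≠ 0)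
    (hli : LinearIndependent K ![u, u']) (h1 : u ⬝ᵥ v = 0) (h2 : u' ⬝ᵥ v = 0) (h3 : w ⬝ᵥ v = 0) :
    ∃ α β : K, w = α • u + β • u' := by
  let φ : Module.Dual K (Fin 3 → K) := dotProductEquiv K (Fin 3) v
  have hφ : φ ≠ 0 := by simpa [φ] using hv
  have hle : Submodule.span K (Set.range ![u, u']) ≤ LinearMap.ker φ := by
    rw [Submodule.span_le]
    rintro _ ⟨k, rfl⟩
    fin_cases k <;> simpa [φ, dotProduct_comm v]
  have heq := Submodule.eq_of_le_of_finrank_eq hle (by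
    have := Module.Dual.finrank_ker_add_one_of_ne_zero hφ
    rw [finrank_span_eq_card hli]
    simp only [Fintype.card_fin, Module.finrank_fin_fun] at this ⊢
    omega)
  have hw : w ∈ Submodule.span K (Set.range ![u, u']) := by
    rw [heq]
    simpa [φ, dotProduct_comm v] using h3
  obtain ⟨β, α, h⟩ := Submodule.mem_span_pair.1 (by simpa using hw)
  exact ⟨α, β, by rw [← h, add_comm]⟩

end PlaneMinor

/-! ### Fractions of forms -/

section Fractions

variable {M : Submonoid CoordRing}

instance isScalarTower_homogeneousLocalization :
    IsScalarTower ℂ (HomogeneousLocalization coordGrading M) (Localization M) :=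
  ⟨fun c x y => by
    rw [Algebra.smul_def, HomogeneousLocalization.algebraMap_apply,
      HomogeneousLocalization.val_smul, smul_mul_assoc, Algebra.smul_def x,
      HomogeneousLocalization.algebraMap_apply]⟩

/-- The fraction `a / b` of two forms of the same degree. -/
def formFrac {n : ℕ} {a b : CoordRing} (ha : a.IsHomogeneous n) (hb : b.IsHomogeneous n)
    (hM : b ∈ M) : HomogeneousLocalization coordGrading M :=
  HomogeneousLocalization.mk ⟨n, ⟨a, ha⟩, ⟨b, hb⟩, hM⟩

theorem exists_eq_formFrac (z : HomogeneousLocalization coordGrading M) :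
    ∃ (n : ℕ) (a b : CoordRing) (ha : a.IsHomogeneous n) (hb : b.IsHomogeneous n) (hM : b ∈ M),
      z = formFrac ha hb hM := by
  obtain ⟨⟨n, ⟨a, ha⟩, ⟨b, hb⟩, hM⟩, rfl⟩ := HomogeneousLocalization.mk_surjective z
  exact ⟨n, a, b, ha, hb, hM, rfl⟩

theorem val_formFrac {n : ℕ} {a b : CoordRing} (ha : a.IsHomogeneous n) (hb : b.IsHomogeneous n)
    (hM : b ∈ M) : (formFrac ha hb hM).val = Localization.mk a ⟨b, hM⟩ := rfl

theorem formFrac_mul {n m : ℕ} {a b a' b' : CoordRing} (ha : a.IsHomogeneous n)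
    (hb : b.IsHomogeneous n) (hM : b ∈ M) (ha' : a'.IsHomogeneous m) (hb' : b'.IsHomogeneous m)
    (hM' : b' ∈ M) : formFrac ha hb hM * formFrac ha' hb' hM' =
      formFrac (ha.mul ha') (hb.mul hb') (M.mul_mem hM hM') := rfl

theorem formFrac_add {n m : ℕ} {a b a' b' : CoordRing} (ha : a.IsHomogeneous n)
    (hb : b.IsHomogeneous n) (hM : b ∈ M) (ha' : a'.IsHomogeneous m) (hb' : b'.IsHomogeneous m)
    (hM' : b' ∈ M) : formFrac ha hb hM + formFrac ha' hb' hM' =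
      formFrac ((hb.mul ha').add (add_comm m n ▸ hb'.mul ha)) (hb.mul hb') (M.mul_mem hM hM') := rfl

theorem formFrac_smul (c : ℂ) {n : ℕ} {a b : CoordRing} (ha : a.IsHomogeneous n)
    (hb : b.IsHomogeneous n) (hM : b ∈ M) : c • formFrac ha hb hM =
      formFrac (smul_eq_C_mul a c ▸ ha.C_mul c) hb hM := rfl

theorem formFrac_mem_maximalIdeal {P : Ideal CoordRing} [P.IsPrime] {n : ℕ} {a b : CoordRing}
    (ha : a.IsHomogeneous n) (hb : b.IsHomogeneous n) (hM : b ∈ P.primeCompl) :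
    formFrac ha hb hM ∈ IsLocalRing.maximalIdeal
      (HomogeneousLocalization.AtPrime coordGrading P) ↔ a ∈ P := by
  rw [IsLocalRing.mem_maximalIdeal, mem_nonunits_iff,
    ← HomogeneousLocalization.isUnit_iff_isUnit_val, val_formFrac, ← mem_nonunits_iff,
    ← IsLocalRing.mem_maximalIdeal]
  change Localization.mk a ⟨b, hM⟩ ∈ IsLocalRing.maximalIdeal (Localization.AtPrime P) ↔ _
  rw [Localization.mk_eq_mk', IsLocalization.AtPrime.mk'_mem_maximal_iff (Localization.AtPrime P) P]

variable {i : Fin 3} (hi : (X i : CoordRing) ∈ M)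

/-- The ratio `x_j / x_i` in a homogeneous localization in which `x_i` is invertible. -/
def coordRatio (j : Fin 3) : HomogeneousLocalization coordGrading M :=
  formFrac (isHomogeneous_X ℂ j) (isHomogeneous_X ℂ i) hi

theorem aeval_coordRatio {n : ℕ} {a : CoordRing} (ha : a.IsHomogeneous n) :
    aeval (coordRatio hi) a = formFrac ha (isHomogeneous_X_pow i n) (M.pow_mem hi n) := by
  apply HomogeneousLocalization.val_injective
  have hval : (algebraMap _ (Localization M) ∘ coordRatio hi) = fun j =>
      Localization.mk 1 ⟨X i, hi⟩ * algebraMap CoordRing (Localization M) (X j) := by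
    funext j
    rw [← Localization.mk_one_eq_algebraMap, Localization.mk_mul, one_mul, mul_one]
    rfl
  have hX : aeval (fun j => algebraMap CoordRing (Localization M) (X j)) a =
      algebraMap CoordRing (Localization M) a := by
    have h := aeval_algebraMap_apply (R := ℂ) (Localization M) (X : Fin 3 → CoordRing) a
    rwa [aeval_X_left_apply] at h
  rw [← HomogeneousLocalization.algebraMap_apply, ← aeval_algebraMap_apply, hval,
    aeval_mul_of_isHomogeneous ha, hX, ← Localization.mk_one_eq_algebraMap, Localization.mk_pow,
    Localization.mk_mul, one_pow, one_mul, mul_one]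
  rfl

theorem formFrac_mul_aeval {n : ℕ} {a b : CoordRing} (ha : a.IsHomogeneous n)
    (hb : b.IsHomogeneous n) (hM : b ∈ M) :
    formFrac ha hb hM * aeval (coordRatio hi) b = aeval (coordRatio hi) a := by
  rw [aeval_coordRatio hi hb, aeval_coordRatio hi ha]
  apply HomogeneousLocalization.val_injective
  rw [HomogeneousLocalization.val_mul, val_formFrac, val_formFrac, val_formFrac,
    Localization.mk_mul, Localization.mk_eq_mk_iff, Localization.r_iff_exists]
  exact ⟨1, by simp only [Submonoid.coe_mul]; ring⟩

end Fractions

/-! ### Rational functions as quotients of forms -/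

section FunctionField

variable (C : SmoothPlaneQuartic)

/-- Evaluation of polynomials at the generic point `(1, x₁/x₀, x₂/x₀)` of `C`. -/
def ev : CoordRing →ₐ[ℂ] C.FunctionField := aeval C.coordQuotient

theorem ev_X (j : Fin 3) : C.ev (X j) = C.coordQuotient j := aeval_X _ _

theorem X_mem_generic (j : Fin 3) : (X j : CoordRing) ∈ (Ideal.span {C.poly}).primeCompl :=
  C.coord_notMem j

/-- The residue map `𝒪_{ℙ²,C} → K` as a map of `ℂ`-algebras. -/
def residueHom : C.PlaneGenericRing →ₐ[ℂ] C.FunctionField where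
  __ := IsLocalRing.residue C.PlaneGenericRing
  commutes' _ := rfl

theorem residueHom_surjective : Function.Surjective C.residueHom := IsLocalRing.residue_surjective

theorem residueHom_aeval (a : CoordRing) :
    C.residueHom (aeval (coordRatio (C.X_mem_generic 0)) a) = C.ev a := by
  rw [comp_aeval_apply]
  rfl

theorem ev_eq_zero_iff {n : ℕ} {a : CoordRing} (ha : a.IsHomogeneous n) :
    C.ev a = 0 ↔ C.poly ∣ a := by
  rw [← C.residueHom_aeval, aeval_coordRatio _ ha, ← Ideal.mem_span_singleton]
  change IsLocalRing.residue _ _ = 0 ↔ _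
  rw [IsLocalRing.residue_eq_zero_iff, formFrac_mem_maximalIdeal]

theorem ev_ne_zero_of_mem_primeCompl {n : ℕ} {b : CoordRing} (hb : b.IsHomogeneous n)
    (hM : b ∈ (Ideal.span {C.poly}).primeCompl) : C.ev b ≠ 0 :=
  fun h => hM (Ideal.mem_span_singleton.2 ((C.ev_eq_zero_iff hb).1 h))

theorem residueHom_formFrac {n : ℕ} {a b : CoordRing} (ha : a.IsHomogeneous n)
    (hb : b.IsHomogeneous n) (hM : b ∈ (Ideal.span {C.poly}).primeCompl) :
    C.residueHom (formFrac ha hb hM) = C.ev a / C.ev b := by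
  rw [eq_div_iff (C.ev_ne_zero_of_mem_primeCompl hb hM), ← C.residueHom_aeval,
    ← C.residueHom_aeval, ← map_mul, formFrac_mul_aeval]

theorem exists_eq_ev_div_ev (f : C.FunctionField) : ∃ (n : ℕ) (a b : CoordRing),
    a.IsHomogeneous n ∧ b.IsHomogeneous n ∧ C.ev b ≠ 0 ∧ f = C.ev a / C.ev b := by
  obtain ⟨z, rfl⟩ := C.residueHom_surjective f
  obtain ⟨n, a, b, ha, hb, hM, rfl⟩ := exists_eq_formFrac z
  exact ⟨n, a, b, ha, hb, C.ev_ne_zero_of_mem_primeCompl hb hM, C.residueHom_formFrac ha hb hM⟩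

variable {C}

theorem ev_ne_zero_of_lt {n : ℕ} {a : CoordRing} (ha : a.IsHomogeneous n) (h0 : a ≠ 0)
    (hn : n < 4) : C.ev a ≠ 0 := by
  intro h
  have hdeg := totalDegree_le_of_dvd_of_isDomain ((C.ev_eq_zero_iff ha).1 h) h0
  rw [C.isHomogeneous.totalDegree C.irreducible.ne_zero, ha.totalDegree h0] at hdeg
  omega

theorem ev_linForm_ne_zero {u : Fin 3 → ℂ} (hu : u ≠ 0) : C.ev (linForm u) ≠ 0 :=
  ev_ne_zero_of_lt (isHomogeneous_linForm u) (mt linForm_eq_zero_iff.1 hu) (by norm_num)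

theorem coordQuotient_ne_zero (j : Fin 3) : C.coordQuotient j ≠ 0 := by
  rw [← C.ev_X]
  exact ev_ne_zero_of_lt (isHomogeneous_X ℂ j) (X_ne_zero j) (by norm_num)

theorem coordQuotient_zero : C.coordQuotient 0 = 1 := by
  have h := C.residueHom_formFrac (isHomogeneous_X ℂ 0) (isHomogeneous_X ℂ 0) (C.X_mem_generic 0)
  rw [div_self (by rw [C.ev_X]; exact coordQuotient_ne_zero 0)] at h
  exact h

theorem ev_ne_zero_of_eval_ne_zero (p : C.Point) {n : ℕ} {b : CoordRing} (hb : b.IsHomogeneous n)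
    (h : eval p.1.rep b ≠ 0) : C.ev b ≠ 0 := by
  intro h0
  obtain ⟨c, rfl⟩ := (C.ev_eq_zero_iff hb).1 h0
  exact h (by rw [map_mul, p.2, zero_mul])

variable (C) in
/-- Evaluation of polynomials at the generic point of `C`, normalized so that `x_i = 1`. -/
def affineEval (i : Fin 3) : CoordRing →ₐ[ℂ] C.FunctionField :=
  aeval fun j => C.coordQuotient j / C.coordQuotient i

theorem affineEval_of_isHomogeneous (i : Fin 3) {n : ℕ} {a : CoordRing} (ha : a.IsHomogeneous n) :
    C.affineEval i a = C.ev a / C.coordQuotient i ^ n := by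
  simp only [affineEval, div_eq_inv_mul, aeval_mul_of_isHomogeneous ha, inv_pow]
  rfl

theorem affineEval_ne_zero (i : Fin 3) {n : ℕ} {a : CoordRing} (ha : a.IsHomogeneous n)
    (h : C.ev a ≠ 0) : C.affineEval i a ≠ 0 := by
  rw [affineEval_of_isHomogeneous i ha]
  exact div_ne_zero h (pow_ne_zero _ (coordQuotient_ne_zero i))

theorem ev_div_ev_eq_affineEval (i : Fin 3) {n : ℕ} {a b : CoordRing} (ha : a.IsHomogeneous n)
    (hb : b.IsHomogeneous n) : C.ev a / C.ev b = C.affineEval i a / C.affineEval i b := by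
  rw [affineEval_of_isHomogeneous i ha, affineEval_of_isHomogeneous i hb,
    div_div_div_cancel_right₀ (pow_ne_zero _ (coordQuotient_ne_zero i))]

theorem affineEval_poly (i : Fin 3) : C.affineEval i C.poly = 0 := by
  rw [affineEval_of_isHomogeneous i C.isHomogeneous, (C.ev_eq_zero_iff C.isHomogeneous).2 dvd_rfl,
    zero_div]

theorem exists_homogenization (i : Fin 3) {w : Fin 3 → ℂ} (hw : w i = 1) (a : CoordRing) :
    ∃ (n : ℕ) (b : CoordRing), b.IsHomogeneous n ∧ C.affineEval i a = C.ev b / C.ev (X i ^ n) ∧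
      eval w b = eval w a := by
  have hi : C.ev (X i) ≠ 0 := by rw [C.ev_X]; exact coordQuotient_ne_zero i
  induction a using MvPolynomial.induction_on with
  | C c =>
    exact ⟨0, MvPolynomial.C c, isHomogeneous_C _ _, by simp [affineEval, ev], rfl⟩
  | add a a' h h' =>
    obtain ⟨n, b, hb, he, hv⟩ := h
    obtain ⟨n', b', hb', he', hv'⟩ := h'
    refine ⟨n + n', b * X i ^ n' + X i ^ n * b', (hb.mul (isHomogeneous_X_pow i n')).add
      ((isHomogeneous_X_pow i n).mul hb'), ?_, by simp [hw, hv, hv']⟩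
    simp only [map_add, map_mul, map_pow, he, he', pow_add]
    rw [div_add_div _ _ (pow_ne_zero _ hi) (pow_ne_zero _ hi)]
  | mul_X a j h =>
    obtain ⟨n, b, hb, he, hv⟩ := h
    refine ⟨n + 1, b * X j, hb.mul (isHomogeneous_X ℂ j), ?_, by simp [hv]⟩
    have hX : C.affineEval i (X j) = C.ev (X j) / C.ev (X i) := by
      rw [C.ev_X, C.ev_X]
      exact aeval_X _ _
    rw [map_mul, he, hX, map_mul, map_pow, map_pow, pow_succ, div_mul_div_comm]

end FunctionField

/-! ### The local rings -/

section LocalRing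

variable {C : SmoothPlaneQuartic} (p : C.Point)

theorem restrictGerm_formFrac {n : ℕ} {a b : CoordRing} (ha : a.IsHomogeneous n)
    (hb : b.IsHomogeneous n) (hM : b ∈ (RingHom.ker (eval p.1.rep : CoordRing →+* ℂ)).primeCompl) :
    C.restrictGerm p (formFrac ha hb hM) = C.ev a / C.ev b :=
  C.residueHom_formFrac ha hb _

theorem mem_localRing_iff (f : C.FunctionField) : f ∈ C.localRing p ↔
    ∃ (n : ℕ) (a b : CoordRing), a.IsHomogeneous n ∧ b.IsHomogeneous n ∧ eval p.1.rep b ≠ 0 ∧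
      f = C.ev a / C.ev b := by
  constructor
  · rintro ⟨z, rfl⟩
    obtain ⟨n, a, b, ha, hb, hM, rfl⟩ := exists_eq_formFrac z
    exact ⟨n, a, b, ha, hb, hM, restrictGerm_formFrac p ha hb hM⟩
  · rintro ⟨n, a, b, ha, hb, hM, rfl⟩
    exact ⟨formFrac ha hb hM, restrictGerm_formFrac p ha hb hM⟩

/-- The surjection `𝒪_{ℙ²,p} → 𝒪_{C,p}`. -/
def restrictGermLocal : C.PlaneLocalRing p →+* C.localRing p :=
  (C.restrictGerm p).codRestrict (C.localRing p) fun z => ⟨z, rfl⟩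

theorem restrictGermLocal_surjective : Function.Surjective (restrictGermLocal p) := by
  rintro ⟨_, z, rfl⟩
  exact ⟨z, rfl⟩

instance isLocalRing_localRing : IsLocalRing (C.localRing p) :=
  IsLocalRing.of_surjective' (restrictGermLocal p) (restrictGermLocal_surjective p)

theorem maxIdeal_eq_coeSubmodule : C.maxIdeal p =
    IsLocalization.coeSubmodule C.FunctionField (IsLocalRing.maximalIdeal (C.localRing p)) := by
  rw [← IsLocalRing.map_maximalIdeal_of_surjective _ (restrictGermLocal_surjective p), Ideal.map,
    IsLocalization.coeSubmodule_span, ← Set.image_comp]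
  rfl

theorem coe_mem_maxIdeal_iff (f : C.localRing p) :
    (f : C.FunctionField) ∈ C.maxIdeal p ↔ f ∈ IsLocalRing.maximalIdeal (C.localRing p) := by
  rw [maxIdeal_eq_coeSubmodule, IsLocalization.mem_coeSubmodule]
  exact ⟨fun ⟨_, hg, h⟩ => Subtype.ext h ▸ hg, fun h => ⟨f, h, rfl⟩⟩

theorem ev_div_mem_maxIdeal_iff {n : ℕ} {a b : CoordRing} (ha : a.IsHomogeneous n)
    (hb : b.IsHomogeneous n) (h : eval p.1.rep b ≠ 0) :
    C.ev a / C.ev b ∈ C.maxIdeal p ↔ eval p.1.rep a = 0 := by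
  have hmem : C.ev a / C.ev b ∈ C.localRing p :=
    (mem_localRing_iff p _).2 ⟨n, a, b, ha, hb, h, rfl⟩
  constructor
  · refine fun hf => of_not_not fun h0 => ?_
    rw [coe_mem_maxIdeal_iff p ⟨_, hmem⟩, IsLocalRing.mem_maximalIdeal, mem_nonunits_iff] at hf
    refine hf (IsUnit.of_mul_eq_one
      ⟨C.ev b / C.ev a, (mem_localRing_iff p _).2 ⟨n, b, a, hb, ha, h0, rfl⟩⟩ (Subtype.ext ?_))
    change C.ev a / C.ev b * (C.ev b / C.ev a) = 1
    rw [div_mul_div_cancel₀ (ev_ne_zero_of_eval_ne_zero p hb h),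
      div_self (ev_ne_zero_of_eval_ne_zero p ha h0)]
  · intro h0
    exact Submodule.subset_span ⟨formFrac ha hb h,
      (formFrac_mem_maximalIdeal (P := RingHom.ker (eval p.1.rep)) ha hb h).2 h0,
      restrictGerm_formFrac p ha hb h⟩

theorem exists_sub_mem_maxIdeal {f : C.FunctionField} (hf : f ∈ C.localRing p) :
    ∃ c : ℂ, f - algebraMap ℂ _ c ∈ C.maxIdeal p := by
  obtain ⟨n, a, b, ha, hb, h, rfl⟩ := (mem_localRing_iff p f).1 hf
  set c := eval p.1.rep a / eval p.1.rep b with hc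
  have hcb : (c • b).IsHomogeneous n := (homogeneousSubmodule (Fin 3) ℂ n).smul_mem c hb
  have hsub : C.ev a / C.ev b - algebraMap ℂ _ c = C.ev (a - c • b) / C.ev b := by
    rw [map_sub, map_smul, Algebra.smul_def, sub_div,
      mul_div_cancel_right₀ _ (ev_ne_zero_of_eval_ne_zero p hb h)]
  refine ⟨c, ?_⟩
  rw [hsub, ev_div_mem_maxIdeal_iff p (ha.sub hcb) hb h, map_sub, smul_eval, hc,
    div_mul_cancel₀ _ h, sub_self]

/-- An index of a coordinate that does not vanish at `p`. -/
def chart : Fin 3 := (Function.ne_iff.1 p.1.rep_nonzero).choose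

theorem rep_chart_ne_zero : p.1.rep (chart p) ≠ 0 :=
  (Function.ne_iff.1 p.1.rep_nonzero).choose_spec

theorem eval_X_pow_chart_ne_zero (n : ℕ) : eval p.1.rep (X (chart p) ^ n : CoordRing) ≠ 0 := by
  simp [rep_chart_ne_zero p]

/-- The coordinate vector of `p` normalized in its chart. -/
def normRep : Fin 3 → ℂ := (p.1.rep (chart p))⁻¹ • p.1.rep

theorem normRep_chart : normRep p (chart p) = 1 := by
  simp [normRep, rep_chart_ne_zero p]

theorem eval_normRep {n : ℕ} {a : CoordRing} (ha : a.IsHomogeneous n) :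
    eval (normRep p) a = ((p.1.rep (chart p))⁻¹) ^ n * eval p.1.rep a :=
  eval_smul_of_isHomogeneous ha _ _

theorem eval_normRep_eq_zero_iff {n : ℕ} {a : CoordRing} (ha : a.IsHomogeneous n) :
    eval (normRep p) a = 0 ↔ eval p.1.rep a = 0 := by
  simp [eval_normRep p ha, rep_chart_ne_zero p]

theorem affineEval_mem_localRing (a : CoordRing) : C.affineEval (chart p) a ∈ C.localRing p := by
  obtain ⟨n, b, hb, he, -⟩ := exists_homogenization (C := C) (chart p) (normRep_chart p) a
  exact (mem_localRing_iff p _).2 ⟨n, b, _, hb, isHomogeneous_X_pow _ n,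
    eval_X_pow_chart_ne_zero p n, he⟩

theorem affineEval_mem_maxIdeal_iff (a : CoordRing) :
    C.affineEval (chart p) a ∈ C.maxIdeal p ↔ eval (normRep p) a = 0 := by
  obtain ⟨n, b, hb, he, hv⟩ := exists_homogenization (C := C) (chart p) (normRep_chart p) a
  rw [he, ev_div_mem_maxIdeal_iff p hb (isHomogeneous_X_pow _ n) (eval_X_pow_chart_ne_zero p n),
    ← hv, eval_normRep_eq_zero_iff p hb]

/-- The map `ℂ[x₀, x₁, x₂] → 𝒪_{C,p}` normalized in the chart of `p`. -/
def affineEvalLocal : CoordRing →ₐ[ℂ] C.localRing p :=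
  (C.affineEval (chart p)).codRestrict (C.localRing p) (affineEval_mem_localRing p)

theorem coe_affineEvalLocal (a : CoordRing) :
    (affineEvalLocal p a : C.FunctionField) = C.affineEval (chart p) a := rfl

theorem isUnit_affineEvalLocal_iff (a : CoordRing) :
    IsUnit (affineEvalLocal p a) ↔ eval (normRep p) a ≠ 0 := by
  rw [← not_iff_not, not_not, ← affineEval_mem_maxIdeal_iff]
  exact (coe_mem_maxIdeal_iff p (affineEvalLocal p a)).symm

theorem exists_mul_affineEvalLocal_eq (f : C.localRing p) : ∃ (n : ℕ) (a b : CoordRing),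
    a.IsHomogeneous n ∧ IsUnit (affineEvalLocal p b) ∧
      f * affineEvalLocal p b = affineEvalLocal p a := by
  obtain ⟨n, a, b, ha, hb, h, hf⟩ := (mem_localRing_iff p f).1 f.2
  refine ⟨n, a, b, ha, (isUnit_affineEvalLocal_iff p b).2
    (mt (eval_normRep_eq_zero_iff p hb).1 h), Subtype.ext ?_⟩
  change f.1 * C.affineEval (chart p) b = C.affineEval (chart p) a
  rw [hf, ev_div_ev_eq_affineEval (chart p) ha hb,
    div_mul_cancel₀ _ (affineEval_ne_zero _ hb (ev_ne_zero_of_eval_ne_zero p hb h))]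

instance isNoetherianRing_localRing : IsNoetherianRing (C.localRing p) := by
  rw [isNoetherianRing_iff_ideal_fg]
  intro J
  have hJ : J = (J.comap (affineEvalLocal p)).map (affineEvalLocal p) := by
    refine le_antisymm (fun f hf => ?_) Ideal.map_comap_le
    obtain ⟨n, a, b, -, hb, h⟩ := exists_mul_affineEvalLocal_eq p f
    rw [← Ideal.mul_unit_mem_iff_mem _ hb, h]
    exact Ideal.mem_map_of_mem _ (Ideal.mem_comap.2 (h ▸ J.mul_mem_right _ hf))
  rw [hJ]
  exact Ideal.FG.map (IsNoetherian.noetherian _) _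

instance isFractionRing_localRing : IsFractionRing (C.localRing p) C.FunctionField := by
  refine IsFractionRing.of_field _ _ fun f => ?_
  obtain ⟨n, a, b, ha, hb, -, rfl⟩ := C.exists_eq_ev_div_ev f
  exact ⟨affineEvalLocal p a, affineEvalLocal p b, ev_div_ev_eq_affineEval (chart p) ha hb⟩

end LocalRing

/-! ### Transverse lines and the order of vanishing -/

section Transverse

variable {C : SmoothPlaneQuartic}

/-- The gradient of the equation of `C` at `p`: the coefficients of the tangent line. -/
def grad (p : C.Point) : Fin 3 → ℂ := fun j => eval p.1.rep (pderiv j C.poly)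

theorem grad_ne_zero (p : C.Point) : grad p ≠ 0 := by
  obtain ⟨i, hi⟩ := C.smooth p.1.rep p.1.rep_nonzero p.2
  exact fun h => hi (congrFun h i)

theorem grad_dotProduct_rep (p : C.Point) : grad p ⬝ᵥ p.1.rep = 0 := by
  have h := congrArg (eval p.1.rep) C.isHomogeneous.sum_X_mul_pderiv
  rw [map_nsmul, p.2, nsmul_zero, map_sum] at h
  simpa [dotProduct, grad, mul_comm] using h

/-- The linear form `u` vanishes at `p` and is not tangent to `C` there. -/
def IsTransverse (p : C.Point) (u : Fin 3 → ℂ) : Prop :=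
  u ⬝ᵥ p.1.rep = 0 ∧ ∀ c : ℂ, u ≠ c • grad p

variable {p : C.Point} {u : Fin 3 → ℂ}

theorem IsTransverse.ne_zero (hu : IsTransverse p u) : u ≠ 0 := by
  simpa using hu.2 0

theorem IsTransverse.of_smul {c : ℂ} (hu : IsTransverse p (c • u)) : IsTransverse p u := by
  refine ⟨?_, fun d hd => hu.2 (c * d) (by rw [hd, mul_smul])⟩
  have hc : c ≠ 0 := fun hc => hu.ne_zero (by rw [hc, zero_smul])
  have h := hu.1
  rw [smul_dotProduct, smul_eq_mul] at h
  exact (mul_eq_zero.1 h).resolve_left hc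

theorem IsTransverse.linearIndependent (hu : IsTransverse p u) :
    LinearIndependent ℂ ![u, grad p] :=
  LinearIndependent.pair_symm_iff.1
    ((LinearIndependent.pair_iff' (grad_ne_zero p)).2 fun c h => hu.2 c h.symm)

theorem IsTransverse.exists_eq_add (hu : IsTransverse p u) {w : Fin 3 → ℂ}
    (hw : w ⬝ᵥ p.1.rep = 0) : ∃ α β : ℂ, w = α • u + β • grad p :=
  exists_eq_add_of_dotProduct_eq_zero p.1.rep_nonzero hu.linearIndependent hu.1
    (grad_dotProduct_rep p) hw

theorem IsTransverse.mem_span_pair (hu : IsTransverse p u) {n : ℕ} {a : CoordRing}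
    (ha : a.IsHomogeneous n) (h : eval p.1.rep a = 0) :
    a ∈ Ideal.span {linForm u, linForm (grad p)} := by
  refine Ideal.span_le.2 ?_ (mem_span_linForm_planeMinor ha (rep_chart_ne_zero p) h)
  rintro _ ⟨j, rfl⟩
  obtain ⟨α, β, h⟩ := hu.exists_eq_add (planeMinor_dotProduct_self p.1.rep j (chart p))
  simp only [h, linForm_add, linForm_smul, smul_eq_C_mul]
  exact Ideal.mem_span_pair.2 ⟨_, _, rfl⟩

/-- Compare the gradients at `p` of both sides: that of `P L_u + Q L_g` is `P(p) u + Q(p) g`. -/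
theorem IsTransverse.exists_poly_eq (hu : IsTransverse p u) : ∃ P Q : CoordRing,
    P * linForm u + Q * linForm (grad p) = C.poly ∧ eval (normRep p) Q ≠ 0 := by
  obtain ⟨P, Q, hPQ⟩ := Ideal.mem_span_pair.1 (hu.mem_span_pair C.isHomogeneous p.2)
  refine ⟨P, Q, hPQ, fun hQ => ?_⟩
  have hlin : ∀ w : Fin 3 → ℂ, w ⬝ᵥ p.1.rep = 0 → eval (normRep p) (linForm w) = 0 := fun w hw =>
    (eval_normRep_eq_zero_iff p (isHomogeneous_linForm w)).2 (by rw [eval_linForm, hw])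
  have hgrad : eval (normRep p) P • u = (p.1.rep (chart p))⁻¹ ^ 3 • grad p := by
    funext j
    have h := congrArg (fun q => eval (normRep p) (pderiv j q)) hPQ
    simp only [map_add, pderiv_mul, map_mul, pderiv_linForm, eval_C, hlin u hu.1,
      hlin _ (grad_dotProduct_rep p), hQ, eval_normRep p C.isHomogeneous.pderiv] at h
    simpa [grad] using h
  have hzero := LinearIndependent.pair_iff.1 hu.linearIndependent (eval (normRep p) P)
    (-(p.1.rep (chart p))⁻¹ ^ 3) (by rw [hgrad, neg_smul, add_neg_cancel])
  exact neg_ne_zero.2 (pow_ne_zero 3 (inv_ne_zero (rep_chart_ne_zero p))) hzero.2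

theorem IsTransverse.maximalIdeal_eq_span (hu : IsTransverse p u) :
    IsLocalRing.maximalIdeal (C.localRing p) = Ideal.span {affineEvalLocal p (linForm u)} := by
  have hgrad : affineEvalLocal p (linForm (grad p)) ∈
      Ideal.span {affineEvalLocal p (linForm u)} := by
    obtain ⟨P, Q, hPQ, hQ⟩ := hu.exists_poly_eq
    have hpoly : affineEvalLocal p C.poly = 0 := Subtype.ext (affineEval_poly (chart p))
    have hmul := congrArg (affineEvalLocal p) hPQ
    rw [map_add, map_mul, map_mul, hpoly, add_comm, add_eq_zero_iff_eq_neg] at hmul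
    rw [← Ideal.unit_mul_mem_iff_mem _ ((isUnit_affineEvalLocal_iff p Q).2 hQ), hmul]
    exact neg_mem (Ideal.mul_mem_left _ _ (Ideal.mem_span_singleton_self _))
  refine le_antisymm (fun f hf => ?_) ?_
  · obtain ⟨n, a, b, ha, hb, h⟩ := exists_mul_affineEvalLocal_eq p f
    have ha0 : eval p.1.rep a = 0 := by
      rw [← eval_normRep_eq_zero_iff p ha, ← affineEval_mem_maxIdeal_iff]
      exact (coe_mem_maxIdeal_iff p (affineEvalLocal p a)).2 (h ▸ Ideal.mul_mem_right _ _ hf)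
    obtain ⟨A, B, rfl⟩ := Ideal.mem_span_pair.1 (hu.mem_span_pair ha ha0)
    rw [← Ideal.mul_unit_mem_iff_mem _ hb, h, map_add, map_mul, map_mul]
    exact add_mem (Ideal.mul_mem_left _ _ (Ideal.mem_span_singleton_self _))
      (Ideal.mul_mem_left _ _ hgrad)
  · rw [Ideal.span_singleton_le_iff_mem, ← coe_mem_maxIdeal_iff]
    refine (affineEval_mem_maxIdeal_iff p _).2
      ((eval_normRep_eq_zero_iff p (isHomogeneous_linForm u)).2 ?_)
    rw [eval_linForm, hu.1]

variable (p) in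
theorem exists_isTransverse : ∃ j, IsTransverse p (planeMinor p.1.rep j (chart p)) := by
  obtain ⟨j, k, hj, hk, hne⟩ : ∃ j k : Fin 3, j ≠ chart p ∧ k ≠ chart p ∧ j ≠ k := by
    generalize chart p = i
    revert i
    decide
  by_contra! h
  have hsmul : ∀ j, ∃ c : ℂ, planeMinor p.1.rep j (chart p) = c • grad p := by
    intro j
    by_contra! hc
    exact h j ⟨planeMinor_dotProduct_self _ _ _, hc⟩
  obtain ⟨c, hc⟩ := hsmul j
  obtain ⟨d, hd⟩ := hsmul k
  have hjj : p.1.rep (chart p) = c * grad p j := by simpa [planeMinor, hj] using congrFun hc j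
  have hkk : p.1.rep (chart p) = d * grad p k := by simpa [planeMinor, hk] using congrFun hd k
  have hjk : c = 0 ∨ grad p k = 0 := by simpa [planeMinor, hk, hne.symm] using congrFun hc k
  rcases hjk with h0 | h0
  · rw [h0, zero_mul] at hjj
    exact rep_chart_ne_zero p hjj
  · rw [h0, mul_zero] at hkk
    exact rep_chart_ne_zero p hkk

end Transverse

theorem mem_range_algebraMap_iff_one_le_ordFrac {R K : Type*} [CommRing R] [IsDomain R]
    [IsDiscreteValuationRing R] [Field K] [Algebra R K] [IsFractionRing R K] {x : K}
    (hx : x ≠ 0) : x ∈ (algebraMap R K).range ↔ 1 ≤ Ring.ordFrac R x := by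
  constructor
  · rintro ⟨r, rfl⟩
    exact Ring.ordFrac_ge_one_of_ne_zero (by rintro rfl; exact hx (map_zero _))
  · intro h
    rw [Ring.ordFrac_eq_valuation_inv, one_le_inv₀ (by simpa [pos_iff_ne_zero] using hx)] at h
    exact IsDiscreteValuationRing.exists_lift_of_le_one h

section Order

variable {C : SmoothPlaneQuartic} (p : C.Point)

instance isDiscreteValuationRing_localRing : IsDiscreteValuationRing (C.localRing p) := by
  obtain ⟨j, hu⟩ := exists_isTransverse p
  have hspan := hu.maximalIdeal_eq_span
  have hfield : ¬IsField (C.localRing p) := by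
    rw [IsLocalRing.isField_iff_maximalIdeal_eq, hspan, Ideal.span_singleton_eq_bot]
    exact fun h => affineEval_ne_zero _ (isHomogeneous_linForm _)
      (ev_linForm_ne_zero hu.ne_zero) (congrArg Subtype.val h)
  have htfae := (IsDiscreteValuationRing.TFAE (C.localRing p) hfield).out 4 0
  exact htfae.1 ⟨⟨_, hspan⟩⟩

/-- The order of vanishing of a rational function at a point (`0` for the zero function). -/
def ord (f : C.FunctionField) : ℤ := WithZero.log (Ring.ordFrac (C.localRing p) f)

theorem ord_mul {f g : C.FunctionField} (hf : f ≠ 0) (hg : g ≠ 0) :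
    ord p (f * g) = ord p f + ord p g := by
  rw [ord, map_mul, WithZero.log_mul (by simpa) (by simpa), ord, ord]

theorem ord_inv (f : C.FunctionField) : ord p f⁻¹ = -ord p f := by
  rw [ord, map_inv₀, WithZero.log_inv, ord]

theorem ord_one : ord p (1 : C.FunctionField) = 0 := by
  rw [ord, map_one, WithZero.log_one]

theorem ord_div {f g : C.FunctionField} (hf : f ≠ 0) (hg : g ≠ 0) :
    ord p (f / g) = ord p f - ord p g := by
  rw [div_eq_mul_inv, ord_mul p hf (inv_ne_zero hg), ord_inv, sub_eq_add_neg]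

theorem ord_zpow (f : C.FunctionField) (n : ℤ) : ord p (f ^ n) = n * ord p f := by
  rw [ord, map_zpow₀, WithZero.log_zpow, ord, smul_eq_mul]

theorem ord_pow (f : C.FunctionField) (n : ℕ) : ord p (f ^ n) = n * ord p f := by
  exact_mod_cast ord_zpow p f n

theorem mem_localRing_iff_ord {f : C.FunctionField} (hf : f ≠ 0) :
    f ∈ C.localRing p ↔ 0 ≤ ord p f := by
  have h : f ∈ C.localRing p ↔ f ∈ (algebraMap (C.localRing p) C.FunctionField).range :=
    ⟨fun h => ⟨⟨f, h⟩, rfl⟩, fun ⟨g, hg⟩ => hg ▸ g.2⟩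
  rw [h, mem_range_algebraMap_iff_one_le_ordFrac hf, ord, ← WithZero.log_one (M := ℤ),
    WithZero.log_le_log one_ne_zero (by simpa)]

theorem ord_eq_one_of_maximalIdeal_eq_span {t : C.localRing p}
    (ht : IsLocalRing.maximalIdeal (C.localRing p) = Ideal.span {t}) :
    ord p (t : C.FunctionField) = 1 := by
  have hirr := (IsDiscreteValuationRing.irreducible_iff_uniformizer t).2 ht
  exact (congrArg WithZero.log (Ring.ordFrac_irreducible hirr)).trans (WithZero.log_exp 1)

/-- A uniformizer of `𝒪_{C,p}`. -/
def unif : C.FunctionField :=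
  ((IsDiscreteValuationRing.exists_irreducible (C.localRing p)).choose : C.localRing p)

theorem maximalIdeal_eq_span_unif : ∃ t : C.localRing p, (t : C.FunctionField) = unif p ∧
    IsLocalRing.maximalIdeal (C.localRing p) = Ideal.span {t} :=
  ⟨_, rfl, (IsDiscreteValuationRing.exists_irreducible (C.localRing p)).choose_spec.maximalIdeal_eq⟩

theorem ord_unif_zpow (n : ℤ) : ord p (unif p ^ n) = n := by
  obtain ⟨t, ht, hspan⟩ := maximalIdeal_eq_span_unif p
  rw [ord_zpow, ← ht, ord_eq_one_of_maximalIdeal_eq_span p hspan, mul_one]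

theorem unif_ne_zero : unif p ≠ 0 := by
  intro h
  have := ord_unif_zpow p 1
  rw [zpow_one, h, ord, map_zero, WithZero.log_zero] at this
  exact zero_ne_one this

theorem mul_zpow_mem_localRing_iff {f : C.FunctionField} (h : f ≠ 0) (n : ℤ) :
    f * unif p ^ n ∈ C.localRing p ↔ 0 ≤ ord p f + n := by
  have ht := zpow_ne_zero n (unif_ne_zero p)
  rw [mem_localRing_iff_ord p (mul_ne_zero h ht), ord_mul p h ht, ord_unif_zpow]

theorem mem_one_iff (f : C.FunctionField) :
    f ∈ (1 : Submodule (C.localRing p) C.FunctionField) ↔ f ∈ C.localRing p := by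
  rw [Submodule.mem_one]
  exact ⟨fun ⟨g, hg⟩ => hg ▸ g.2, fun h => ⟨⟨f, h⟩, rfl⟩⟩

theorem mem_smul_one_iff {s : C.FunctionField} (hs : s ≠ 0) (f : C.FunctionField) :
    f ∈ s • (1 : Submodule (C.localRing p) C.FunctionField) ↔ s⁻¹ * f ∈ C.localRing p := by
  rw [mem_smul_submodule_iff s hs, smul_eq_mul, mem_one_iff]

theorem span_singleton_eq_smul_one (s : C.FunctionField) :
    Submodule.span (C.localRing p) {s} = s • (1 : Submodule (C.localRing p) C.FunctionField) := by
  rw [Submodule.one_eq_span, Submodule.smul_span, Set.smul_set_singleton, smul_eq_mul, mul_one]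

theorem one_div_smul_one {s : C.FunctionField} (hs : s ≠ 0) :
    (1 : Submodule (C.localRing p) C.FunctionField) / (s • 1) = s⁻¹ • 1 := by
  ext f
  rw [Submodule.mem_div_iff_forall_mul_mem, mem_smul_one_iff p (inv_ne_zero hs), inv_inv]
  simp only [mem_smul_one_iff p hs, mem_one_iff]
  constructor
  · intro h
    rw [mul_comm]
    exact h s (by rw [inv_mul_cancel₀ hs]; exact one_mem _)
  · intro h y hy
    have hfy : f * y = s * f * (s⁻¹ * y) := by field_simp
    exact hfy ▸ mul_mem h hy

theorem maxIdealPow_eq_smul_one (n : ℤ) : C.maxIdealPow p n = unif p ^ n • 1 := by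
  have hmax : C.maxIdeal p = unif p • 1 := by
    obtain ⟨t, ht, hspan⟩ := maximalIdeal_eq_span_unif p
    rw [maxIdeal_eq_coeSubmodule, hspan, IsLocalization.coeSubmodule_span_singleton,
      span_singleton_eq_smul_one, ← ht]
    rfl
  have hpow : ∀ k : ℕ, C.maxIdeal p ^ k = unif p ^ k • 1 := fun k => by
    rw [hmax, ← span_singleton_eq_smul_one, Submodule.span_pow, Set.singleton_pow,
      span_singleton_eq_smul_one]
  cases n with
  | ofNat k => exact (hpow k).trans (by rw [Int.ofNat_eq_natCast, zpow_natCast])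
  | negSucc k =>
    rw [zpow_negSucc, ← one_div_smul_one p (pow_ne_zero _ (unif_ne_zero p)), ← hpow]
    rfl

theorem mem_maxIdealPow_iff (n : ℤ) (f : C.FunctionField) :
    f ∈ C.maxIdealPow p n ↔ f = 0 ∨ n ≤ ord p f := by
  rw [maxIdealPow_eq_smul_one, mem_smul_one_iff p (zpow_ne_zero n (unif_ne_zero p)), mul_comm,
    ← zpow_neg]
  by_cases h : f = 0
  · simp [h]
  · rw [mul_zpow_mem_localRing_iff p h, or_iff_right h]
    omega

theorem mem_maxIdeal_iff_ord (f : C.FunctionField) :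
    f ∈ C.maxIdeal p ↔ f = 0 ∨ 1 ≤ ord p f := by
  rw [← mem_maxIdealPow_iff, ← pow_one (C.maxIdeal p)]
  rfl

/-- The order of vanishing at `p` of a form of degree `n`, given through its value in `K`. -/
def formOrd (n : ℕ) (f : C.FunctionField) : ℤ := ord p f - n * ord p (C.coordQuotient (chart p))

theorem ord_affineEval {n : ℕ} {a : CoordRing} (ha : a.IsHomogeneous n) (h : C.ev a ≠ 0) :
    ord p (C.affineEval (chart p) a) = formOrd p n (C.ev a) := by
  rw [affineEval_of_isHomogeneous _ ha, ord_div p h (pow_ne_zero _ (coordQuotient_ne_zero _)),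
    ord_pow, formOrd]

theorem formOrd_mul {m n : ℕ} {f g : C.FunctionField} (hf : f ≠ 0) (hg : g ≠ 0) :
    formOrd p (m + n) (f * g) = formOrd p m f + formOrd p n g := by
  rw [formOrd, formOrd, formOrd, ord_mul p hf hg]
  push_cast
  ring

theorem formOrd_nonneg {n : ℕ} {a : CoordRing} (ha : a.IsHomogeneous n) (h : C.ev a ≠ 0) :
    0 ≤ formOrd p n (C.ev a) := by
  rw [← ord_affineEval p ha h, ← mem_localRing_iff_ord p (affineEval_ne_zero _ ha h)]
  exact affineEval_mem_localRing p a

theorem formOrd_pos_iff {n : ℕ} {a : CoordRing} (ha : a.IsHomogeneous n) (h : C.ev a ≠ 0) :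
    1 ≤ formOrd p n (C.ev a) ↔ eval p.1.rep a = 0 := by
  rw [← ord_affineEval p ha h, ← eval_normRep_eq_zero_iff p ha, ← affineEval_mem_maxIdeal_iff,
    mem_maxIdeal_iff_ord, or_iff_right (affineEval_ne_zero (chart p) ha h)]

theorem formOrd_eq_zero_iff {n : ℕ} {a : CoordRing} (ha : a.IsHomogeneous n) (h : C.ev a ≠ 0) :
    formOrd p n (C.ev a) = 0 ↔ eval p.1.rep a ≠ 0 := by
  have h1 := formOrd_nonneg p ha h
  rw [ne_eq, ← formOrd_pos_iff p ha h]
  omega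

variable {p} in
theorem formOrd_linForm_eq_one {u : Fin 3 → ℂ} (hu : IsTransverse p u) :
    formOrd p 1 (C.ev (linForm u)) = 1 := by
  rw [← ord_affineEval p (isHomogeneous_linForm u) (ev_linForm_ne_zero hu.ne_zero)]
  rw [← coe_affineEvalLocal, ord_eq_one_of_maximalIdeal_eq_span p hu.maximalIdeal_eq_span]

end Order

/-! ### Points and zeros of forms -/

section Points

variable {C : SmoothPlaneQuartic}

variable (C) in
/-- The point of `C` with given homogeneous coordinates. -/
def pointOfVec (v : Fin 3 → ℂ) (hv : v ≠ 0) (h : eval v C.poly = 0) : C.Point :=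
  ⟨Projectivization.mk ℂ v hv, by
    obtain ⟨c, hc⟩ := Projectivization.exists_smul_eq_mk_rep ℂ v hv
    rw [← hc, Units.smul_def, eval_smul_of_isHomogeneous C.isHomogeneous, h, mul_zero]⟩

theorem exists_rep_pointOfVec (v : Fin 3 → ℂ) (hv : v ≠ 0) (h : eval v C.poly = 0) :
    ∃ c : ℂ, c ≠ 0 ∧ (C.pointOfVec v hv h).1.rep = c • v := by
  obtain ⟨c, hc⟩ := Projectivization.exists_smul_eq_mk_rep ℂ v hv
  exact ⟨c, c.ne_zero, hc.symm⟩

theorem point_eq_of_smul {p q : C.Point} {c : ℂ} (h : q.1.rep = c • p.1.rep) : p = q := by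
  apply Subtype.ext
  rw [← p.1.mk_rep, ← q.1.mk_rep, eq_comm, Projectivization.mk_eq_mk_iff']
  exact ⟨c, h.symm⟩

theorem point_eq_of_forall_dotProduct {p q : C.Point}
    (h : ∀ u : Fin 3 → ℂ, u ⬝ᵥ p.1.rep = 0 → u ⬝ᵥ q.1.rep = 0) : p = q :=
  point_eq_of_smul <| eq_smul_of_forall_planeMinor_dotProduct (rep_chart_ne_zero p) fun j =>
    h _ (planeMinor_dotProduct_self p.1.rep j (chart p))

theorem point_eq_of_forall_isTransverse {p q : C.Point}
    (h : ∀ u : Fin 3 → ℂ, IsTransverse p u → u ⬝ᵥ q.1.rep = 0) : p = q := by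
  refine point_eq_of_forall_dotProduct fun w hw => ?_
  obtain ⟨j, hu⟩ := exists_isTransverse p
  obtain ⟨α, β, rfl⟩ := hu.exists_eq_add hw
  have hug : IsTransverse p (planeMinor p.1.rep j (chart p) + grad p) := by
    refine ⟨by rw [add_dotProduct, hu.1, grad_dotProduct_rep, add_zero], fun c hc => ?_⟩
    exact hu.2 (c - 1) (by rw [sub_smul, ← hc, one_smul, add_sub_cancel_right])
  have hgrad := h _ hug
  rw [add_dotProduct, h _ hu, zero_add] at hgrad
  rw [add_dotProduct, smul_dotProduct, smul_dotProduct, h _ hu, hgrad, smul_zero, smul_zero,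
    add_zero]

theorem ev_X_zero : C.ev (X 0) = 1 := by rw [C.ev_X, coordQuotient_zero]

/-- A form is locally at `p` a unit times a power of a transverse linear form. -/
theorem IsTransverse.exists_poly_dvd_sub {p : C.Point} {u : Fin 3 → ℂ} (hu : IsTransverse p u)
    {n : ℕ} {a : CoordRing} (ha : a.IsHomogeneous n) (h : C.ev a ≠ 0) :
    ∃ (e : ℕ) (c d : CoordRing), eval p.1.rep c ≠ 0 ∧
      C.poly ∣ a * d * X (chart p) ^ e - c * linForm u ^ e * X (chart p) ^ n := by
  have hlin := isHomogeneous_linForm u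
  have hev := ev_linForm_ne_zero (C := C) hu.ne_zero
  have hlin0 := affineEval_ne_zero (chart p) hlin hev
  have ha0 := affineEval_ne_zero (chart p) ha h
  obtain ⟨e, he⟩ := Int.eq_ofNat_of_zero_le (formOrd_nonneg p ha h)
  set f := C.affineEval (chart p) a / C.affineEval (chart p) (linForm u) ^ e with hf
  have hf0 : f ≠ 0 := div_ne_zero ha0 (pow_ne_zero e hlin0)
  have hord : ord p f = 0 := by
    rw [ord_div p ha0 (pow_ne_zero _ hlin0), ord_pow, ord_affineEval p ha h,
      ord_affineEval p hlin hev, formOrd_linForm_eq_one hu, he, mul_one,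
      sub_self]
  obtain ⟨m, c, d, hc, hd, hd0, hcd⟩ :=
    (mem_localRing_iff p f).1 ((mem_localRing_iff_ord p hf0).2 hord.ge)
  have hunit : f ∉ C.maxIdeal p := by
    rw [mem_maxIdeal_iff_ord, hord]
    simp [hf0]
  rw [hcd, ev_div_mem_maxIdeal_iff p hc hd hd0] at hunit
  have hX0 := coordQuotient_ne_zero (C := C) (chart p)
  have hd1 := ev_ne_zero_of_eval_ne_zero p hd hd0
  have hrhs := (hc.mul (hlin.pow e)).mul (isHomogeneous_X_pow (R := ℂ) (chart p) n)
  rw [show m + 1 * e + n = n + m + e by ring] at hrhs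
  refine ⟨e, c, d, hunit, (C.ev_eq_zero_iff
    (((ha.mul hd).mul (isHomogeneous_X_pow _ e)).sub hrhs)).1 ?_⟩
  rw [hf, affineEval_of_isHomogeneous _ ha, affineEval_of_isHomogeneous _ hlin, pow_one,
    div_pow] at hcd
  field_simp at hcd
  simp only [map_sub, map_mul, map_pow, C.ev_X]
  linear_combination hcd

theorem linForm_mem_of_isPrime {p : C.Point} {u : Fin 3 → ℂ} (hu : IsTransverse p u) {n : ℕ}
    {a : CoordRing} (ha : a.IsHomogeneous n) (h : C.ev a ≠ 0) {q : Ideal CoordRing}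
    [hprime : q.IsPrime] (haq : a ∈ q) (hFq : C.poly ∈ q)
    (hq : q ≤ RingHom.ker (eval p.1.rep)) : linForm u ∈ q := by
  obtain ⟨e, c, d, hc, r, hr⟩ := hu.exists_poly_dvd_sub ha h
  have hmem : c * linForm u ^ e * X (chart p) ^ n ∈ q := by
    rw [← sub_sub_self (a * d * X (chart p) ^ e) (c * linForm u ^ e * X (chart p) ^ n), hr]
    exact q.sub_mem (q.mul_mem_right _ (q.mul_mem_right _ haq)) (q.mul_mem_right _ hFq)
  have hXq : X (chart p) ^ n ∉ q := fun hX => eval_X_pow_chart_ne_zero p n (hq hX)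
  have hcq : c ∉ q := fun hX => hc (hq hX)
  exact hprime.mem_of_pow_mem e
    ((hprime.mem_or_mem ((hprime.mem_or_mem hmem).resolve_right hXq)).resolve_left hcq)

/-- Distinct zeros of `a` lie on distinct minimal primes over `(a, C.poly)`. -/
theorem finite_zeros {n : ℕ} {a : CoordRing} (ha : a.IsHomogeneous n) (h : C.ev a ≠ 0) :
    {p : C.Point | eval p.1.rep a = 0}.Finite := by
  have hle : ∀ p : {p : C.Point | eval p.1.rep a = 0},
      Ideal.span {a, C.poly} ≤ RingHom.ker (eval p.1.1.rep : CoordRing →+* ℂ) := by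
    intro p
    rw [Ideal.span_le]
    rintro x (rfl | rfl)
    · exact p.2
    · exact p.1.2
  choose q hq hqle using fun p => Ideal.exists_minimalPrimes_le (hle p)
  have hfin := (Ideal.finite_minimalPrimes_of_isNoetherianRing CoordRing
    (Ideal.span {a, C.poly})).to_subtype
  refine Set.finite_coe_iff.1 (Finite.of_injective
    (fun p => (⟨q p, hq p⟩ : (Ideal.span {a, C.poly}).minimalPrimes)) fun p p' hpp => ?_)
  refine Subtype.ext (point_eq_of_forall_isTransverse fun u hu => ?_)
  have hprime : (q p).IsPrime := (hq p).1.1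
  have hmem := linForm_mem_of_isPrime hu ha h (q := q p)
    ((hq p).1.2 (Ideal.subset_span (by simp))) ((hq p).1.2 (Ideal.subset_span (by simp))) (hqle p)
  rw [show q p = q p' from congrArg Subtype.val hpp] at hmem
  rw [← eval_linForm]
  exact hqle p' hmem

end Points

/-! ### Linear systems of plane curves are complete -/

theorem mem_radical_of_zeroLocus_subset {K σ : Type*} [Field K] [IsAlgClosed K] [Finite σ]
    {I : Ideal (MvPolynomial σ K)} (hI : zeroLocus K I ⊆ {0}) {a : MvPolynomial σ K}
    (ha : eval 0 a = 0) : a ∈ I.radical := by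
  rw [← vanishingIdeal_zeroLocus_eq_radical (K := K) I, mem_vanishingIdeal_iff]
  intro v hv
  rw [hI hv, aeval_eq_eval]
  exact ha

theorem mem_span_pow_pair_of_mul_mem {R : Type*} [CommRing R] [IsDomain R] {x y l : R}
    (hx : Prime x) (hxy : ¬x ∣ y)
    (hl : ∀ a, l * a ∈ Ideal.span {x, y} → a ∈ Ideal.span {x, y}) (N : ℕ) {a : R}
    (h : l * a ∈ Ideal.span {x ^ N, y}) : a ∈ Ideal.span {x ^ N, y} := by
  induction N generalizing a with
  | zero => simp [Ideal.span_insert]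
  | succ N ih =>
    simp only [Ideal.mem_span_pair] at *
    obtain ⟨b, c, hbc⟩ := h
    obtain ⟨a₁, c₁, h₁⟩ := hl a ⟨b * x ^ N, c, by rw [← hbc]; ring⟩
    have hdvd : y * (c - l * c₁) = x * (l * a₁ - b * x ^ N) := by
      rw [← h₁] at hbc
      linear_combination hbc
    obtain ⟨c₂, hc₂⟩ := (hx.dvd_or_dvd (Dvd.intro _ hdvd.symm)).resolve_left hxy
    obtain ⟨b', c', h'⟩ := ih (a := a₁) ⟨b, c₂, by
      apply mul_left_cancel₀ hx.ne_zero
      rw [hc₂] at hdvd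
      linear_combination hdvd⟩
    exact ⟨b', x * c' + c₁, by rw [← h₁, ← h']; ring⟩

theorem mem_span_pow_pair_of_pow_mul_mem {R : Type*} [CommRing R] [IsDomain R] {x y l : R}
    (hx : Prime x) (hxy : ¬x ∣ y)
    (hl : ∀ a, l * a ∈ Ideal.span {x, y} → a ∈ Ideal.span {x, y}) (N M : ℕ) {a : R}
    (h : l ^ M * a ∈ Ideal.span {x ^ N, y}) : a ∈ Ideal.span {x ^ N, y} := by
  induction M with
  | zero => rwa [pow_zero, one_mul] at h
  | succ M ih =>
    rw [pow_succ', mul_assoc] at h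
    exact ih (mem_span_pow_pair_of_mul_mem hx hxy hl N h)

/-- Setting `x₀ = 0`. -/
def killX0 : CoordRing →ₐ[ℂ] CoordRing := aeval (Function.update X 0 0)

theorem killX0_X_zero : killX0 (X 0) = 0 := by simp [killX0]

theorem X_zero_dvd_sub_killX0 (a : CoordRing) : X 0 ∣ a - killX0 a := by
  have h : (Ideal.Quotient.mkₐ ℂ (Ideal.span {X 0})).comp killX0 =
      Ideal.Quotient.mkₐ ℂ (Ideal.span {(X 0 : CoordRing)}) := by
    ext j
    rcases eq_or_ne j 0 with rfl | hj
    · simp [killX0]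
    · simp [killX0, hj]
  rw [← Ideal.mem_span_singleton, ← Ideal.Quotient.eq]
  exact (DFunLike.congr_fun h a).symm

theorem eval_killX0 (v : Fin 3 → ℂ) (a : CoordRing) :
    eval v (killX0 a) = eval (Function.update v 0 0) a := by
  have h : (aeval v : CoordRing →ₐ[ℂ] ℂ).comp killX0 = aeval (Function.update v 0 0) := by
    ext j
    rcases eq_or_ne j 0 with rfl | hj
    · simp [killX0]
    · simp [killX0, hj]
  exact DFunLike.congr_fun h a

theorem mem_span_X_zero_pair_of_mul_mem {l y : CoordRing} (hl : Prime l) (hl0 : killX0 l = l)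
    (hly : ¬l ∣ killX0 y) (a : CoordRing) (h : l * a ∈ Ideal.span {X 0, y}) :
    a ∈ Ideal.span {X 0, y} := by
  rw [Ideal.mem_span_pair] at h ⊢
  obtain ⟨b, c, h⟩ := h
  replace h := congrArg killX0 h
  simp only [map_add, map_mul, killX0_X_zero, hl0, mul_zero, zero_add] at h
  obtain ⟨d, hd⟩ := (hl.dvd_or_dvd (Dvd.intro _ h.symm)).resolve_right hly
  have hkill : killX0 a = d * killX0 y := by
    apply mul_left_cancel₀ hl.ne_zero
    rw [← h, hd, mul_assoc]
  obtain ⟨r, hr⟩ := X_zero_dvd_sub_killX0 a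
  obtain ⟨s, hs⟩ := X_zero_dvd_sub_killX0 y
  exact ⟨r - s * d, d, by linear_combination d * hs - hr - hkill⟩

theorem prime_linForm {K σ : Type*} [Field K] [Fintype σ] {u : σ → K} (hu : u ≠ 0) :
    Prime (linForm u) := by
  have h0 : linForm u ≠ 0 := mt linForm_eq_zero_iff.1 hu
  refine (irreducible_of_totalDegree_eq_one
    ((isHomogeneous_linForm u).totalDegree h0) fun x hx => ?_).prime
  obtain ⟨d, hd⟩ := MvPolynomial.ne_zero_iff.1 h0
  exact isUnit_iff_ne_zero.2 fun hx0 => hd (zero_dvd_iff.1 (hx0 ▸ hx d))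

section Completeness

variable {C : SmoothPlaneQuartic}

theorem not_X_dvd_poly (j : Fin 3) : ¬X j ∣ C.poly := fun h =>
  C.coord_notMem j (Ideal.mem_span_singleton.2
    ((X_prime.irreducible.associated_of_dvd C.irreducible h).symm.dvd))

theorem exists_isHomogeneous_of_mem_span {n m : ℕ} {g b : CoordRing}
    (hg : g.IsHomogeneous (n + m)) (hb : b.IsHomogeneous n) (h : g ∈ Ideal.span {b, C.poly}) :
    ∃ s : CoordRing, s.IsHomogeneous m ∧ C.ev g = C.ev b * C.ev s := by
  obtain ⟨s, r, hsr⟩ := Ideal.mem_span_pair.1 h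
  have hdeg := congrArg (fun x => (DirectSum.decompose coordGrading x (n + m) : CoordRing)) hsr
  simp only [DirectSum.decompose_add, DirectSum.add_apply, Submodule.coe_add, mul_comm s,
    mul_comm r] at hdeg
  rw [DirectSum.decompose_of_mem_same coordGrading hg,
    DirectSum.coe_decompose_mul_add_of_left_mem coordGrading hb,
    DirectSum.coe_decompose_mul_of_left_mem coordGrading (n + m) C.isHomogeneous] at hdeg
  set s' := DirectSum.decompose coordGrading s m
  refine ⟨s', s'.2, ?_⟩
  rw [← map_mul, ← sub_eq_zero, ← map_sub, C.ev_eq_zero_iff (hg.sub (hb.mul s'.2)), ← hdeg,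
    add_sub_cancel_left]
  split_ifs
  · exact dvd_mul_right _ _
  · exact dvd_zero _

theorem exists_mul_mem_span {k n : ℕ} {a b : CoordRing} (ha : a.IsHomogeneous n)
    (hb : b.IsHomogeneous n) (ha0 : C.ev a ≠ 0) (hb0 : C.ev b ≠ 0) (p : C.Point)
    (hf : 0 ≤ formOrd p k (C.ev a / C.ev b)) : ∃ (m : ℕ) (d : CoordRing), d.IsHomogeneous m ∧
      eval p.1.rep d ≠ 0 ∧ d * (a * X 0 ^ k) ∈ Ideal.span {b, C.poly} := by
  have hX := pow_ne_zero k (coordQuotient_ne_zero (C := C) (chart p))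
  have hf0 := div_ne_zero ha0 hb0
  rw [formOrd, ← ord_pow p, ← ord_div p hf0 hX, ← mem_localRing_iff_ord p (div_ne_zero hf0 hX),
    mem_localRing_iff] at hf
  obtain ⟨m, c, d, hc, hd, hd0, h⟩ := hf
  refine ⟨m, d, hd, hd0, ?_⟩
  have hdvd : C.poly ∣ a * X 0 ^ k * d - b * (X (chart p) ^ k * c) := by
    refine (C.ev_eq_zero_iff (n := n + k + m) (((ha.mul (isHomogeneous_X_pow _ k)).mul hd).sub
      ?_)).1 ?_
    · rw [add_assoc]
      exact hb.mul ((isHomogeneous_X_pow (chart p) k).mul hc)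
    · rw [div_div, div_eq_div_iff (mul_ne_zero hb0 hX) (ev_ne_zero_of_eval_ne_zero p hd hd0)] at h
      simp only [map_sub, map_mul, map_pow, C.ev_X, coordQuotient_zero, one_pow, mul_one]
      linear_combination h
  obtain ⟨r, hr⟩ := hdvd
  exact Ideal.mem_span_pair.2 ⟨X (chart p) ^ k * c, r, by linear_combination -hr⟩

/-- The denominators of a section of `𝒪_C(k)` have no common zero besides the origin, so some power
of each linear form is among them. -/
theorem exists_mul_pow_eq_ev {k : ℕ} {f : C.FunctionField} (h0 : f ≠ 0)
    (hf : ∀ p : C.Point, 0 ≤ formOrd p k f) (u : Fin 3 → ℂ) :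
    ∃ (N : ℕ) (s : CoordRing), s.IsHomogeneous (N + k) ∧ f * C.ev (linForm u) ^ N = C.ev s := by
  obtain ⟨n, a, b, ha, hb, hb0, rfl⟩ := C.exists_eq_ev_div_ev f
  have ha0 : C.ev a ≠ 0 := fun h => h0 (by rw [h, zero_div])
  let I : Ideal CoordRing := (Ideal.span {b, C.poly}).colon {a * X 0 ^ k}
  have hI : ∀ c, c ∈ I ↔ c * (a * X 0 ^ k) ∈ Ideal.span {b, C.poly} :=
    fun c => Submodule.mem_colon_singleton
  have hlocus : zeroLocus ℂ I ⊆ {0} := by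
    intro v hv
    by_contra hv0
    have hF : eval v C.poly = 0 := hv C.poly ((hI _).2
      (Ideal.mul_mem_right _ _ (Ideal.subset_span (by simp))))
    obtain ⟨c, -, hrep⟩ := exists_rep_pointOfVec v hv0 hF
    obtain ⟨m, d, hd, hd0, hmem⟩ := exists_mul_mem_span ha hb ha0 hb0 _ (hf (C.pointOfVec v hv0 hF))
    apply hd0
    rw [hrep, eval_smul_of_isHomogeneous hd, show eval v d = 0 from hv d ((hI d).2 hmem), mul_zero]
  obtain ⟨N, hN⟩ := mem_radical_of_zeroLocus_subset hlocus (a := linForm u)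
    (by rw [eval_linForm, dotProduct_zero])
  have hhom : (linForm u ^ N * (a * X 0 ^ k)).IsHomogeneous (n + (N + k)) := by
    convert ((isHomogeneous_linForm u).pow N).mul (ha.mul (isHomogeneous_X_pow 0 k)) using 1
    ring
  obtain ⟨s, hs, hev⟩ := exists_isHomogeneous_of_mem_span hhom hb ((hI _).1 hN)
  refine ⟨N, s, hs, ?_⟩
  simp only [map_mul, map_pow, ev_X_zero, one_pow, mul_one] at hev
  rw [div_mul_eq_mul_div, div_eq_iff hb0]
  linear_combination hev

theorem exists_eval_ne_zero_of_apply_zero : ∃ v : Fin 3 → ℂ, v 0 = 0 ∧ eval v C.poly ≠ 0 := by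
  have h : killX0 C.poly ≠ 0 := fun h => not_X_dvd_poly 0
    (by simpa [h] using X_zero_dvd_sub_killX0 C.poly)
  obtain ⟨v, hv⟩ : ∃ v, eval v (killX0 C.poly) ≠ 0 := by
    by_contra! h'
    exact h (MvPolynomial.funext fun v => by rw [h' v, map_zero])
  exact ⟨Function.update v 0 0, by simp, eval_killX0 v C.poly ▸ hv⟩

/-- Take for `u` the line through `(1, 0, 0)` and a point of the line `x₀ = 0` outside `C`. -/
theorem exists_linForm_regular : ∃ u : Fin 3 → ℂ, ∀ a,
    linForm u * a ∈ Ideal.span {X 0, C.poly} → a ∈ Ideal.span {X 0, C.poly} := by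
  obtain ⟨v, hv0, hv⟩ := exists_eval_ne_zero_of_apply_zero (C := C)
  have hu : planeMinor v 1 2 ≠ 0 := by
    intro h
    have h1 : v 2 = 0 := by simpa [planeMinor] using congrFun h 1
    have h2 : v 1 = 0 := by simpa [planeMinor] using congrFun h 2
    have hzero : v = (0 : ℂ) • v := by
      funext j
      fin_cases j <;> simp [hv0, h1, h2]
    apply hv
    rw [hzero, eval_smul_of_isHomogeneous C.isHomogeneous, zero_pow four_ne_zero, zero_mul]
  refine ⟨_, mem_span_X_zero_pair_of_mul_mem (prime_linForm hu) ?_ fun ⟨s, hs⟩ => hv ?_⟩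
  · simp [linForm_planeMinor, killX0]
  · rw [← Function.update_eq_self 0 v, hv0, ← eval_killX0, hs, map_mul, eval_linForm,
      planeMinor_dotProduct_self, zero_mul]

theorem exists_eq_ev_of_formOrd_nonneg {k : ℕ} {f : C.FunctionField}
    (hf : ∀ p : C.Point, f = 0 ∨ 0 ≤ formOrd p k f) :
    ∃ a : CoordRing, a.IsHomogeneous k ∧ f = C.ev a := by
  rcases eq_or_ne f 0 with rfl | h0
  · exact ⟨0, isHomogeneous_zero _ _ _, (map_zero _).symm⟩
  replace hf := fun p => (hf p).resolve_left h0
  obtain ⟨u, hu⟩ := exists_linForm_regular (C := C)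
  obtain ⟨N, a, ha, hN⟩ := exists_mul_pow_eq_ev h0 hf (Pi.single 0 1)
  obtain ⟨M, b, hb, hM⟩ := exists_mul_pow_eq_ev h0 hf u
  rw [linForm_single, ev_X_zero, one_pow, mul_one] at hN
  have hdvd : C.poly ∣ linForm u ^ M * a - X 0 ^ N * b := by
    refine (C.ev_eq_zero_iff (n := M + N + k) (.sub ?_ ?_)).1 ?_
    · simpa [add_assoc] using ((isHomogeneous_linForm u).pow M).mul ha
    · simpa [add_assoc, add_left_comm] using (isHomogeneous_X_pow (R := ℂ) (0 : Fin 3) N).mul hb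
    · rw [map_sub, map_mul, map_mul, map_pow, map_pow, ev_X_zero, one_pow, one_mul, ← hM, ← hN,
        mul_comm, sub_self]
  obtain ⟨c, hc⟩ := hdvd
  have hmem : a ∈ Ideal.span {X 0 ^ N, C.poly} :=
    mem_span_pow_pair_of_pow_mul_mem X_prime (not_X_dvd_poly 0) hu N M
      (Ideal.mem_span_pair.2 ⟨b, c, by linear_combination -hc⟩)
  obtain ⟨s, hs, hev⟩ := exists_isHomogeneous_of_mem_span ha (isHomogeneous_X_pow 0 N) hmem
  exact ⟨s, hs, by rw [hN, hev, map_pow, ev_X_zero, one_pow, one_mul]⟩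

end Completeness

/-! ### Divisors and linear systems -/

section LinearSystems

variable {C : SmoothPlaneQuartic}

/-- The degree of a divisor. -/
def deg : C.Divisor →+ ℤ := Finsupp.liftAddHom fun _ => AddMonoidHom.id ℤ

theorem deg_apply (D : C.Divisor) : deg D = D.sum fun _ n => n := rfl

theorem deg_single (p : C.Point) (n : ℤ) : deg (Finsupp.single p n) = n := by
  simp [deg]

open Classical in
/-- The effective divisor given by a multiset of points. -/
def ofMultiset : Multiset C.Point →+ C.Divisor :=
  (Finsupp.mapRange.addMonoidHom (Nat.castAddMonoidHom ℤ)).comp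
    Multiset.toFinsupp.toAddMonoidHom

theorem ofMultiset_apply [DecidableEq C.Point] (E : Multiset C.Point) (p : C.Point) :
    ofMultiset E p = E.count p := by
  cases Subsingleton.elim ‹DecidableEq C.Point› (fun _ _ => Classical.propDecidable _)
  simp [ofMultiset]

theorem ofMultiset_singleton (p : C.Point) : ofMultiset {p} = Finsupp.single p 1 := by
  simp [ofMultiset]

theorem ofMultiset_cons (p : C.Point) (E : Multiset C.Point) :
    ofMultiset (p ::ₘ E) = Finsupp.single p 1 + ofMultiset E := by
  rw [← Multiset.singleton_add, map_add, ofMultiset_singleton]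

theorem deg_ofMultiset (E : Multiset C.Point) : deg (ofMultiset E) = E.card := by
  induction E using Multiset.induction_on with
  | empty => simp
  | cons p E ih =>
    rw [ofMultiset_cons, map_add, deg_single, ih, Multiset.card_cons]
    push_cast
    ring

theorem ofMultiset_nonneg (E : Multiset C.Point) (p : C.Point) : 0 ≤ ofMultiset E p := by
  simp [ofMultiset]

theorem exists_eq_ofMultiset {D : C.Divisor} (h : ∀ p, 0 ≤ D p) : ∃ E, D = ofMultiset E := by
  classical
  refine ⟨Finsupp.toMultiset (D.mapRange Int.toNat rfl), Finsupp.ext fun p => ?_⟩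
  simp [ofMultiset, h p]

variable (C) in
/-- The space `L(D)` of rational functions with poles bounded by `D`. The values of `D` need not
have finite support, so that the orders of a form can be used before they are known to vanish
almost everywhere. -/
def linSys (D : C.Point → ℤ) : Submodule ℂ C.FunctionField :=
  ⨅ p : C.Point, (C.maxIdealPow p (-D p)).restrictScalars ℂ

theorem mem_linSys {D : C.Point → ℤ} {f : C.FunctionField} :
    f ∈ C.linSys D ↔ ∀ p, f = 0 ∨ 0 ≤ ord p f + D p := by
  simp only [linSys, Submodule.mem_iInf, Submodule.restrictScalars_mem, mem_maxIdealPow_iff]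
  refine forall_congr' fun p => or_congr Iff.rfl ?_
  omega

theorem linSys_mono {D D' : C.Point → ℤ} (h : ∀ p, D p ≤ D' p) : C.linSys D ≤ C.linSys D' := by
  intro f hf
  rw [mem_linSys] at hf ⊢
  exact fun p => (hf p).imp id fun h' => by have := h p; omega

theorem linSys_sub_single_le (D : C.Point → ℤ) (p : C.Point) :
    C.linSys (D - ⇑(Finsupp.single p 1)) ≤ C.linSys D := by
  classical
  refine linSys_mono fun q => ?_
  rw [Pi.sub_apply, Finsupp.single_apply]
  split_ifs <;> omega

theorem mem_linSys_sub_single_iff {D : C.Point → ℤ} {p : C.Point} {f : C.FunctionField} :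
    f ∈ C.linSys (D - ⇑(Finsupp.single p 1)) ↔
      f ∈ C.linSys D ∧ (f = 0 ∨ 1 ≤ ord p f + D p) := by
  classical
  refine ⟨fun h => ⟨linSys_sub_single_le D p h, (mem_linSys.1 h p).imp_right fun hp => ?_⟩,
    fun ⟨h, hp⟩ => mem_linSys.2 fun q => ?_⟩
  · rw [Pi.sub_apply, Finsupp.single_eq_same] at hp
    omega
  · rcases eq_or_ne q p with rfl | hqp
    · rw [Pi.sub_apply, Finsupp.single_eq_same]
      exact hp.imp_right fun hp => by omega
    · simpa [Finsupp.single_eq_of_ne hqp] using mem_linSys.1 h q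

theorem exists_sub_smul_mem_linSys {D : C.Point → ℤ} {p : C.Point} {f g : C.FunctionField}
    (hf : f ∈ C.linSys D) (hg : g ∈ C.linSys D) (hg' : g ∉ C.linSys (D - ⇑(Finsupp.single p 1))) :
    ∃ c : ℂ, f - c • g ∈ C.linSys (D - ⇑(Finsupp.single p 1)) := by
  rw [mem_linSys_sub_single_iff, not_and, not_or] at hg'
  obtain ⟨hg0, hgp⟩ := hg' hg
  have hord : ord p g + D p = 0 := by
    have := (mem_linSys.1 hg p).resolve_left hg0
    omega
  have hfg : f / g ∈ C.localRing p := by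
    by_cases hf0 : f = 0
    · rw [hf0, zero_div]
      exact zero_mem _
    rw [mem_localRing_iff_ord p (div_ne_zero hf0 hg0), ord_div p hf0 hg0]
    have := (mem_linSys.1 hf p).resolve_left hf0
    omega
  obtain ⟨c, hc⟩ := exists_sub_mem_maxIdeal p hfg
  refine ⟨c, mem_linSys_sub_single_iff.2
    ⟨sub_mem hf (Submodule.smul_mem _ c hg), or_iff_not_imp_left.2 fun h0 => ?_⟩⟩
  have he : f - c • g = (f / g - algebraMap ℂ _ c) * g := by
    rw [sub_mul, div_mul_cancel₀ _ hg0, Algebra.smul_def]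
  rw [he] at h0 ⊢
  have hne := left_ne_zero_of_mul h0
  have hpos := ((mem_maxIdeal_iff_ord _ _).1 hc).resolve_left hne
  rw [ord_mul _ hne hg0]
  omega

section Dimension

variable (U : Submodule ℂ C.FunctionField) [FiniteDimensional ℂ U]

theorem finrank_inf_linSys_single_eq {D : C.Point → ℤ} {p : C.Point} {g : C.FunctionField}
    (hgU : g ∈ U) (hg : g ∈ C.linSys D) (hg' : g ∉ C.linSys (D - ⇑(Finsupp.single p 1))) :
    Module.finrank ℂ ↥(U ⊓ C.linSys D) =
      Module.finrank ℂ ↥(U ⊓ C.linSys (D - ⇑(Finsupp.single p 1))) + 1 := by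
  have hfd : ∀ W : Submodule ℂ C.FunctionField, FiniteDimensional ℂ ↥(U ⊓ W) := fun W =>
    Submodule.finiteDimensional_of_le inf_le_left
  have hsup : U ⊓ C.linSys D = U ⊓ C.linSys (D - ⇑(Finsupp.single p 1)) ⊔ ℂ ∙ g := by
    apply le_antisymm
    · rintro f ⟨hfU, hf⟩
      obtain ⟨c, hc⟩ := exists_sub_smul_mem_linSys hf hg hg'
      rw [← sub_add_cancel f (c • g)]
      exact add_mem (Submodule.mem_sup_left ⟨sub_mem hfU (U.smul_mem c hgU), hc⟩)
        (Submodule.mem_sup_right (Submodule.smul_mem _ c (Submodule.mem_span_singleton_self g)))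
    · refine sup_le (inf_le_inf_left _ (linSys_sub_single_le D p)) ?_
      rw [Submodule.span_singleton_le_iff_mem]
      exact ⟨hgU, hg⟩
  apply le_antisymm
  · rw [hsup]
    refine (Submodule.finrank_add_le_finrank_add_finrank _ _).trans (Nat.add_le_add_left ?_ _)
    simpa using finrank_span_le_card (R := ℂ) ({g} : Set C.FunctionField)
  · refine Nat.succ_le_of_lt (Submodule.finrank_lt_finrank_of_lt ?_)
    exact lt_of_le_of_ne (inf_le_inf_left _ (linSys_sub_single_le D p)) fun h => hg'
      ((h.symm ▸ (⟨hgU, hg⟩ : g ∈ U ⊓ C.linSys D) :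
        g ∈ U ⊓ C.linSys (D - ⇑(Finsupp.single p 1))).2)

theorem finrank_inf_linSys_single_le (D : C.Point → ℤ) (p : C.Point) :
    Module.finrank ℂ ↥(U ⊓ C.linSys D) ≤
      Module.finrank ℂ ↥(U ⊓ C.linSys (D - ⇑(Finsupp.single p 1))) + 1 := by
  by_cases h : U ⊓ C.linSys D ≤ C.linSys (D - ⇑(Finsupp.single p 1))
  · have : FiniteDimensional ℂ ↥(U ⊓ C.linSys (D - ⇑(Finsupp.single p 1))) :=
      Submodule.finiteDimensional_of_le inf_le_left
    exact (Submodule.finrank_mono (le_inf inf_le_left h)).trans (Nat.le_succ _)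
  · obtain ⟨g, hg, hg'⟩ := SetLike.not_le_iff_exists.1 h
    exact (finrank_inf_linSys_single_eq U hg.1 hg.2 hg').le

theorem sub_ofMultiset_cons (D : C.Point → ℤ) (p : C.Point) (E : Multiset C.Point) :
    D - ⇑(ofMultiset (p ::ₘ E)) = D - ⇑(ofMultiset E) - ⇑(Finsupp.single p 1) := by
  rw [ofMultiset_cons, Finsupp.coe_add, ← sub_sub, sub_right_comm]

theorem finrank_inf_linSys_le (D : C.Point → ℤ) (E : Multiset C.Point) :
    Module.finrank ℂ ↥(U ⊓ C.linSys D) ≤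
      Module.finrank ℂ ↥(U ⊓ C.linSys (D - ⇑(ofMultiset E))) + E.card := by
  induction E using Multiset.induction_on with
  | empty => rw [map_zero, Finsupp.coe_zero, sub_zero, Multiset.card_zero, add_zero]
  | cons p E ih =>
    rw [sub_ofMultiset_cons, Multiset.card_cons]
    have := finrank_inf_linSys_single_le U (D - ⇑(ofMultiset E)) p
    omega

theorem finrank_inf_linSys_eq (D : C.Point → ℤ) (E : Multiset C.Point)
    (h : ∀ p E', p ::ₘ E' ≤ E → ∃ g ∈ U, g ∈ C.linSys (D - ⇑(ofMultiset E')) ∧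
      g ∉ C.linSys (D - ⇑(ofMultiset (p ::ₘ E')))) :
    Module.finrank ℂ ↥(U ⊓ C.linSys D) =
      Module.finrank ℂ ↥(U ⊓ C.linSys (D - ⇑(ofMultiset E))) + E.card := by
  induction E using Multiset.induction_on with
  | empty => rw [map_zero, Finsupp.coe_zero, sub_zero, Multiset.card_zero, add_zero]
  | cons p E ih =>
    rw [ih fun q E' hq => h q E' (hq.trans (Multiset.le_cons_self E p)), Multiset.card_cons]
    obtain ⟨g, hgU, hg, hg'⟩ := h p E le_rfl
    rw [sub_ofMultiset_cons] at hg' ⊢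
    rw [finrank_inf_linSys_single_eq U hgU hg hg']
    omega

end Dimension

/-! ### The degree of a principal divisor -/

variable (C) in
/-- The divisor of zeros of the linear form `x₀`, that is, the divisor of `𝒪_C(1)` as a subsheaf
of `K`. -/
def hyp (p : C.Point) : ℤ := -ord p (C.coordQuotient (chart p))

theorem formOrd_eq (p : C.Point) (n : ℕ) (f : C.FunctionField) :
    formOrd p n f = ord p f + n * C.hyp p := by
  rw [formOrd, hyp]; ring

variable (C) in
/-- The space of the restrictions to `C` of the forms of degree `k`. -/
def formSpace (k : ℕ) : Submodule ℂ C.FunctionField :=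
  (homogeneousSubmodule (Fin 3) ℂ k).map C.ev.toLinearMap

instance (k : ℕ) : FiniteDimensional ℂ (C.formSpace k) :=
  Module.Finite.iff_fg.2 ((homogeneousSubmodule_fg (Fin 3) ℂ k).map _)

theorem formSpace_eq_linSys (k : ℕ) : C.formSpace k = C.linSys fun p => k * C.hyp p := by
  ext f
  rw [mem_linSys]
  constructor
  · rintro ⟨a, ha, rfl⟩ p
    refine or_iff_not_imp_left.2 fun h => ?_
    rw [← formOrd_eq]
    exact formOrd_nonneg p ha h
  · intro h
    simp only [← formOrd_eq] at h
    obtain ⟨a, ha, rfl⟩ := exists_eq_ev_of_formOrd_nonneg h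
    exact ⟨a, ha, rfl⟩

theorem exists_divisor_of_form {n : ℕ} {a : CoordRing} (ha : a.IsHomogeneous n)
    (h : C.ev a ≠ 0) : ∃ E : Multiset C.Point, ∀ p, ofMultiset E p = formOrd p n (C.ev a) := by
  classical
  let D : C.Divisor := Finsupp.onFinset (finite_zeros ha h).toFinset
    (fun p => formOrd p n (C.ev a)) fun p hp => by
      rw [Set.Finite.mem_toFinset, Set.mem_ofPred_eq, ← formOrd_pos_iff p ha h]
      have := formOrd_nonneg p ha h
      omega
  obtain ⟨E, hE⟩ := exists_eq_ofMultiset (D := D) fun p => formOrd_nonneg p ha h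
  exact ⟨E, fun p => by rw [← hE]; rfl⟩

theorem exists_linForm_formOrd_eq_single (p q : C.Point) : ∃ u : Fin 3 → ℂ, u ≠ 0 ∧
    u ⬝ᵥ q.1.rep = 0 ∧ formOrd p 1 (C.ev (linForm u)) = Finsupp.single q (1 : ℤ) p := by
  rcases eq_or_ne p q with rfl | hpq
  · obtain ⟨j, hj⟩ := exists_isTransverse p
    exact ⟨_, hj.ne_zero, hj.1, by rw [formOrd_linForm_eq_one hj, Finsupp.single_eq_same]⟩
  · obtain ⟨u, hu, hu'⟩ : ∃ u : Fin 3 → ℂ, u ⬝ᵥ q.1.rep = 0 ∧ u ⬝ᵥ p.1.rep ≠ 0 := by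
      by_contra! h
      exact hpq (point_eq_of_forall_dotProduct h).symm
    have hu0 : u ≠ 0 := by
      rintro rfl
      exact hu' (zero_dotProduct _)
    refine ⟨u, hu0, hu, ?_⟩
    rwa [Finsupp.single_eq_of_ne hpq, formOrd_eq_zero_iff p (isHomogeneous_linForm u)
      (ev_linForm_ne_zero hu0), eval_linForm]

theorem single_le_formOrd_linForm {u : Fin 3 → ℂ} (hu : u ≠ 0) {q : C.Point}
    (hq : u ⬝ᵥ q.1.rep = 0) (r : C.Point) :
    Finsupp.single q (1 : ℤ) r ≤ formOrd r 1 (C.ev (linForm u)) := by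
  have hl := isHomogeneous_linForm u
  have hl0 := ev_linForm_ne_zero (C := C) hu
  rcases eq_or_ne r q with rfl | hrq
  · rw [Finsupp.single_eq_same]
    exact (formOrd_pos_iff r hl hl0).2 (by rw [eval_linForm, hq])
  · rw [Finsupp.single_eq_of_ne hrq]
    exact formOrd_nonneg r hl hl0

theorem exists_form_of_multiset (p : C.Point) (E : Multiset C.Point) :
    ∃ g : CoordRing, g.IsHomogeneous E.card ∧ C.ev g ≠ 0 ∧
      (∀ q, ofMultiset E q ≤ formOrd q E.card (C.ev g)) ∧
      formOrd p E.card (C.ev g) = ofMultiset E p := by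
  induction E using Multiset.induction_on with
  | empty => exact ⟨1, isHomogeneous_one _ _, by simp, by simp [formOrd, ord_one]⟩
  | cons q E ih =>
    obtain ⟨g, hg, hg0, hle, heq⟩ := ih
    obtain ⟨u, hu0, huq, hup⟩ := exists_linForm_formOrd_eq_single p q
    have hl0 := ev_linForm_ne_zero (C := C) hu0
    rw [Multiset.card_cons]
    refine ⟨g * linForm u, hg.mul (isHomogeneous_linForm u), ?_, fun r => ?_, ?_⟩
    · rw [map_mul]
      exact mul_ne_zero hg0 hl0
    · rw [map_mul, formOrd_mul r hg0 hl0, ofMultiset_cons, Finsupp.add_apply, add_comm]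
      exact add_le_add (hle r) (single_le_formOrd_linForm hu0 huq r)
    · rw [map_mul, formOrd_mul p hg0 hl0, ofMultiset_cons, Finsupp.add_apply, heq, hup, add_comm]

theorem formSpace_inf_linSys_sub_eq_map {n : ℕ} {a : CoordRing} (ha : a.IsHomogeneous n)
    (h : C.ev a ≠ 0) {D : C.Divisor} (hD : ∀ p, D p = formOrd p n (C.ev a)) (m : ℕ) :
    C.formSpace (n + m) ⊓ C.linSys ((fun p => ((n + m : ℕ) : ℤ) * C.hyp p) - ⇑D) =
      (C.formSpace m).map (LinearMap.mulLeft ℂ (C.ev a)) := by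
  apply le_antisymm
  · rintro f ⟨-, hf⟩
    refine ⟨f / C.ev a, ?_, mul_div_cancel₀ f h⟩
    rw [SetLike.mem_coe, formSpace_eq_linSys, mem_linSys]
    intro p
    by_cases h0 : f = 0
    · exact Or.inl (by rw [h0, zero_div])
    have hp := (mem_linSys.1 hf p).resolve_left h0
    rw [Pi.sub_apply, hD, formOrd_eq] at hp
    rw [ord_div p h0 h]
    push_cast at hp
    exact Or.inr (by linarith)
  · rintro _ ⟨_, ⟨b, hb, rfl⟩, rfl⟩
    refine ⟨⟨a * b, ha.mul hb, map_mul C.ev _ _⟩, mem_linSys.2 fun p => ?_⟩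
    by_cases h0 : C.ev b = 0
    · exact Or.inl ((congrArg _ h0).trans (mul_zero _))
    right
    change 0 ≤ ord p (C.ev a * C.ev b) + _
    have := formOrd_nonneg p hb h0
    rw [formOrd_eq] at this
    rw [Pi.sub_apply, hD, formOrd_eq, ord_mul p h h0]
    push_cast
    linarith

theorem exists_mem_formSpace_separating (p : C.Point) {E : Multiset C.Point} {k : ℕ}
    (hk : E.card ≤ k) :
    ∃ g ∈ C.formSpace k, g ∈ C.linSys ((fun q => k * C.hyp q) - ⇑(ofMultiset E)) ∧
      g ∉ C.linSys ((fun q => k * C.hyp q) - ⇑(ofMultiset (p ::ₘ E))) := by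
  obtain ⟨g, hg, hg0, hle, heq⟩ := exists_form_of_multiset p E
  obtain ⟨l, rfl⟩ := Nat.exists_eq_add_of_le hk
  have hX := isHomogeneous_X_pow (R := ℂ) (chart p) l
  have hX0 := ev_ne_zero_of_eval_ne_zero p hX (eval_X_pow_chart_ne_zero p l)
  have hord : ∀ q, ord q (C.ev (g * X (chart p) ^ l)) + (E.card + l : ℕ) * C.hyp q =
      formOrd q E.card (C.ev g) + formOrd q l (C.ev (X (chart p) ^ l)) := fun q => by
    rw [← formOrd_mul q hg0 hX0, ← map_mul, formOrd_eq]
  refine ⟨C.ev (g * X (chart p) ^ l), ⟨_, hg.mul hX, rfl⟩,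
    mem_linSys.2 fun q => Or.inr ?_, fun hmem => ?_⟩
  · have h₁ := hord q
    have h₂ := formOrd_nonneg q hX hX0
    have h₃ := hle q
    rw [Pi.sub_apply]
    linarith
  · have h₁ := hord p
    rw [heq, (formOrd_eq_zero_iff p hX hX0).2 (eval_X_pow_chart_ne_zero p l)] at h₁
    have h₂ := (mem_linSys.1 hmem p).resolve_left (by rw [map_mul]; exact mul_ne_zero hg0 hX0)
    rw [Pi.sub_apply, ofMultiset_cons, Finsupp.add_apply, Finsupp.single_eq_same] at h₂
    linarith

theorem finrank_formSpace_add {n : ℕ} {a : CoordRing} (ha : a.IsHomogeneous n) (h : C.ev a ≠ 0)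
    {E : Multiset C.Point} (hE : ∀ p, ofMultiset E p = formOrd p n (C.ev a)) {m : ℕ}
    (hm : E.card ≤ n + m) : Module.finrank ℂ (C.formSpace (n + m)) =
      Module.finrank ℂ (C.formSpace m) + E.card :=
  calc Module.finrank ℂ (C.formSpace (n + m))
      = Module.finrank ℂ ↥(C.formSpace (n + m) ⊓
          C.linSys fun p => ((n + m : ℕ) : ℤ) * C.hyp p) := by
        rw [← formSpace_eq_linSys, inf_idem]
    _ = Module.finrank ℂ ↥(C.formSpace (n + m) ⊓
          C.linSys ((fun p => ((n + m : ℕ) : ℤ) * C.hyp p) - ⇑(ofMultiset E))) + E.card := by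
        refine finrank_inf_linSys_eq _ _ E fun p E' hE' => exists_mem_formSpace_separating p ?_
        exact (Multiset.card_le_card ((Multiset.le_cons_self E' p).trans hE')).trans hm
    _ = Module.finrank ℂ (C.formSpace m) + E.card := by
        rw [formSpace_inf_linSys_sub_eq_map ha h hE]
        congr 1
        exact (Submodule.equivMapOfInjective _ (mul_right_injective₀ h) _).finrank_eq.symm

/-- Both cardinalities are `dim formSpace (n + m) - dim formSpace m` for large `m`. -/
theorem card_eq_of_forms {n : ℕ} {a b : CoordRing} (ha : a.IsHomogeneous n)
    (hb : b.IsHomogeneous n) (ha0 : C.ev a ≠ 0) (hb0 : C.ev b ≠ 0) {E E' : Multiset C.Point}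
    (hE : ∀ p, ofMultiset E p = formOrd p n (C.ev a))
    (hE' : ∀ p, ofMultiset E' p = formOrd p n (C.ev b)) : E.card = E'.card := by
  have h1 := finrank_formSpace_add ha ha0 hE (m := E.card + E'.card) (by omega)
  have h2 := finrank_formSpace_add hb hb0 hE' (m := E.card + E'.card) (by omega)
  omega

theorem exists_principal_divisor {f : C.FunctionField} (h0 : f ≠ 0) :
    ∃ D : C.Divisor, (∀ p, D p = ord p f) ∧ deg D = 0 := by
  obtain ⟨n, a, b, ha, hb, hb0, rfl⟩ := C.exists_eq_ev_div_ev f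
  have ha0 : C.ev a ≠ 0 := fun h => h0 (by rw [h, zero_div])
  obtain ⟨E, hE⟩ := exists_divisor_of_form ha ha0
  obtain ⟨E', hE'⟩ := exists_divisor_of_form hb hb0
  refine ⟨ofMultiset E - ofMultiset E', fun p => ?_, ?_⟩
  · rw [Finsupp.sub_apply, hE, hE', formOrd_eq, formOrd_eq, ord_div p ha0 hb0]
    ring
  · rw [map_sub, deg_ofMultiset, deg_ofMultiset, card_eq_of_forms ha hb ha0 hb0 hE hE', sub_self]

end LinearSystems

/-! ### A transverse line -/

section RestrictLine

variable {σ R : Type*} [CommRing R]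

/-- The restriction of a polynomial to the line `τ ↦ w + τ o`. -/
def restrictLine (w o : σ → R) : MvPolynomial σ R →ₐ[R] Polynomial R :=
  aeval fun j => Polynomial.C (w j) + Polynomial.X * Polynomial.C (o j)

theorem eval_restrictLine (w o : σ → R) (τ : R) (a : MvPolynomial σ R) :
    (restrictLine w o a).eval τ = eval (w + τ • o) a := by
  have h : (Polynomial.aeval τ).comp (restrictLine w o) = aeval (w + τ • o) := by
    ext j
    simp [restrictLine, mul_comm τ]
  simpa using DFunLike.congr_fun h a

theorem derivative_restrictLine [Fintype σ] (w o : σ → R) (a : MvPolynomial σ R) :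
    (restrictLine w o a).derivative = restrictLine w o (∑ j, o j • pderiv j a) := by
  classical
  induction a using MvPolynomial.induction_on with
  | C c => simp [restrictLine]
  | add a b ha hb => simp [ha, hb, Finset.sum_add_distrib]
  | mul_X a i h =>
    have hX : (restrictLine w o (X i)).derivative = Polynomial.C (o i) := by simp [restrictLine]
    have hsum : ∑ j, o j • pderiv j (a * X i) = (∑ j, o j • pderiv j a) * X i + o i • a := by
      simp [pderiv_X, Pi.single_apply, Finset.sum_add_distrib, Finset.mul_sum, add_comm, mul_comm]
    rw [map_mul, Polynomial.derivative_mul, h, hX, hsum, map_add, map_mul, map_smul,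
      Polynomial.smul_eq_C_mul]
    ring

theorem natDegree_restrictLine_le (w o : σ → R) {n : ℕ} {a : MvPolynomial σ R}
    (ha : a.IsHomogeneous n) : (restrictLine w o a).natDegree ≤ n := by
  have := aeval_natDegree_le a ha.totalDegree_le
    (fun j => Polynomial.C (w j) + Polynomial.X * Polynomial.C (o j)) (n := 1)
    fun j => by compute_degree
  rwa [mul_one] at this

theorem coeff_restrictLine (w o : σ → R) {n : ℕ} {a : MvPolynomial σ R}
    (ha : a.IsHomogeneous n) : (restrictLine w o a).coeff n = eval o a := by
  rw [eval_eq, restrictLine, aeval_def, eval₂_eq, Polynomial.finsetSum_coeff]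
  refine Finset.sum_congr rfl fun d hd => ?_
  have hprod : ∀ {M : Type _} [CommMonoid M] (f : σ → M),
      (d.toMultiset.map f).prod = ∏ i ∈ d.support, f i ^ d i := fun f => by
    rw [Finsupp.toMultiset_map, Finsupp.prod_toMultiset,
      Finsupp.prod_mapDomain_index (fun _ => pow_zero _) fun _ => pow_add _]
    rfl
  have hcoeff := Polynomial.coeff_multiset_prod_of_natDegree_le (n := 1)
    (d.toMultiset.map fun j => Polynomial.C (w j) + Polynomial.X * Polynomial.C (o j))
    fun p hp => by
      obtain ⟨j, -, rfl⟩ := Multiset.mem_map.1 hp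
      compute_degree
  rw [Multiset.map_map, hprod, hprod, Multiset.card_map, Finsupp.card_toMultiset, mul_one] at hcoeff
  rw [← Polynomial.C_eq_algebraMap, Polynomial.coeff_C_mul, ha.degree_eq_sum_deg_support hd]
  refine congrArg _ (hcoeff.trans (Finset.prod_congr rfl fun j _ => ?_))
  simp [Polynomial.coeff_C]

end RestrictLine

theorem exists_dotProduct_eq_zero_forall_ne_zero {K ι : Type*} [Field K] [Infinite K] [Fintype ι]
    (o : ι → K) {S : Set (ι → K)} (hS : S.Finite) (h : ∀ v ∈ S, v ∉ K ∙ o) :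
    ∃ u : ι → K, u ⬝ᵥ o = 0 ∧ ∀ v ∈ S, u ⬝ᵥ v ≠ 0 := by
  classical
  have := hS.to_subtype
  obtain ⟨f, hf⟩ := Module.exists_dual_forall_apply_ne_zero (K := K)
    (fun v : S => (K ∙ o).mkQ v.1) fun v => by simpa using h v.1 v.2
  have hdot : ∀ v, (dotProductEquiv K ι).symm (f.comp (K ∙ o).mkQ) ⬝ᵥ v = f ((K ∙ o).mkQ v) :=
    fun v => LinearMap.congr_fun ((dotProductEquiv K ι).apply_symm_apply _) v
  refine ⟨(dotProductEquiv K ι).symm (f.comp (K ∙ o).mkQ), ?_, fun v hv => ?_⟩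
  · rw [hdot, Submodule.mkQ_apply,
      (Submodule.Quotient.mk_eq_zero _).2 (Submodule.mem_span_singleton_self o), map_zero]
  · rw [hdot]
    exact hf ⟨v, hv⟩

theorem exists_linearIndependent_dotProduct_eq_zero {K : Type*} [Field K] {u o : Fin 3 → K}
    (ho : o ≠ 0) (huo : u ⬝ᵥ o = 0) :
    ∃ w, LinearIndependent K ![w, o] ∧ u ⬝ᵥ w = 0 := by
  let φ : Module.Dual K (Fin 3 → K) := dotProductEquiv K (Fin 3) u
  have hrank : 1 < Module.finrank K (LinearMap.ker φ) := by
    have := LinearMap.finrank_range_add_finrank_ker φ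
    have := Submodule.finrank_le (LinearMap.range φ)
    rw [Module.finrank_self] at this
    rw [Module.finrank_fin_fun] at *
    omega
  obtain ⟨w, hw⟩ := exists_linearIndependent_pair_of_one_lt_finrank hrank
    (x := ⟨o, huo⟩) fun h => ho (congrArg Subtype.val h)
  refine ⟨w, LinearIndependent.pair_symm_iff.1 ?_, w.2⟩
  have := hw.map' (LinearMap.ker φ).subtype (Submodule.ker_subtype _)
  convert! this using 1
  ext i
  fin_cases i <;> rfl

theorem exists_linearIndependent_pair_dotProduct_eq_zero {K : Type*} [Field K] (u : Fin 3 → K) :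
    ∃ w o, LinearIndependent K ![w, o] ∧ u ⬝ᵥ w = 0 ∧ u ⬝ᵥ o = 0 := by
  obtain ⟨o, ho, ho0⟩ := (Submodule.ne_bot_iff _).1 <|
    LinearMap.ker_ne_bot_of_finrank_lt (f := dotProductEquiv K (Fin 3) u) (by simp)
  obtain ⟨w, hw, huw⟩ := exists_linearIndependent_dotProduct_eq_zero ho0 ho
  exact ⟨w, o, hw, huw, ho⟩

section TransverseLine

variable (C : SmoothPlaneQuartic)

/-- A parametrised line `τ ↦ base + τ dir` that is nowhere tangent to `C` and whose point `dir` at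
infinity is not on `C`, together with an equation `normal` of it. -/
structure TransverseLine where
  normal : Fin 3 → ℂ
  base : Fin 3 → ℂ
  dir : Fin 3 → ℂ
  normal_ne_zero : normal ≠ 0
  linearIndependent : LinearIndependent ℂ ![base, dir]
  normal_dotProduct_base : normal ⬝ᵥ base = 0
  normal_dotProduct_dir : normal ⬝ᵥ dir = 0
  eval_dir_ne_zero : eval dir C.poly ≠ 0
  grad_dotProduct_dir_ne_zero :
    ∀ p : C.Point, normal ⬝ᵥ p.1.rep = 0 → grad p ⬝ᵥ dir ≠ 0

variable {C}

theorem exists_eval_poly_ne_zero : ∃ o : Fin 3 → ℂ, eval o C.poly ≠ 0 := by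
  by_contra! h
  exact C.irreducible.ne_zero (MvPolynomial.funext fun v => (h v).trans (map_zero _).symm)

theorem rep_notMem_span {o : Fin 3 → ℂ} (ho : eval o C.poly ≠ 0) (p : C.Point) :
    p.1.rep ∉ ℂ ∙ o := by
  intro h
  obtain ⟨c, hc⟩ := Submodule.mem_span_singleton.1 h
  have hp := p.2
  rw [← hc, eval_smul_of_isHomogeneous C.isHomogeneous] at hp
  have hc0 := eq_zero_of_pow_eq_zero ((mul_eq_zero.1 hp).resolve_right ho)
  rw [hc0, zero_smul] at hc
  exact p.1.rep_nonzero hc.symm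

/-- The tangents of `C` through `o` touch `C` on the polar cubic of `o`. -/
theorem finite_grad_dotProduct_eq_zero {o : Fin 3 → ℂ} (ho : eval o C.poly ≠ 0) :
    {p : C.Point | grad p ⬝ᵥ o = 0}.Finite := by
  have heval : ∀ v, eval v (∑ j, o j • pderiv j C.poly) =
      (fun j => eval v (pderiv j C.poly)) ⬝ᵥ o := fun v => by
    simp [smul_eval, dotProduct, mul_comm]
  have hhom : (∑ j, o j • pderiv j C.poly).IsHomogeneous 3 := IsHomogeneous.sum _ _ _ fun j _ =>
    (homogeneousSubmodule (Fin 3) ℂ 3).smul_mem (o j) C.isHomogeneous.pderiv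
  have hne : ∑ j, o j • pderiv j C.poly ≠ 0 := by
    intro h
    have heuler := congrArg (eval o) C.isHomogeneous.sum_X_mul_pderiv
    have hzero := (heval o).symm.trans (by rw [h, map_zero])
    simp only [map_sum, map_mul, eval_X, map_nsmul] at heuler
    rw [dotProduct_comm, dotProduct, heuler] at hzero
    exact ho (by simpa using hzero)
  refine (finite_zeros hhom (ev_ne_zero_of_lt hhom hne (by norm_num))).subset fun p hp => ?_
  exact (heval _).trans hp

theorem nonempty_transverseLine : Nonempty C.TransverseLine := by
  obtain ⟨o, ho⟩ := exists_eval_poly_ne_zero (C := C)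
  have ho0 : o ≠ 0 := by
    rintro rfl
    exact ho (by simpa using eval_smul_of_isHomogeneous C.isHomogeneous 0 0)
  obtain ⟨e, he⟩ := exists_linearIndependent_pair_of_one_lt_finrank (R := ℂ) (by simp) ho0
  have heo : e ∉ ℂ ∙ o := fun h => by
    obtain ⟨c, hc⟩ := Submodule.mem_span_singleton.1 h
    exact (LinearIndependent.pair_iff' ho0).1 he c hc
  obtain ⟨u, huo, hu⟩ := exists_dotProduct_eq_zero_forall_ne_zero o
    (((finite_grad_dotProduct_eq_zero ho).image fun p => p.1.rep).insert e) (by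
      rintro v (rfl | ⟨p, -, rfl⟩)
      exacts [heo, rep_notMem_span ho p])
  obtain ⟨w, hwo, huw⟩ := exists_linearIndependent_dotProduct_eq_zero ho0 huo
  exact ⟨{
    normal := u
    base := w
    dir := o
    normal_ne_zero := by
      rintro rfl
      exact hu e (Set.mem_insert _ _) (zero_dotProduct e)
    linearIndependent := hwo
    normal_dotProduct_base := huw
    normal_dotProduct_dir := huo
    eval_dir_ne_zero := ho
    grad_dotProduct_dir_ne_zero := fun p hp h =>
      hu _ (Set.mem_insert_of_mem _ ⟨p, h, rfl⟩) hp }⟩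

namespace TransverseLine

variable (L : C.TransverseLine)

theorem param_ne_zero (τ : ℂ) : L.base + τ • L.dir ≠ 0 := fun h =>
  one_ne_zero (LinearIndependent.pair_iff.1 L.linearIndependent 1 τ (by rwa [one_smul])).1

theorem normal_dotProduct_param (τ : ℂ) : L.normal ⬝ᵥ (L.base + τ • L.dir) = 0 := by
  rw [dotProduct_add, dotProduct_smul, L.normal_dotProduct_base, L.normal_dotProduct_dir,
    smul_zero, add_zero]

theorem eq_of_smul_param_eq {c c' τ τ' : ℂ} (hc : c ≠ 0)
    (h : c • (L.base + τ • L.dir) = c' • (L.base + τ' • L.dir)) : τ = τ' := by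
  obtain ⟨h₁, h₂⟩ := LinearIndependent.pair_iff.1 L.linearIndependent (c - c') (c * τ - c' * τ') (by
    rw [← sub_eq_zero] at h
    rw [← h]
    module)
  obtain rfl := sub_eq_zero.1 h₁
  exact mul_left_cancel₀ hc (sub_eq_zero.1 h₂)

theorem exists_rep_eq_smul_param {p : C.Point} (hp : L.normal ⬝ᵥ p.1.rep = 0) :
    ∃ c τ : ℂ, c ≠ 0 ∧ p.1.rep = c • (L.base + τ • L.dir) := by
  obtain ⟨α, β, h⟩ := exists_eq_add_of_dotProduct_eq_zero L.normal_ne_zero L.linearIndependent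
    (by rw [dotProduct_comm, L.normal_dotProduct_base])
    (by rw [dotProduct_comm, L.normal_dotProduct_dir]) (by rwa [dotProduct_comm])
  have hα : α ≠ 0 := by
    rintro rfl
    refine rep_notMem_span L.eval_dir_ne_zero p (Submodule.mem_span_singleton.2 ⟨β, ?_⟩)
    rw [h, zero_smul, zero_add]
  exact ⟨α, β / α, hα, by rw [h, smul_add, smul_smul, mul_div_cancel₀ _ hα]⟩

theorem isTransverse {p : C.Point} (hp : L.normal ⬝ᵥ p.1.rep = 0) : IsTransverse p L.normal := by
  refine ⟨hp, fun c hc => ?_⟩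
  have h := L.normal_dotProduct_dir
  rw [hc, smul_dotProduct, smul_eq_mul, mul_eq_zero] at h
  refine h.elim (fun h0 => L.normal_ne_zero ?_) (L.grad_dotProduct_dir_ne_zero p hp)
  rw [hc, h0, zero_smul]

/-- The equation of `C` restricted to the line. -/
def restriction : Polynomial ℂ := restrictLine L.base L.dir C.poly

theorem natDegree_restriction : L.restriction.natDegree = 4 :=
  le_antisymm (natDegree_restrictLine_le _ _ C.isHomogeneous) <|
    Polynomial.le_natDegree_of_ne_zero <| by
      rw [restriction, coeff_restrictLine _ _ C.isHomogeneous]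
      exact L.eval_dir_ne_zero

theorem restriction_ne_zero : L.restriction ≠ 0 := by
  intro h
  simpa [h] using L.natDegree_restriction

theorem mem_roots_restriction {τ : ℂ} :
    τ ∈ L.restriction.roots ↔ eval (L.base + τ • L.dir) C.poly = 0 := by
  rw [Polynomial.mem_roots L.restriction_ne_zero, Polynomial.IsRoot, restriction,
    eval_restrictLine]

theorem nodup_roots_restriction : L.restriction.roots.Nodup := by
  rw [Multiset.nodup_iff_count_le_one]
  intro τ
  rw [Polynomial.count_roots]
  by_contra! hlt
  obtain ⟨hroot, hderiv⟩ :=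
    (Polynomial.one_lt_rootMultiplicity_iff_isRoot L.restriction_ne_zero).1 hlt
  rw [← Polynomial.mem_roots L.restriction_ne_zero, mem_roots_restriction] at hroot
  rw [Polynomial.IsRoot, restriction, derivative_restrictLine, eval_restrictLine] at hderiv
  obtain ⟨c, -, hrep⟩ := exists_rep_pointOfVec _ (L.param_ne_zero τ) hroot
  refine L.grad_dotProduct_dir_ne_zero (C.pointOfVec _ (L.param_ne_zero τ) hroot)
    (by rw [hrep, dotProduct_smul, normal_dotProduct_param, smul_zero]) ?_
  calc grad (C.pointOfVec _ (L.param_ne_zero τ) hroot) ⬝ᵥ L.dir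
      = c ^ 3 * eval (L.base + τ • L.dir) (∑ j, L.dir j • pderiv j C.poly) := by
        simp only [dotProduct, grad, hrep, eval_smul_of_isHomogeneous C.isHomogeneous.pderiv,
          map_sum, smul_eval, Finset.mul_sum]
        exact Finset.sum_congr rfl fun j _ => by ring
    _ = 0 := by rw [hderiv, mul_zero]

theorem card_points {E : Finset C.Point}
    (hE : ∀ p, p ∈ E ↔ L.normal ⬝ᵥ p.1.rep = 0) : E.card = 4 := by
  classical
  rw [← L.natDegree_restriction, (IsAlgClosed.splits L.restriction).natDegree_eq_card_roots,
    ← Multiset.toFinset_card_of_nodup L.nodup_roots_restriction]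
  have hroot : ∀ τ ∈ L.restriction.roots.toFinset, eval (L.base + τ • L.dir) C.poly = 0 :=
    fun τ hτ => L.mem_roots_restriction.1 (Multiset.mem_toFinset.1 hτ)
  refine (Finset.card_bij (fun τ hτ => C.pointOfVec _ (L.param_ne_zero τ) (hroot τ hτ))
    (fun τ hτ => ?_) (fun τ hτ τ' hτ' h => ?_) fun p hp => ?_).symm
  · obtain ⟨c, -, hrep⟩ := exists_rep_pointOfVec _ (L.param_ne_zero τ) (hroot τ hτ)
    rw [hE, hrep, dotProduct_smul, normal_dotProduct_param, smul_zero]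
  · obtain ⟨c, hc, hrep⟩ := exists_rep_pointOfVec _ (L.param_ne_zero τ) (hroot τ hτ)
    obtain ⟨c', -, hrep'⟩ := exists_rep_pointOfVec _ (L.param_ne_zero τ') (hroot τ' hτ')
    exact L.eq_of_smul_param_eq hc (by rw [← hrep, ← hrep', h])
  · obtain ⟨c, τ, hc, hrep⟩ := L.exists_rep_eq_smul_param ((hE p).1 hp)
    have hτ : τ ∈ L.restriction.roots := by
      have h := p.2
      rw [hrep, eval_smul_of_isHomogeneous C.isHomogeneous] at h
      exact L.mem_roots_restriction.2 ((mul_eq_zero.1 h).resolve_left (pow_ne_zero _ hc))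
    obtain ⟨c', hc', hrep'⟩ := exists_rep_pointOfVec _ (L.param_ne_zero τ)
      (hroot τ (Multiset.mem_toFinset.2 hτ))
    refine ⟨τ, Multiset.mem_toFinset.2 hτ, point_eq_of_smul (c := c * c'⁻¹) ?_⟩
    rw [hrep', smul_smul, hrep, mul_assoc, inv_mul_cancel₀ hc', mul_one]

end TransverseLine

theorem exists_line_nodup : ∃ (u : Fin 3 → ℂ) (E : Multiset C.Point), u ≠ 0 ∧ E.Nodup ∧
    E.card = 4 ∧ ∀ p, ofMultiset E p = formOrd p 1 (C.ev (linForm u)) := by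
  classical
  obtain ⟨L⟩ := nonempty_transverseLine (C := C)
  have hl := isHomogeneous_linForm L.normal
  have hl0 := ev_linForm_ne_zero (C := C) L.normal_ne_zero
  obtain ⟨E, hE⟩ := exists_divisor_of_form hl hl0
  have hmem : ∀ p, p ∈ E ↔ L.normal ⬝ᵥ p.1.rep = 0 := fun p => by
    rw [← eval_linForm, ← formOrd_pos_iff p hl hl0, ← hE, ofMultiset_apply, ← Multiset.count_pos,
      ← Int.natCast_pos, Int.lt_iff_add_one_le, zero_add]
  have hnodup : E.Nodup := by
    refine Multiset.nodup_iff_count_eq_one.2 fun p hp => ?_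
    have := hE p
    rw [ofMultiset_apply, formOrd_linForm_eq_one (L.isTransverse ((hmem p).1 hp))] at this
    exact_mod_cast this
  refine ⟨L.normal, E, L.normal_ne_zero, hnodup, ?_, hE⟩
  rw [← Multiset.toFinset_card_of_nodup hnodup]
  exact L.card_points fun p => by rw [Multiset.mem_toFinset, hmem]

theorem card_of_linForm {u : Fin 3 → ℂ} (hu : u ≠ 0) {E : Multiset C.Point}
    (hE : ∀ p, ofMultiset E p = formOrd p 1 (C.ev (linForm u))) : E.card = 4 := by
  obtain ⟨u', E', hu', -, hcard, hE'⟩ := exists_line_nodup (C := C)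
  rw [← hcard]
  exact card_eq_of_forms (isHomogeneous_linForm u) (isHomogeneous_linForm u')
    (ev_linForm_ne_zero hu) (ev_linForm_ne_zero hu') hE hE'

theorem exists_hyp_divisor : ∃ H : C.Divisor, ⇑H = C.hyp ∧ deg H = 4 := by
  have h0 : (Pi.single 0 1 : Fin 3 → ℂ) ≠ 0 := by simp
  obtain ⟨E, hE⟩ := exists_divisor_of_form (isHomogeneous_linForm (Pi.single 0 1))
    (ev_linForm_ne_zero (C := C) h0)
  refine ⟨ofMultiset E, funext fun p => ?_, by rw [deg_ofMultiset, card_of_linForm h0 hE]; rfl⟩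
  rw [hE, linForm_single, C.ev_X, coordQuotient_zero, formOrd_eq, ord_one]
  simp

end TransverseLine

/-! ### Conics with prescribed zeros -/

section Forms

variable {σ R K : Type*} [CommRing R] [Field K]

theorem restrictLine_eq_zero [IsDomain R] {n : ℕ} {a : MvPolynomial σ R} (ha : a.IsHomogeneous n)
    {w o : σ → R} (ho : eval o a = 0) {s : Finset R} (hs : n ≤ s.card)
    (h : ∀ τ ∈ s, eval (w + τ • o) a = 0) : restrictLine w o a = 0 := by
  by_contra hne
  have hdeg : (restrictLine w o a).natDegree ≠ n := fun h' => hne <| by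
    rw [← Polynomial.leadingCoeff_eq_zero, Polynomial.leadingCoeff, h', coeff_restrictLine w o ha,
      ho]
  refine hne (Polynomial.eq_zero_of_natDegree_lt_card_of_eval_eq_zero' _ s (fun τ hτ => ?_) ?_)
  · rw [eval_restrictLine, h τ hτ]
  · exact ((natDegree_restrictLine_le w o ha).lt_of_ne hdeg).trans_le hs

theorem eval_add_smul_eq_zero {n : ℕ} {a : MvPolynomial σ K} (ha : a.IsHomogeneous n)
    {w o : σ → K} (h : restrictLine w o a = 0) (α β : K) (ho : eval o a = 0) :
    eval (α • w + β • o) a = 0 := by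
  rcases eq_or_ne α 0 with rfl | hα
  · rw [zero_smul, zero_add, eval_smul_of_isHomogeneous ha, ho, mul_zero]
  · have hsmul : α • w + β • o = α • (w + (β / α) • o) := by
      rw [smul_add, smul_smul, mul_div_cancel₀ _ hα]
    rw [hsmul, eval_smul_of_isHomogeneous ha, ← eval_restrictLine, h, Polynomial.eval_zero,
      mul_zero]

theorem exists_eq_mul_of_isHomogeneous {m n : ℕ} {a b : MvPolynomial σ R}
    (ha : a.IsHomogeneous (m + n)) (hb : b.IsHomogeneous m) (h : b ∣ a) :
    ∃ c, c.IsHomogeneous n ∧ a = b * c := by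
  obtain ⟨c, rfl⟩ := h
  set 𝒜 := homogeneousSubmodule σ R
  let _ : GradedAlgebra 𝒜 := gradedAlgebra
  refine ⟨DirectSum.decompose 𝒜 c n, (DirectSum.decompose 𝒜 c n).2, ?_⟩
  rw [← DirectSum.coe_decompose_mul_add_of_left_mem 𝒜 hb, DirectSum.decompose_of_mem_same 𝒜 ha]

variable [Fintype σ]

theorem exists_eq_linForm {a : MvPolynomial σ R} (ha : a.IsHomogeneous 1) :
    ∃ u, a = linForm u := by
  rw [← mem_homogeneousSubmodule, homogeneousSubmodule_one_eq_span_X,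
    Submodule.mem_span_range_iff_exists_fun] at ha
  obtain ⟨u, hu⟩ := ha
  exact ⟨u, hu.symm⟩

theorem linearIndependent_of_mul_linForm {ι : Type*} {l : MvPolynomial σ K} {m : ι → σ → K}
    (h : LinearIndependent K fun i => l * linForm (m i)) : LinearIndependent K m :=
  .of_comp ((LinearMap.mulLeft K l).comp (Fintype.linearCombination K X)) h

theorem linForm_dvd_of_forall_eval_eq_zero [IsAlgClosed K] {u : σ → K} (hu : u ≠ 0)
    {a : MvPolynomial σ K} (h : ∀ v, u ⬝ᵥ v = 0 → eval v a = 0) : linForm u ∣ a := by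
  have hprime : (Ideal.span {linForm u}).IsPrime :=
    (Ideal.span_singleton_prime (prime_linForm hu).ne_zero).2 (prime_linForm hu)
  rw [← Ideal.mem_span_singleton,
    ← IsPrime.vanishingIdeal_zeroLocus (K := K) (Ideal.span {linForm u}), mem_vanishingIdeal_iff]
  intro v hv
  refine h v ?_
  rw [← eval_linForm]
  exact hv _ (Ideal.mem_span_singleton_self _)

theorem exists_eq_linForm_mul_linForm [IsAlgClosed K] {u p q r : Fin 3 → K} (hu : u ≠ 0)
    (hpq : LinearIndependent K ![p, q]) (hpr : LinearIndependent K ![p, r])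
    (hqr : LinearIndependent K ![q, r]) (hp : u ⬝ᵥ p = 0) (hq : u ⬝ᵥ q = 0) (hr : u ⬝ᵥ r = 0)
    {a : MvPolynomial (Fin 3) K} (ha : a.IsHomogeneous 2) (hap : eval p a = 0)
    (haq : eval q a = 0) (har : eval r a = 0) : ∃ m, a = linForm u * linForm m := by
  classical
  have hcomb {v : Fin 3 → K} (hv : u ⬝ᵥ v = 0) : ∃ α β : K, v = α • p + β • q := by
    rw [dotProduct_comm] at hp hq hv
    exact exists_eq_add_of_dotProduct_eq_zero hu hpq hp hq hv
  obtain ⟨α, β, hαβ⟩ := hcomb hr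
  have hα : α ≠ 0 := by
    rintro rfl
    exact (LinearIndependent.pair_iff' (x := q) (hpq.ne_zero 1)).1 hqr β
      (by rw [hαβ, zero_smul, zero_add])
  have hβ : β ≠ 0 := by
    rintro rfl
    exact (LinearIndependent.pair_iff' (x := p) (hpq.ne_zero 0)).1 hpr α
      (by rw [hαβ, zero_smul, add_zero])
  have hrestrict : restrictLine p q a = 0 := by
    refine restrictLine_eq_zero ha haq (s := {0, β / α})
      (Finset.card_pair (div_ne_zero hβ hα).symm).ge fun τ hτ => ?_
    rcases Finset.mem_insert.1 hτ with rfl | hτ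
    · rw [zero_smul, add_zero, hap]
    · have hsmul : r = α • (p + (β / α) • q) := by
        rw [hαβ, smul_add, smul_smul, mul_div_cancel₀ _ hα]
      rw [hsmul, eval_smul_of_isHomogeneous ha] at har
      rw [Finset.mem_singleton.1 hτ]
      exact (mul_eq_zero.1 har).resolve_left (pow_ne_zero _ hα)
  have hdvd : linForm u ∣ a := linForm_dvd_of_forall_eval_eq_zero hu fun v hv => by
    obtain ⟨α, β, rfl⟩ := hcomb hv
    exact eval_add_smul_eq_zero ha hrestrict α β haq
  obtain ⟨c, hc, rfl⟩ := exists_eq_mul_of_isHomogeneous (n := 1) ha (isHomogeneous_linForm u) hdvd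
  obtain ⟨m, rfl⟩ := exists_eq_linForm hc
  exact ⟨m, rfl⟩

/-- The matrix of the coefficients of such linear forms is skew-symmetric of odd size. -/
theorem not_linearIndependent_of_sum_linForm_mul_X_eq_zero [NeZero (2 : K)]
    (hσ : Odd (Fintype.card σ)) {m : σ → σ → K} (h : ∑ k, linForm (m k) * X k = 0) :
    ¬ LinearIndependent K m := by
  classical
  have hskew : (Matrix.of m).transpose = -Matrix.of m := by
    ext i j
    have hpd : linForm (fun k => m k i) + linForm (m i) = 0 := by
      have := congrArg (pderiv i) h
      simp only [map_sum, Derivation.leibniz, pderiv_linForm, pderiv_X, Pi.single_apply,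
        smul_eq_mul, mul_ite, mul_one, mul_zero, Finset.sum_add_distrib, Finset.sum_ite_eq',
        Finset.mem_univ, if_true, map_zero] at this
      simpa only [add_comm, linForm, smul_eq_C_mul, mul_comm] using this
    rw [← linForm_add, linForm_eq_zero_iff] at hpd
    exact eq_neg_of_add_eq_zero_left (congrFun hpd j)
  have hdet : (Matrix.of m).det = 0 := by
    have := congrArg Matrix.det hskew
    rw [Matrix.det_transpose, Matrix.det_neg, hσ.neg_one_pow, neg_one_mul, eq_neg_iff_add_eq_zero,
      ← two_mul] at this
    exact (mul_eq_zero.1 this).resolve_left two_ne_zero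
  intro hli
  have hunit := (Matrix.isUnit_iff_isUnit_det _).1
    (Matrix.linearIndependent_rows_iff_isUnit (A := Matrix.of m).1 hli)
  exact hunit.ne_zero hdet

theorem not_linearIndependent_of_forall_eq_mul_linForm [NeZero (2 : K)]
    (hσ : Odd (Fintype.card σ)) {l : MvPolynomial σ K} (hl : l ≠ 0) {a : σ → MvPolynomial σ K}
    (ha : ∀ k, ∃ m, a k = l * linForm m) (h : ∑ k, a k * X k = 0) :
    ¬ LinearIndependent K a := by
  choose m hm using ha
  obtain rfl : a = fun k => l * linForm (m k) := funext hm
  refine fun hli => not_linearIndependent_of_sum_linForm_mul_X_eq_zero hσ (mul_left_cancel₀ hl ?_)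
    (linearIndependent_of_mul_linForm hli)
  simp only [Finset.mul_sum, ← mul_assoc, h, mul_zero]

end Forms

section FormsThrough

variable {C : SmoothPlaneQuartic}

theorem linearIndependent_rep {p q : C.Point} (h : p ≠ q) :
    LinearIndependent ℂ ![p.1.rep, q.1.rep] := by
  have := Projectivization.independent_iff.1
    ((Projectivization.independent_pair_iff_ne p.1 q.1).2 (Subtype.coe_injective.ne h))
  convert! this using 1
  ext i
  fin_cases i <;> rfl

/-- The forms of degree `n` that vanish at the points of `E` on `C`, with multiplicities. -/
def formsThrough (n : ℕ) (E : Multiset C.Point) : Submodule ℂ CoordRing :=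
  homogeneousSubmodule (Fin 3) ℂ n ⊓
    (C.linSys ((fun p => n * C.hyp p) - ⇑(ofMultiset E))).comap C.ev.toLinearMap

variable {n : ℕ} {E S T : Multiset C.Point} {a : CoordRing}

theorem mem_formsThrough : a ∈ formsThrough n E ↔
    a.IsHomogeneous n ∧ ∀ p, C.ev a = 0 ∨ ofMultiset E p ≤ formOrd p n (C.ev a) := by
  refine and_congr Iff.rfl (mem_linSys.trans (forall_congr' fun p => or_congr Iff.rfl ?_))
  rw [AlgHom.toLinearMap_apply, formOrd_eq, Pi.sub_apply, ← add_sub_assoc, sub_nonneg]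

theorem formsThrough_anti (h : S ≤ T) : formsThrough n T ≤ formsThrough n S := by
  obtain ⟨F, rfl⟩ := Multiset.le_iff_exists_add.1 h
  refine inf_le_inf_left _ (Submodule.comap_mono (linSys_mono fun p => ?_))
  have := ofMultiset_nonneg F p
  simp only [Pi.sub_apply, map_add, Finsupp.add_apply]
  omega

theorem eval_eq_zero_of_mem_formsThrough (ha : a ∈ formsThrough n E) {p : C.Point} (hp : p ∈ E) :
    eval p.1.rep a = 0 := by
  classical
  by_contra hne
  obtain ⟨hhom, h⟩ := mem_formsThrough.1 ha
  have h0 : C.ev a ≠ 0 := ev_ne_zero_of_eval_ne_zero p hhom hne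
  have hle := (h p).resolve_left h0
  rw [(formOrd_eq_zero_iff p hhom h0).2 hne, ofMultiset_apply] at hle
  have := Multiset.count_pos.2 hp
  omega

theorem exists_mem_formsThrough_ev_eq {f : C.FunctionField}
    (hf : f ∈ C.linSys ((fun p => n * C.hyp p) - ⇑(ofMultiset E))) :
    ∃ a ∈ formsThrough n E, C.ev a = f := by
  have hmem : f ∈ C.formSpace n := by
    rw [formSpace_eq_linSys]
    refine linSys_mono (fun p => ?_) hf
    exact sub_le_self _ (ofMultiset_nonneg E p)
  obtain ⟨a, ha, rfl⟩ := hmem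
  exact ⟨a, ⟨ha, hf⟩, rfl⟩

/-- Two points, possibly infinitely near, impose independent conditions on lines. -/
theorem not_linearIndependent_of_mem_formsThrough (hE : E.card = 2) {u u' : Fin 3 → ℂ}
    (h : linForm u ∈ formsThrough 1 E) (h' : linForm u' ∈ formsThrough 1 E) :
    ¬ LinearIndependent ℂ ![u, u'] := by
  intro hli
  obtain ⟨r, s, rfl⟩ := Multiset.card_eq_two.1 hE
  have hr {w : Fin 3 → ℂ} (hw : linForm w ∈ formsThrough 1 {r, s}) : w ⬝ᵥ r.1.rep = 0 := by
    rw [← eval_linForm]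
    exact eval_eq_zero_of_mem_formsThrough hw (Multiset.mem_cons_self r {s})
  obtain ⟨w, hw0, hwr, hw⟩ := exists_linForm_formOrd_eq_single s r
  obtain ⟨α, β, rfl⟩ :=
    exists_eq_add_of_dotProduct_eq_zero r.1.rep_nonzero hli (hr h) (hr h') hwr
  have hmem : linForm (α • u + β • u') ∈ formsThrough 1 {r, s} := by
    rw [linForm_add, linForm_smul, linForm_smul]
    exact add_mem (Submodule.smul_mem _ _ h) (Submodule.smul_mem _ _ h')
  have hle := ((mem_formsThrough.1 hmem).2 s).resolve_left (ev_linForm_ne_zero hw0)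
  rw [hw, Multiset.insert_eq_cons, ofMultiset_cons, ofMultiset_singleton, Finsupp.add_apply,
    Finsupp.single_eq_same] at hle
  omega

theorem exists_eq_linForm_mul_of_mem_formsThrough {u : Fin 3 → ℂ} (hu : u ≠ 0) (hS : S.card = 2)
    {p : C.Point} (hnodup : (p ::ₘ S).Nodup) (hline : ∀ z ∈ p ::ₘ S, u ⬝ᵥ z.1.rep = 0)
    (ha : a ∈ formsThrough 2 S) (hp : eval p.1.rep a = 0) :
    ∃ m, a = linForm u * linForm m := by
  obtain ⟨q, r, rfl⟩ := Multiset.card_eq_two.1 hS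
  simp only [Multiset.insert_eq_cons, Multiset.nodup_cons, Multiset.mem_cons,
    Multiset.mem_singleton, not_or] at hnodup hline
  exact exists_eq_linForm_mul_linForm hu (linearIndependent_rep hnodup.1.1)
    (linearIndependent_rep hnodup.1.2) (linearIndependent_rep hnodup.2.1)
    (hline p (.inl rfl)) (hline q (.inr (.inl rfl))) (hline r (.inr (.inr rfl))) ha.1 hp
    (eval_eq_zero_of_mem_formsThrough ha (by simp)) (eval_eq_zero_of_mem_formsThrough ha (by simp))

theorem linForm_mem_formsThrough_of_mul {u m : Fin 3 → ℂ} (hu : u ≠ 0)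
    (hl : ∀ z, ofMultiset (T + S) z = formOrd z 1 (C.ev (linForm u))) (hET : Disjoint E T)
    (h : linForm u * linForm m ∈ formsThrough 2 (S + E)) : linForm m ∈ formsThrough 1 E := by
  classical
  refine mem_formsThrough.2 ⟨isHomogeneous_linForm m, fun z => or_iff_not_imp_left.2 fun hm => ?_⟩
  have hl0 := ev_linForm_ne_zero (C := C) hu
  have hle := ((mem_formsThrough.1 h).2 z).resolve_left (by rw [map_mul]; exact mul_ne_zero hl0 hm)
  rw [map_mul, formOrd_mul z (m := 1) (n := 1) hl0 hm, ← hl, map_add, map_add, Finsupp.add_apply,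
    Finsupp.add_apply, ofMultiset_apply T] at hle
  by_cases hz : z ∈ T
  · rw [ofMultiset_apply, Multiset.count_eq_zero.2 fun hzE => Multiset.disjoint_left.1 hET hzE hz]
    exact formOrd_nonneg z (isHomogeneous_linForm m) hm
  · rw [Multiset.count_eq_zero.2 hz] at hle
    omega

theorem not_linearIndependent_of_mem_formsThrough_two {u : Fin 3 → ℂ} (hu : u ≠ 0) {p : C.Point}
    (hp : p ∈ T) (hS : S.card = 2) (hnodup : (T + S).Nodup)
    (hl : ∀ z, ofMultiset (T + S) z = formOrd z 1 (C.ev (linForm u))) (hE : E.card = 2)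
    {a : Fin 3 → CoordRing} (ha : ∀ k, a k ∈ formsThrough 2 (S + E))
    (hrel : ∑ k, a k * X k = 0) : ¬ LinearIndependent ℂ a := by
  have hline : ∀ z ∈ T + S, u ⬝ᵥ z.1.rep = 0 := fun z hz => by
    rw [← eval_linForm]
    exact eval_eq_zero_of_mem_formsThrough
      (mem_formsThrough.2 ⟨isHomogeneous_linForm u, fun z => .inr (hl z).le⟩) hz
  have hdiv {z : C.Point} (hz : z ∈ T) {b : CoordRing} (hb : b ∈ formsThrough 2 (S + E))
      (hbz : eval z.1.rep b = 0) : ∃ m, b = linForm u * linForm m := by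
    have hle : z ::ₘ S ≤ T + S := by
      rw [← Multiset.singleton_add]
      exact add_le_add_left (Multiset.singleton_le.2 hz) S
    exact exists_eq_linForm_mul_of_mem_formsThrough hu hS (Multiset.nodup_of_le hle hnodup)
      (fun y hy => hline y (Multiset.mem_of_le hle hy))
      (formsThrough_anti (Multiset.le_add_right S E) hb) hbz
  by_cases hET : Disjoint E T
  · intro hli
    obtain ⟨c, c', hcc, hc, hc'⟩ :=
      exists_linearIndependent_pair_dotProduct_eq_zero fun k => eval p.1.rep (a k)
    have hconic {d : Fin 3 → ℂ} (hd : (fun k => eval p.1.rep (a k)) ⬝ᵥ d = 0) :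
        ∃ m, Fintype.linearCombination ℂ a d = linForm u * linForm m ∧
          linForm m ∈ formsThrough 1 E := by
      have hmem : Fintype.linearCombination ℂ a d ∈ formsThrough 2 (S + E) :=
        sum_mem fun k _ => Submodule.smul_mem _ _ (ha k)
      obtain ⟨m, hm⟩ := hdiv hp hmem <| Eq.trans (by
        simp [Fintype.linearCombination_apply, dotProduct, smul_eval, mul_comm]) hd
      exact ⟨m, hm, linForm_mem_formsThrough_of_mul hu hl hET (hm ▸ hmem)⟩
    obtain ⟨m, hm, hmE⟩ := hconic hc
    obtain ⟨m', hm', hmE'⟩ := hconic hc'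
    refine not_linearIndependent_of_mem_formsThrough hE hmE hmE'
      (linearIndependent_of_mul_linForm (l := linForm u) ?_)
    have := hcc.map' (Fintype.linearCombination ℂ a)
      (LinearMap.ker_eq_bot.2 hli.fintypeLinearCombination_injective)
    convert! this using 1
    ext1 i
    fin_cases i
    exacts [hm.symm, hm'.symm]
  · obtain ⟨z, hzE, hzT⟩ : ∃ z ∈ E, z ∈ T := by simpa [Multiset.disjoint_left] using hET
    exact not_linearIndependent_of_forall_eq_mul_linForm (by decide) (prime_linForm hu).ne_zero
      (fun k => hdiv hzT (ha k) (eval_eq_zero_of_mem_formsThrough (ha k)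
        (Multiset.mem_add.2 (.inr hzE)))) hrel

end FormsThrough

/-! ### Functions orthogonal to the generic point -/

section Orthogonal

variable {C : SmoothPlaneQuartic}

theorem exists_ne_zero_mem_linSys_sub {ι : Type*} [Fintype ι] {D : C.Point → ℤ}
    {g : ι → C.FunctionField} (hg : ∀ k, g k ∈ C.linSys D) (hli : LinearIndependent ℂ g)
    {E : Multiset C.Point} (hE : E.card < Fintype.card ι) :
    ∃ f ≠ 0, f ∈ C.linSys (D - ⇑(ofMultiset E)) := by
  let U := Submodule.span ℂ (Set.range g)
  have : FiniteDimensional ℂ U := .span_of_finite ℂ (Set.finite_range g)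
  have hU : U ≤ C.linSys D := Submodule.span_le.2 (Set.range_subset_iff.2 hg)
  have hle := finrank_inf_linSys_le U D E
  rw [inf_eq_left.2 hU, finrank_span_eq_card hli] at hle
  obtain ⟨f, hf, hf0⟩ := Submodule.exists_mem_ne_zero_of_ne_bot
    (Submodule.one_le_finrank_iff.1 (by omega :
      1 ≤ Module.finrank ℂ ↥(U ⊓ C.linSys (D - ⇑(ofMultiset E)))))
  exact ⟨f, hf0, hf.2⟩

theorem ev_linForm (u : Fin 3 → ℂ) : C.ev (linForm u) = ∑ j, u j • C.coordQuotient j := by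
  simp only [linForm, map_sum, map_smul, C.ev_X]

theorem ord_ev_linForm (p : C.Point) (u : Fin 3 → ℂ) :
    ord p (C.ev (linForm u)) = formOrd p 1 (C.ev (linForm u)) - C.hyp p := by
  rw [formOrd_eq, Nat.cast_one, one_mul, add_sub_cancel_right]

theorem exists_residual_pair {R : Multiset C.Point} (hR : R.card = 2) :
    ∃ u : Fin 3 → ℂ, u ≠ 0 ∧ ∃ E : Multiset C.Point, E.card = 2 ∧
      ∀ p, ofMultiset (R + E) p = formOrd p 1 (C.ev (linForm u)) := by
  have hmem : ∀ k, C.coordQuotient k ∈ C.linSys fun p => (1 : ℕ) * C.hyp p := fun k => by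
    rw [← formSpace_eq_linSys]
    exact ⟨X k, isHomogeneous_X ℂ k, C.ev_X k⟩
  have hli : LinearIndependent ℂ C.coordQuotient := by
    refine Fintype.linearIndependent_iff.2 fun u hu => ?_
    rw [← ev_linForm] at hu
    exact congrFun (not_imp_not.1 ev_linForm_ne_zero hu)
  obtain ⟨f, hf0, hf⟩ := exists_ne_zero_mem_linSys_sub hmem hli (E := R) (by simp [hR])
  obtain ⟨a, ha, rfl⟩ := exists_mem_formsThrough_ev_eq hf
  obtain ⟨u, rfl⟩ := exists_eq_linForm ha.1
  have hu : u ≠ 0 := by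
    rintro rfl
    simp [linForm] at hf0
  obtain ⟨F, hF⟩ := exists_divisor_of_form (isHomogeneous_linForm u) hf0
  obtain ⟨E, rfl⟩ : ∃ E, F = R + E := by
    classical
    refine Multiset.le_iff_exists_add.1 (Multiset.le_iff_count.2 fun p => ?_)
    have hle := ((mem_formsThrough.1 ha).2 p).resolve_left hf0
    rw [← hF, ofMultiset_apply, ofMultiset_apply] at hle
    exact_mod_cast hle
  refine ⟨u, hu, E, ?_, hF⟩
  have hcard := card_of_linForm hu hF
  rw [Multiset.card_add] at hcard
  omega

theorem exists_ofMultiset_eq_ord_add {D : C.Divisor} {f : C.FunctionField} (hf : f ∈ C.linSys D)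
    (h0 : f ≠ 0) : ∃ R : Multiset C.Point, (R.card : ℤ) = deg D ∧
      ∀ p, ofMultiset R p = ord p f + D p := by
  obtain ⟨F, hF, hdeg⟩ := exists_principal_divisor h0
  obtain ⟨R, hR⟩ := exists_eq_ofMultiset (D := F + D) fun p => by
    rw [Finsupp.add_apply, hF]
    exact (mem_linSys.1 hf p).resolve_left h0
  refine ⟨R, ?_, fun p => ?_⟩
  · rw [← deg_ofMultiset, ← hR, map_add, hdeg, zero_add]
  · rw [← hR, Finsupp.add_apply, hF]

/-- Write `T + S` for the section of `C` by the line `u`. The zeros of `f` away from `T` form a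
pair `R`, a line `u'` through `R` cuts out `R + E`, and the multiplier is `u u' / f`. -/
theorem exists_mul_mem_linSys {u : Fin 3 → ℂ} (hu : u ≠ 0) {S T : Multiset C.Point}
    (hT : T.card = 2) (hl : ∀ z, ofMultiset (T + S) z = formOrd z 1 (C.ev (linForm u)))
    {D : C.Divisor} (hD : deg D = 0) {f : C.FunctionField} (hf0 : f ≠ 0)
    (hf : f ∈ C.linSys (C.hyp - ⇑D - ⇑(ofMultiset T))) :
    ∃ φ : C.FunctionField, φ ≠ 0 ∧ ∃ E : Multiset C.Point, E.card = 2 ∧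
      ∀ h ∈ C.linSys (C.hyp - ⇑D),
        h * φ ∈ C.linSys ((fun p => (2 : ℕ) * C.hyp p) - ⇑(ofMultiset (S + E))) := by
  obtain ⟨H, hH, hdegH⟩ := exists_hyp_divisor (C := C)
  obtain ⟨R, hRcard, hR⟩ := exists_ofMultiset_eq_ord_add (D := H - D - ofMultiset T)
    (by rwa [Finsupp.coe_sub, Finsupp.coe_sub, hH]) hf0
  rw [map_sub, map_sub, hdegH, hD, deg_ofMultiset, hT] at hRcard
  obtain ⟨u', hu', E, hE, hl'⟩ := exists_residual_pair (R := R) (by omega)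
  have hlu := ev_linForm_ne_zero (C := C) hu
  have hlu' := ev_linForm_ne_zero (C := C) hu'
  have hφ := div_ne_zero (mul_ne_zero hlu hlu') hf0
  refine ⟨_, hφ, E, hE, fun h hh => mem_linSys.2 fun p => ?_⟩
  rcases eq_or_ne h 0 with rfl | hh0
  · exact .inl (zero_mul _)
  have hle := (mem_linSys.1 hh p).resolve_left hh0
  have hRp := hR p
  rw [ord_mul p hh0 hφ, ord_div p (mul_ne_zero hlu hlu') hf0, ord_mul p hlu hlu', ord_ev_linForm,
    ord_ev_linForm, ← hl, ← hl']
  simp only [map_add, Finsupp.add_apply, Finsupp.sub_apply, Pi.sub_apply, hH] at hle hRp ⊢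
  push_cast
  right
  linarith

theorem not_linearIndependent_of_mem_linSys {D : C.Divisor} (hD : deg D = 0)
    {g : Fin 3 → C.FunctionField} (hg : ∀ k, g k ∈ C.linSys (C.hyp - ⇑D))
    (hrel : ∑ k, g k * C.coordQuotient k = 0) : ¬ LinearIndependent ℂ g := by
  intro hli
  obtain ⟨u, F, hu, hnodup, hcard, hl⟩ := exists_line_nodup (C := C)
  obtain ⟨T, hTF⟩ : ∃ T, T ∈ F.powersetCard 2 := Multiset.card_pos_iff_exists_mem.1 <| by
    rw [Multiset.card_powersetCard, hcard]
    decide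
  obtain ⟨hTF, hT⟩ := Multiset.mem_powersetCard.1 hTF
  obtain ⟨S, rfl⟩ := Multiset.le_iff_exists_add.1 hTF
  rw [Multiset.card_add] at hcard
  obtain ⟨f, hf0, hf⟩ := exists_ne_zero_mem_linSys_sub hg hli (E := T) (by simp [hT])
  obtain ⟨φ, hφ, E, hE, hmul⟩ := exists_mul_mem_linSys hu hT hl hD hf0 hf
  choose a ha hga using fun k => exists_mem_formsThrough_ev_eq (hmul _ (hg k))
  obtain ⟨p, hp⟩ := Multiset.card_pos_iff_exists_mem.1 (hT ▸ two_pos)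
  refine not_linearIndependent_of_mem_formsThrough_two hu hp (by omega) hnodup hl hE ha ?_ ?_
  · have hhom : (∑ k, a k * X k).IsHomogeneous 3 :=
      IsHomogeneous.sum _ _ _ fun k _ => (ha k).1.mul (isHomogeneous_X ℂ k)
    by_contra hne
    refine ev_ne_zero_of_lt (C := C) hhom hne (by norm_num) ?_
    simp only [map_sum, map_mul, hga, C.ev_X, mul_right_comm _ φ, ← Finset.sum_mul, hrel, zero_mul]
  · have := hli.map' (LinearMap.mulRight ℂ φ) (LinearMap.ker_eq_bot.2 (mul_left_injective₀ hφ))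
    exact .of_comp C.ev.toLinearMap ((funext hga : ⇑C.ev.toLinearMap ∘ a = _) ▸ this)

end Orthogonal

/-! ### Sections of the twisted tangent bundle -/

theorem derivation_aeval {R A M σ : Type*} [CommSemiring R] [CommSemiring A] [AddCommMonoid M]
    [Algebra R A] [Module R M] [Module A M] [Fintype σ] (δ : Derivation R A M) (f : σ → A)
    (a : MvPolynomial σ R) : δ (aeval f a) = ∑ i, aeval f (pderiv i a) • δ (f i) := by
  classical
  induction a using MvPolynomial.induction_on with
  | C c => simp
  | add a b ha hb => simp only [map_add, ha, hb, add_smul, Finset.sum_add_distrib]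
  | mul_X a j ha =>
    simp only [map_mul, aeval_X, Derivation.leibniz, ha, smul_eq_mul, pderiv_X, map_add, add_smul,
      Finset.sum_add_distrib, Finset.smul_sum, smul_smul]
    congr 1
    rw [Finset.sum_eq_single j (fun i _ hi => by simp [hi.symm]) (by simp)]
    simp

section Tangent

variable {C : SmoothPlaneQuartic}

theorem coordQuotient_div_mem_localRing (p : C.Point) (j : Fin 3) :
    C.coordQuotient j / C.coordQuotient (chart p) ∈ C.localRing p := by
  have h := affineEval_mem_localRing p (X j)
  rwa [affineEval, aeval_X] at h

theorem hyperplaneBundle_eq_smul_one (p : C.Point) :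
    C.hyperplaneBundle p = C.coordQuotient (chart p) • 1 := by
  rw [← span_singleton_eq_smul_one]
  refine le_antisymm (Submodule.span_le.2 ?_)
    ((Submodule.span_singleton_le_iff_mem _ _).2 (Submodule.subset_span ⟨_, rfl⟩))
  rintro _ ⟨j, rfl⟩
  exact Submodule.mem_span_singleton.2 ⟨⟨_, coordQuotient_div_mem_localRing p j⟩,
    div_mul_cancel₀ _ (coordQuotient_ne_zero _)⟩

theorem mem_planeTangentTwist_twist_iff (D : C.Divisor) (p : C.Point) (δ : C.GenericTangent) :
    δ ∈ (C.planeTangentTwist.twist (C.lineBundle D).dual) p ↔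
      (C.coordQuotient (chart p) * unif p ^ (-D p)) • δ ∈ C.planeTangent p := by
  change δ ∈ (1 / C.maxIdealPow p (-D p)) • ((1 / C.hyperplaneBundle p) • C.planeTangent p) ↔ _
  have hunif := zpow_ne_zero (-D p) (unif_ne_zero p)
  have hcoord := coordQuotient_ne_zero (C := C) (chart p)
  rw [maxIdealPow_eq_smul_one, hyperplaneBundle_eq_smul_one, one_div_smul_one p hunif,
    one_div_smul_one p hcoord, smul_submodule_smul, smul_submodule_smul, Submodule.one_smul,
    Submodule.one_smul, mem_smul_submodule_iff _ (inv_ne_zero hunif),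
    mem_smul_submodule_iff _ (inv_ne_zero hcoord), inv_inv, inv_inv, smul_smul]

theorem X_chart_mem (p : C.Point) :
    (X (chart p) : CoordRing) ∈ (RingHom.ker (eval p.1.rep : CoordRing →+* ℂ)).primeCompl := by
  intro h
  have hX := RingHom.mem_ker.1 h
  rw [eval_X] at hX
  exact rep_chart_ne_zero p hX

/-- The map `𝒪_{ℙ²,p} → 𝒪_{ℙ²,C}` as a map of `ℂ`-algebras. -/
def planeGeneralizeHom (p : C.Point) : C.PlaneLocalRing p →ₐ[ℂ] C.PlaneGenericRing where
  __ := C.planeGeneralize p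
  commutes' _ := rfl

theorem planeGeneralize_aeval (p : C.Point) (a : CoordRing) :
    C.planeGeneralize p (aeval (coordRatio (X_chart_mem p)) a) =
      aeval (coordRatio (C.X_mem_generic (chart p))) a :=
  comp_aeval_apply _ (planeGeneralizeHom p) a

theorem residueHom_coordRatio (i j : Fin 3) :
    C.residueHom (coordRatio (C.X_mem_generic i) j) = C.coordQuotient j / C.coordQuotient i := by
  rw [← C.ev_X, ← C.ev_X]
  exact C.residueHom_formFrac (isHomogeneous_X ℂ j) (isHomogeneous_X ℂ i) (C.X_mem_generic i)

theorem residueHom_aeval_coordRatio (i : Fin 3) (a : CoordRing) :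
    C.residueHom (aeval (coordRatio (C.X_mem_generic i)) a) = C.affineEval i a := by
  rw [comp_aeval_apply, affineEval]
  simp only [residueHom_coordRatio]

theorem smul_eq_residueHom_mul (z : C.PlaneGenericRing) (f : C.FunctionField) :
    z • f = C.residueHom z * f := rfl

theorem derivation_aeval_coordRatio (δ : C.GenericTangent) (i : Fin 3) (a : CoordRing) :
    δ (aeval (coordRatio (C.X_mem_generic i)) a) =
      ∑ j, C.affineEval i (pderiv j a) * δ (coordRatio (C.X_mem_generic i) j) := by
  simp only [derivation_aeval, smul_eq_residueHom_mul, residueHom_aeval_coordRatio]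

theorem affineEval_mul_derivation (δ : C.GenericTangent) (i : Fin 3) {a b : CoordRing}
    {z : C.PlaneGenericRing} (h : z * aeval (coordRatio (C.X_mem_generic i)) b =
      aeval (coordRatio (C.X_mem_generic i)) a) :
    C.affineEval i b * δ z = δ (aeval (coordRatio (C.X_mem_generic i)) a) -
      C.residueHom z * δ (aeval (coordRatio (C.X_mem_generic i)) b) := by
  rw [← h, Derivation.leibniz, smul_eq_residueHom_mul, smul_eq_residueHom_mul,
    residueHom_aeval_coordRatio, add_sub_cancel_left]

theorem mem_planeTangent_iff (p : C.Point) (δ : C.GenericTangent) : δ ∈ C.planeTangent p ↔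
    ∀ j, δ (coordRatio (C.X_mem_generic (chart p)) j) ∈ C.localRing p := by
  refine ⟨fun h j => h (coordRatio (X_chart_mem p) j), fun h z => ?_⟩
  have hpoly (a : CoordRing) :
      δ (aeval (coordRatio (C.X_mem_generic (chart p))) a) ∈ C.localRing p := by
    rw [derivation_aeval_coordRatio]
    exact sum_mem fun j _ => mul_mem (affineEval_mem_localRing p _) (h j)
  have hz : C.residueHom (C.planeGeneralize p z) ∈ C.localRing p := ⟨z, rfl⟩
  obtain ⟨n, a, b, ha, hb, hM, rfl⟩ := exists_eq_formFrac z
  have hfrac := congrArg (C.planeGeneralize p) (formFrac_mul_aeval (X_chart_mem p) ha hb hM)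
  rw [map_mul, planeGeneralize_aeval, planeGeneralize_aeval] at hfrac
  have hmul := affineEval_mul_derivation δ (chart p) hfrac
  have hunit : IsUnit (affineEvalLocal p b) :=
    (isUnit_affineEvalLocal_iff p b).2 fun h0 => hM ((eval_normRep_eq_zero_iff p hb).1 h0)
  obtain ⟨c, hc⟩ := hunit.exists_left_inv
  have hc' : (c : C.FunctionField) * C.affineEval (chart p) b = 1 := congrArg Subtype.val hc
  rw [← one_mul (δ _), ← hc', mul_assoc, hmul]
  exact mul_mem c.2 (sub_mem (hpoly a) (mul_mem hz (hpoly b)))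

/-- The derivatives of the affine coordinates `x_j / x_0`. -/
def affineDeriv (δ : C.GenericTangent) (j : Fin 3) : C.FunctionField :=
  δ (coordRatio (C.X_mem_generic 0) j)

/-- The coordinates `(y ∧ a)_{ij}` of the section of `T_{ℙ²}(-1) ⊂ ⋀² ℂ³ ⊗ 𝒪(1)` given by a
derivation, where `y` is the generic point and `a` the vector of the derivatives of its
coordinates. -/
def wedge (δ : C.GenericTangent) (i j : Fin 3) : C.FunctionField :=
  C.coordQuotient i * affineDeriv δ j - C.coordQuotient j * affineDeriv δ i

theorem wedge_smul (f : C.FunctionField) (δ : C.GenericTangent) (i j : Fin 3) :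
    wedge (f • δ) i j = f * wedge δ i j := by
  simp only [wedge, affineDeriv, Derivation.smul_apply, smul_eq_mul]
  ring

theorem coordRatio_mul (i j : Fin 3) : coordRatio (C.X_mem_generic i) j *
    coordRatio (C.X_mem_generic 0) i = coordRatio (C.X_mem_generic 0) j := by
  have h := formFrac_mul_aeval (C.X_mem_generic 0) (isHomogeneous_X ℂ j) (isHomogeneous_X ℂ i)
    (C.X_mem_generic i)
  rwa [aeval_X, aeval_X] at h

theorem derivation_coordRatio (δ : C.GenericTangent) (i j : Fin 3) :
    δ (coordRatio (C.X_mem_generic i) j) = wedge δ i j / C.coordQuotient i ^ 2 := by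
  have h := congrArg δ (coordRatio_mul (C := C) i j)
  rw [Derivation.leibniz, smul_eq_residueHom_mul, smul_eq_residueHom_mul, residueHom_coordRatio,
    residueHom_coordRatio, coordQuotient_zero, div_one] at h
  have hi := coordQuotient_ne_zero (C := C) i
  rw [wedge, affineDeriv, affineDeriv, ← h, eq_div_iff (pow_ne_zero 2 hi)]
  field_simp
  ring

theorem mem_stalk_iff (D : C.Divisor) (p : C.Point) (δ : C.GenericTangent) :
    δ ∈ (C.planeTangentTwist.twist (C.lineBundle D).dual) p ↔
      ∀ j, wedge δ (chart p) j ∈ C.maxIdealPow p (D p - C.hyp p) := by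
  rw [mem_planeTangentTwist_twist_iff, mem_planeTangent_iff]
  refine forall_congr' fun j => ?_
  have hcoord := coordQuotient_ne_zero (C := C) (chart p)
  rw [Derivation.smul_apply, derivation_coordRatio, smul_eq_mul, mem_maxIdealPow_iff]
  by_cases h0 : wedge δ (chart p) j = 0
  · simp [h0]
  · have hquot : C.coordQuotient (chart p) * unif p ^ (-D p) *
        (wedge δ (chart p) j / C.coordQuotient (chart p) ^ 2) =
        wedge δ (chart p) j / C.coordQuotient (chart p) * unif p ^ (-D p) := by
      field_simp
    rw [hquot, mul_zpow_mem_localRing_iff p (div_ne_zero h0 hcoord), ord_div p h0 hcoord,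
      or_iff_right h0, hyp]
    constructor <;> intro h <;> linarith

theorem wedge_eq (δ : C.GenericTangent) (k i j : Fin 3) : wedge δ i j =
    C.coordQuotient i / C.coordQuotient k * wedge δ k j -
      C.coordQuotient j / C.coordQuotient k * wedge δ k i := by
  have hk := coordQuotient_ne_zero (C := C) k
  simp only [wedge]
  field_simp
  ring

theorem mem_globalSections_iff (D : C.Divisor) (δ : C.GenericTangent) :
    δ ∈ (C.planeTangentTwist.twist (C.lineBundle D).dual).globalSections ↔
      ∀ i j, wedge δ i j ∈ C.linSys (C.hyp - ⇑D) := by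
  simp only [SubSheaf.globalSections, linSys, Submodule.mem_iInf, Submodule.restrictScalars_mem,
    mem_stalk_iff, Pi.sub_apply, neg_sub]
  refine ⟨fun h i j p => ?_, fun h p j => h _ j p⟩
  rw [wedge_eq δ (chart p)]
  exact sub_mem (Submodule.smul_mem _ ⟨_, coordQuotient_div_mem_localRing p i⟩ (h p j))
    (Submodule.smul_mem _ ⟨_, coordQuotient_div_mem_localRing p j⟩ (h p i))

theorem affineDeriv_zero (δ : C.GenericTangent) : affineDeriv δ 0 = 0 := by
  have hself : coordRatio (C.X_mem_generic 0) 0 = 1 := by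
    apply HomogeneousLocalization.val_injective
    rw [HomogeneousLocalization.val_one]
    exact Localization.mk_self (⟨X 0, C.X_mem_generic 0⟩ : (Ideal.span {C.poly}).primeCompl)
  rw [affineDeriv, hself, Derivation.map_one_eq_zero]

theorem eq_of_affineDeriv_eq {δ δ' : C.GenericTangent}
    (h : ∀ j, affineDeriv δ j = affineDeriv δ' j) : δ = δ' := by
  have hpoly (a : CoordRing) : (δ - δ') (aeval (coordRatio (C.X_mem_generic 0)) a) = 0 := by
    rw [derivation_aeval_coordRatio]
    exact Finset.sum_eq_zero fun j _ => mul_eq_zero_of_right _ (sub_eq_zero.2 (h j))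
  rw [← sub_eq_zero]
  ext z
  obtain ⟨n, a, b, ha, hb, hM, rfl⟩ := exists_eq_formFrac z
  have hmul :=
    affineEval_mul_derivation (δ - δ') 0 (formFrac_mul_aeval (C.X_mem_generic 0) ha hb hM)
  rw [hpoly, hpoly, mul_zero, sub_zero] at hmul
  exact (mul_eq_zero.1 hmul).resolve_left
    (affineEval_ne_zero 0 hb (C.ev_ne_zero_of_mem_primeCompl hb hM))

end Tangent

/-! ### The sections given by the points of the plane -/

/-- The derivative of polynomials in the constant direction `v`. -/
def dirDeriv {R σ : Type*} [CommSemiring R] (v : σ → R) :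
    Derivation R (MvPolynomial σ R) (MvPolynomial σ R) :=
  mkDerivation R fun i => MvPolynomial.C (v i)

section ConstDerivation

variable {C : SmoothPlaneQuartic}

/-- The derivative of `a / b` in the direction `v`, restricted to `C`. -/
def quotDeriv (C : SmoothPlaneQuartic) (v : Fin 3 → ℂ) (a b : CoordRing) : C.FunctionField :=
  (C.ev b * C.ev (dirDeriv v a) - C.ev a * C.ev (dirDeriv v b)) / C.ev b ^ 2

theorem quotDeriv_congr (v : Fin 3 → ℂ) {n m : ℕ} {a b a' b' : CoordRing}
    (ha : a.IsHomogeneous n) (hb : b.IsHomogeneous n)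
    (hM : b ∈ (Ideal.span {C.poly}).primeCompl) (ha' : a'.IsHomogeneous m)
    (hb' : b'.IsHomogeneous m) (hM' : b' ∈ (Ideal.span {C.poly}).primeCompl)
    (h : formFrac ha hb hM = formFrac ha' hb' hM') : C.quotDeriv v a b = C.quotDeriv v a' b' := by
  have hval := congrArg HomogeneousLocalization.val h
  rw [val_formFrac, val_formFrac, Localization.mk_eq_mk_iff, Localization.r_iff_exists] at hval
  obtain ⟨c, hc⟩ := hval
  have hc0 : (c : CoordRing) ≠ 0 := fun h0 => c.2 (h0 ▸ zero_mem _)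
  have hcross : b' * a = b * a' := mul_left_cancel₀ hc0 hc
  have hev := congrArg C.ev hcross
  have hderiv := congrArg (fun x => C.ev (dirDeriv v x)) hcross
  simp only [Derivation.leibniz, smul_eq_mul, map_add, map_mul] at hev hderiv
  rw [quotDeriv, quotDeriv, div_eq_div_iff (pow_ne_zero 2 (C.ev_ne_zero_of_mem_primeCompl hb hM))
    (pow_ne_zero 2 (C.ev_ne_zero_of_mem_primeCompl hb' hM'))]
  linear_combination (C.ev b * C.ev b') * hderiv -
    (C.ev b' * C.ev (dirDeriv v b) + C.ev b * C.ev (dirDeriv v b')) * hev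

/-- The derivative in the direction `v` on `𝒪_{ℙ²,C}`, a homogeneous localization being a quotient
of the set of fractions of forms of the same degree. -/
def quotDerivFun (v : Fin 3 → ℂ) (z : C.PlaneGenericRing) : C.FunctionField :=
  Quotient.lift (fun c => C.quotDeriv v c.num c.den)
    (fun c c' h => quotDeriv_congr v c.num.2 c.den.2 c.den_mem c'.num.2 c'.den.2 c'.den_mem
      (HomogeneousLocalization.val_injective _ h)) z

theorem quotDerivFun_formFrac (v : Fin 3 → ℂ) {n : ℕ} {a b : CoordRing} (ha : a.IsHomogeneous n)
    (hb : b.IsHomogeneous n) (hM : b ∈ (Ideal.span {C.poly}).primeCompl) :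
    quotDerivFun v (formFrac ha hb hM : C.PlaneGenericRing) = C.quotDeriv v a b := rfl

theorem quotDerivFun_add (v : Fin 3 → ℂ) (z w : C.PlaneGenericRing) :
    quotDerivFun v (z + w) = quotDerivFun v z + quotDerivFun v w := by
  obtain ⟨n, a, b, ha, hb, hM, rfl⟩ := exists_eq_formFrac z
  obtain ⟨m, a', b', ha', hb', hM', rfl⟩ := exists_eq_formFrac w
  have hev := C.ev_ne_zero_of_mem_primeCompl hb hM
  have hev' := C.ev_ne_zero_of_mem_primeCompl hb' hM'
  rw [formFrac_add, quotDerivFun_formFrac, quotDerivFun_formFrac, quotDerivFun_formFrac]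
  simp only [quotDeriv, Derivation.leibniz, smul_eq_mul, map_add, map_mul]
  field_simp
  ring

theorem quotDerivFun_smul (v : Fin 3 → ℂ) (c : ℂ) (z : C.PlaneGenericRing) :
    quotDerivFun v (c • z) = c • quotDerivFun v z := by
  obtain ⟨n, a, b, ha, hb, hM, rfl⟩ := exists_eq_formFrac z
  rw [formFrac_smul, quotDerivFun_formFrac, quotDerivFun_formFrac, quotDeriv, quotDeriv,
    ← smul_div_assoc, smul_sub, Derivation.map_smul, map_smul, map_smul, mul_smul_comm,
    smul_mul_assoc]

theorem quotDerivFun_mul (v : Fin 3 → ℂ) (z w : C.PlaneGenericRing) :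
    quotDerivFun v (z * w) = z • quotDerivFun v w + w • quotDerivFun v z := by
  obtain ⟨n, a, b, ha, hb, hM, rfl⟩ := exists_eq_formFrac z
  obtain ⟨m, a', b', ha', hb', hM', rfl⟩ := exists_eq_formFrac w
  have hev := C.ev_ne_zero_of_mem_primeCompl hb hM
  have hev' := C.ev_ne_zero_of_mem_primeCompl hb' hM'
  rw [smul_eq_residueHom_mul, smul_eq_residueHom_mul, C.residueHom_formFrac,
    C.residueHom_formFrac, formFrac_mul, quotDerivFun_formFrac, quotDerivFun_formFrac,
    quotDerivFun_formFrac]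
  simp only [quotDeriv, Derivation.leibniz, smul_eq_mul, map_add, map_mul]
  field_simp
  ring

/-- The derivation `𝒪_{ℙ²,C} → K` given by the vector field `x_0 ∂_v`: the derivative of a fraction
in the direction `v`, evaluated at the generic point `(1, x_1 / x_0, x_2 / x_0)`. -/
def constDerivation (C : SmoothPlaneQuartic) (v : Fin 3 → ℂ) : C.GenericTangent :=
  Derivation.mk'
    { toFun := quotDerivFun v
      map_add' := quotDerivFun_add v
      map_smul' := quotDerivFun_smul v }
    (quotDerivFun_mul v)

theorem affineDeriv_constDerivation (v : Fin 3 → ℂ) (j : Fin 3) :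
    affineDeriv (C.constDerivation v) j = v j • 1 - v 0 • C.coordQuotient j := by
  have h : affineDeriv (C.constDerivation v) j = C.quotDeriv v (X j) (X 0) := rfl
  have hC (c : ℂ) : C.ev (MvPolynomial.C c) = c • 1 :=
    (aeval_C _ _).trans (Algebra.algebraMap_eq_smul_one c)
  rw [h, quotDeriv, dirDeriv, mkDerivation_X, mkDerivation_X, C.ev_X, C.ev_X, coordQuotient_zero,
    hC, hC, one_mul, one_pow, div_one, mul_smul_comm, mul_one]

theorem wedge_constDerivation (v : Fin 3 → ℂ) (i j : Fin 3) :
    wedge (C.constDerivation v) i j = C.ev (linForm (planeMinor v i j)) := by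
  simp only [wedge, affineDeriv_constDerivation, linForm_planeMinor, map_sub, map_smul, C.ev_X]
  simp only [Algebra.smul_def]
  ring

theorem constDerivation_ne_zero {v : Fin 3 → ℂ} (hv : v ≠ 0) : C.constDerivation v ≠ 0 := by
  intro h
  obtain ⟨j, hj⟩ := Function.ne_iff.1 hv
  obtain ⟨i, hij⟩ := exists_ne j
  have hne : planeMinor v i j ≠ 0 := by
    refine Function.ne_iff.2 ⟨i, ?_⟩
    simpa [planeMinor, Pi.single_eq_of_ne hij] using hj
  apply ev_linForm_ne_zero (C := C) hne
  rw [← wedge_constDerivation, h, ← zero_smul C.FunctionField (0 : C.GenericTangent), wedge_smul,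
    zero_mul]

theorem exists_eq_smul_constDerivation {δ : C.GenericTangent} {v : Fin 3 → ℂ} (hv : v ≠ 0)
    (h : v 0 • wedge δ 1 2 + v 1 • wedge δ 2 0 + v 2 • wedge δ 0 1 = 0) :
    ∃ f : C.FunctionField, δ = f • C.constDerivation v := by
  have hprop : affineDeriv δ 1 * affineDeriv (C.constDerivation v) 2 =
      affineDeriv δ 2 * affineDeriv (C.constDerivation v) 1 := by
    simp only [wedge, affineDeriv_zero, coordQuotient_zero, Algebra.smul_def] at h
    simp only [affineDeriv_constDerivation, Algebra.smul_def]
    linear_combination h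
  have hcross (i j : Fin 3) : affineDeriv δ i * affineDeriv (C.constDerivation v) j =
      affineDeriv δ j * affineDeriv (C.constDerivation v) i := by
    fin_cases i <;> fin_cases j <;>
      simp only [Fin.zero_eta, Fin.mk_one, Fin.reduceFinMk, affineDeriv_zero, zero_mul, mul_zero,
        hprop]
  obtain ⟨k, hk⟩ : ∃ k, affineDeriv (C.constDerivation v) k ≠ 0 := by
    by_contra! hzero
    exact constDerivation_ne_zero hv (eq_of_affineDeriv_eq hzero)
  refine ⟨affineDeriv δ k / affineDeriv (C.constDerivation v) k, eq_of_affineDeriv_eq fun j => ?_⟩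
  change _ = _ * affineDeriv (C.constDerivation v) j
  rw [div_mul_eq_mul_div, eq_div_iff hk, hcross]

end ConstDerivation

/-! ### The difference divisor and the theta divisor -/

section Theta

variable {C : SmoothPlaneQuartic}

theorem picClass_eq_of_ord {D D' : C.Divisor} {f : C.FunctionField} (hf : f ≠ 0)
    (h : ∀ p, D' p = D p - ord p f) : C.picClass D = C.picClass D' := by
  refine Quotient.sound ⟨f, hf, fun p => Submodule.ext fun g => ?_⟩
  rw [mem_smul_submodule_iff f hf, lineBundle, lineBundle, mem_maxIdealPow_iff,
    mem_maxIdealPow_iff, smul_eq_mul]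
  by_cases hg : g = 0
  · simp [hg]
  · have hfg : f⁻¹ * g ≠ 0 := mul_ne_zero (inv_ne_zero hf) hg
    rw [ord_mul p (inv_ne_zero hf) hg, ord_inv, h p, or_iff_right hg, or_iff_right hfg]
    constructor <;> intro <;> linarith

theorem one_le_h0Twist_iff (D : C.Divisor) :
    1 ≤ h0Twist C.planeTangentTwist (C.picClass D) ↔
      ∃ δ : C.GenericTangent, δ ≠ 0 ∧ ∀ i j, wedge δ i j ∈ C.linSys (C.hyp - ⇑D) := by
  have h : h0Twist C.planeTangentTwist (C.picClass D) =
    Module.rank ℂ (C.planeTangentTwist.twist (C.lineBundle D).dual).globalSections := rfl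
  rw [h, Cardinal.one_le_iff_ne_zero, ne_eq, Submodule.rank_eq_zero, ← ne_eq,
    Submodule.ne_bot_iff]
  simp only [mem_globalSections_iff]
  exact exists_congr fun δ => and_comm

theorem wedge_constDerivation_mem_linSys (x y : C.Point) (i j : Fin 3) :
    wedge (C.constDerivation x.1.rep) i j ∈
      C.linSys (C.hyp - ⇑(Finsupp.single x 1 - Finsupp.single y 1 : C.Divisor)) := by
  classical
  rw [mem_linSys, wedge_constDerivation]
  refine fun p => or_iff_not_imp_left.2 fun h0 => ?_
  have hl := isHomogeneous_linForm (planeMinor x.1.rep i j)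
  have hx : (Finsupp.single x 1 : C.Divisor) p ≤
      formOrd p 1 (C.ev (linForm (planeMinor x.1.rep i j))) := by
    rw [Finsupp.single_apply]
    split_ifs with hp
    · subst hp
      exact (formOrd_pos_iff x hl h0).2 (by rw [eval_linForm, planeMinor_dotProduct_self])
    · exact formOrd_nonneg p hl h0
  have hy : 0 ≤ (Finsupp.single y 1 : C.Divisor) p := by
    rw [Finsupp.single_apply]
    positivity
  rw [ord_ev_linForm, Pi.sub_apply, Finsupp.sub_apply]
  linarith

theorem le_ord_add_formOrd {D : C.Divisor} {f : C.FunctionField} (hf : f ≠ 0) {u : Fin 3 → ℂ}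
    (hu : u ≠ 0) (h : f * C.ev (linForm u) ∈ C.linSys (C.hyp - ⇑D)) (p : C.Point) :
    D p ≤ ord p f + formOrd p 1 (C.ev (linForm u)) := by
  have hl := ev_linForm_ne_zero (C := C) hu
  have hp := (mem_linSys.1 h p).resolve_left (mul_ne_zero hf hl)
  rw [ord_mul p hf hl, ord_ev_linForm, Pi.sub_apply] at hp
  linarith

theorem le_ord_of_rep_ne_smul {D : C.Divisor} {f : C.FunctionField} (hf : f ≠ 0) {v : Fin 3 → ℂ}
    (hv : v ≠ 0) (h : ∀ i j, f * C.ev (linForm (planeMinor v i j)) ∈ C.linSys (C.hyp - ⇑D))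
    {p : C.Point} (hp : ∀ c : ℂ, p.1.rep ≠ c • v) : D p ≤ ord p f := by
  obtain ⟨i, hi⟩ := Function.ne_iff.1 hv
  obtain ⟨j, hj⟩ : ∃ j, planeMinor v j i ⬝ᵥ p.1.rep ≠ 0 := by
    by_contra! hzero
    exact hp _ (eq_smul_of_forall_planeMinor_dotProduct hi hzero)
  have hu : planeMinor v j i ≠ 0 := fun h0 => hj (by rw [h0, zero_dotProduct])
  have hle := le_ord_add_formOrd hf hu (h j i) p
  rwa [(formOrd_eq_zero_iff p (isHomogeneous_linForm _) (ev_linForm_ne_zero hu)).2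
    (by rwa [eval_linForm]), add_zero] at hle

theorem le_ord_add_one {D : C.Divisor} {f : C.FunctionField} (hf : f ≠ 0) {v : Fin 3 → ℂ}
    (h : ∀ i j, f * C.ev (linForm (planeMinor v i j)) ∈ C.linSys (C.hyp - ⇑D))
    {p : C.Point} {c : ℂ} (hp : p.1.rep = c • v) : D p ≤ ord p f + 1 := by
  obtain ⟨j, hj⟩ := exists_isTransverse p
  rw [hp, planeMinor_smul] at hj
  have hle := le_ord_add_formOrd hf hj.of_smul.ne_zero (h _ _) p
  rwa [formOrd_linForm_eq_one hj.of_smul] at hle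

theorem exists_forall_le_ord_add_single {D : C.Divisor} {f : C.FunctionField} (hf : f ≠ 0)
    {v : Fin 3 → ℂ} (hv : v ≠ 0)
    (h : ∀ i j, f * C.ev (linForm (planeMinor v i j)) ∈ C.linSys (C.hyp - ⇑D)) :
    ∃ x : C.Point, ∀ p, D p ≤ ord p f + (Finsupp.single x 1 : C.Divisor) p := by
  classical
  by_cases hx : ∃ (x : C.Point) (c : ℂ), x.1.rep = c • v
  · obtain ⟨x, c, hxv⟩ := hx
    have hc : c ≠ 0 := fun hc => x.1.rep_nonzero (by rw [hxv, hc, zero_smul])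
    refine ⟨x, fun p => ?_⟩
    rw [Finsupp.single_apply]
    split_ifs with hp
    · exact le_ord_add_one hf h (hp ▸ hxv)
    · rw [add_zero]
      exact le_ord_of_rep_ne_smul hf hv h fun d hd => hp <|
        point_eq_of_smul (c := d / c) (by rw [hd, hxv, smul_smul, div_mul_cancel₀ _ hc])
  · push Not at hx
    obtain ⟨-, F, -, -, hF, -⟩ := exists_line_nodup (C := C)
    obtain ⟨x, -⟩ := Multiset.card_pos_iff_exists_mem.1 (by omega : 0 < F.card)
    refine ⟨x, fun p => (le_ord_of_rep_ne_smul hf hv h (hx p)).trans (le_add_of_nonneg_right ?_)⟩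
    rw [Finsupp.single_apply]
    positivity

theorem exists_picClass_eq_of_forall_le {D : C.Divisor} (hD : deg D = 0) {f : C.FunctionField}
    (hf : f ≠ 0) {x : C.Point} (h : ∀ p, D p ≤ ord p f + (Finsupp.single x 1 : C.Divisor) p) :
    ∃ y : C.Point, C.picClass D = C.picClass (Finsupp.single x 1 - Finsupp.single y 1) := by
  obtain ⟨Df, hDf, hdeg⟩ := exists_principal_divisor hf
  obtain ⟨E, hE⟩ := exists_eq_ofMultiset (D := Df + Finsupp.single x 1 - D) fun p => by
    rw [Finsupp.sub_apply, Finsupp.add_apply, hDf]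
    exact sub_nonneg.2 (h p)
  have hcard := congrArg deg hE
  rw [map_sub, map_add, deg_single, hD, hdeg, deg_ofMultiset, zero_add, sub_zero] at hcard
  obtain ⟨y, rfl⟩ := Multiset.card_eq_one.1 (by exact_mod_cast hcard.symm)
  refine ⟨y, picClass_eq_of_ord hf fun p => ?_⟩
  rw [← ofMultiset_singleton y, ← hE, ← hDf]
  simp only [Finsupp.sub_apply, Finsupp.add_apply]
  ring

theorem exists_picClass_eq_of_section {D : C.Divisor} (hD : deg D = 0) {δ : C.GenericTangent}
    (hδ : δ ≠ 0) (h : ∀ i j, wedge δ i j ∈ C.linSys (C.hyp - ⇑D)) :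
    ∃ x y : C.Point, C.picClass D = C.picClass (Finsupp.single x 1 - Finsupp.single y 1) := by
  let g := ![wedge δ 1 2, wedge δ 2 0, wedge δ 0 1]
  have hg (k : Fin 3) : g k ∈ C.linSys (C.hyp - ⇑D) := by fin_cases k <;> exact h _ _
  have hrel : ∑ k, g k * C.coordQuotient k = 0 := by
    simp only [g, Fin.sum_univ_three, Matrix.cons_val, wedge]
    ring
  obtain ⟨v, hsum, k, hk⟩ :=
    Fintype.not_linearIndependent_iff.1 (not_linearIndependent_of_mem_linSys hD hg hrel)
  simp only [g, Fin.sum_univ_three, Matrix.cons_val] at hsum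
  have hv : v ≠ 0 := Function.ne_iff.2 ⟨k, hk⟩
  obtain ⟨f, rfl⟩ := exists_eq_smul_constDerivation hv hsum
  have hf : f ≠ 0 := fun hf => hδ (by rw [hf, zero_smul])
  simp only [wedge_smul, wedge_constDerivation] at h
  obtain ⟨x, hx⟩ := exists_forall_le_ord_add_single hf hv h
  exact ⟨x, exists_picClass_eq_of_forall_le hD hf hx⟩

end Theta

end SmoothPlaneQuartic

end

theorem difference_divisor_is_theta_divisor (C : SmoothPlaneQuartic) :
    C.differenceDivisor = SmoothPlaneQuartic.thetaDivisor C.planeTangentTwist := by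
  open SmoothPlaneQuartic in
  ext N
  constructor
  · rintro ⟨x, y, rfl⟩
    refine ⟨⟨_, ?_, rfl⟩, (one_le_h0Twist_iff _).2
      ⟨C.constDerivation x.1.rep, constDerivation_ne_zero x.1.rep_nonzero,
        wedge_constDerivation_mem_linSys x y⟩⟩
    rw [← deg_apply, map_sub, deg_single, deg_single, sub_self]
  · rintro ⟨⟨D, hD, rfl⟩, h⟩
    obtain ⟨δ, hδ, hmem⟩ := (one_le_h0Twist_iff D).1 h
    exact exists_picClass_eq_of_section hD hδ hmem
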